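/- arXiv:1407.5256 — 2 statements merged into one kernel-verified Lean document; each statement's English description precedes it below -/
import Mathlib

section
/- Let i ≠ j in I and let β be a formal nonnegative combination of the α_l whose coefficient of α_i is at least 1. Then for every left R(β)-module M there are isomorphisms E_i F_j M ≅ F_j E_i M and E_i F̄_j M ≅ F̄_j E_i M of R(β+α_j−α_i)-modules, natural in M; on the left-hand sides F_j (resp. F̄_j) is applied over β followed by E_i over β+α_j−α_i, and on the right-hand sides E_i is applied over β−α_i followed by F_j (resp. F̄_j) over β−α_i. -/
/- ## Scaffold: Khovanov–Lauda–Rouquier algebras -/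

open scoped TensorProduct

/-- A symmetrizable Cartan datum together with the structure constants of the
family of polynomials `Q`. -/
structure CartanDatum (k : Type) [Field k] (I : Type) [Fintype I] [DecidableEq I] : Type where
  a : I → I → ℤ
  d : I → ℤ
  t : I → I → ℕ → ℕ → k
  a_diag : ∀ i, a i i = 2
  a_nonpos : ∀ i j, i ≠ j → a i j ≤ 0
  a_zero_iff : ∀ i j, a i j = 0 ↔ a j i = 0
  d_pos : ∀ i, 0 < d i
  symmetrize : ∀ i j, d i * a i j = d j * a j i
  t_symm : ∀ i j p q, t i j p q = t j i q p
  t_lead : ∀ i j, i ≠ j → t i j (-(a i j)).toNat 0 ≠ 0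

namespace KLR

variable {k : Type} [Field k] {I : Type} [Fintype I] [DecidableEq I]

/-- The symmetric bilinear form `(α_i, α_j) = d_i a_{ij}`. -/
def B (C : CartanDatum k I) (i j : I) : ℤ := C.d i * C.a i j

/-- Generators of the KLR algebra `R(n)`. -/
inductive Gen (I : Type) (n : ℕ) : Type
  | e (ν : Fin n → I) : Gen I n
  | x (a : Fin n) : Gen I n
  | tau (l : ℕ) (h : l + 1 < n) : Gen I n

variable (k) in
/-- The free algebra on the generators. -/
abbrev FA (I : Type) (n : ℕ) : Type := FreeAlgebra k (Gen I n)

variable (k) in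
def ge {n : ℕ} (ν : Fin n → I) : FA k I n := FreeAlgebra.ι k (Gen.e ν)

variable (k) in
def gx {n : ℕ} (a : Fin n) : FA k I n := FreeAlgebra.ι k (Gen.x a)

variable (k) in
def gt {n : ℕ} (l : ℕ) (h : l + 1 < n) : FA k I n := FreeAlgebra.ι k (Gen.tau l h)

/-- The polynomial `Q_{ij}(u,v)` evaluated on two elements of an algebra. -/
def Qel (C : CartanDatum k I) {A : Type} [Ring A] [Algebra k A] (i j : I) (u v : A) : A :=
  if i = j then 0 else
    ∑ p ∈ Finset.range ((-(C.a i j)).toNat + 1), ∑ q ∈ Finset.range ((-(C.a j i)).toNat + 1),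
      if C.d i * (p : ℤ) + C.d j * (q : ℤ) = -(C.d i * C.a i j) then
        C.t i j p q • (u ^ p * v ^ q) else 0

/-- The divided difference `(Q_{ij}(u,v) - Q_{ij}(w,v))/(u - w)` evaluated on elements. -/
def Qdiff (C : CartanDatum k I) {A : Type} [Ring A] [Algebra k A] (i j : I) (u v w : A) : A :=
  if i = j then 0 else
    ∑ p ∈ Finset.range ((-(C.a i j)).toNat + 1), ∑ q ∈ Finset.range ((-(C.a j i)).toNat + 1),
      if C.d i * (p : ℤ) + C.d j * (q : ℤ) = -(C.d i * C.a i j) then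
        C.t i j p q • ((∑ c ∈ Finset.range p, u ^ c * w ^ (p - 1 - c)) * v ^ q) else 0

/-- The defining relations of the KLR algebra `R(n)`. -/
inductive Rel (C : CartanDatum k I) (n : ℕ) : FA k I n → FA k I n → Prop
  | ee : ∀ ν ν' : Fin n → I, Rel C n (ge k ν * ge k ν') (if ν = ν' then ge k ν else 0)
  | esum : Rel C n (∑ ν : Fin n → I, ge k ν) 1
  | xx : ∀ a b : Fin n, Rel C n (gx k a * gx k b) (gx k b * gx k a)
  | xe : ∀ (a : Fin n) (ν : Fin n → I), Rel C n (gx k a * ge k ν) (ge k ν * gx k a)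
  | taue : ∀ (l : ℕ) (h : l + 1 < n) (ν : Fin n → I),
      Rel C n (gt k l h * ge k ν)
        (ge k (ν ∘ Equiv.swap (⟨l, Nat.lt_of_succ_lt h⟩ : Fin n) ⟨l + 1, h⟩) * gt k l h)
  | tautau : ∀ (l : ℕ) (h : l + 1 < n) (l' : ℕ) (h' : l' + 1 < n),
      (l + 1 < l' ∨ l' + 1 < l) →
      Rel C n (gt k l h * gt k l' h') (gt k l' h' * gt k l h)
  | tausq : ∀ (l : ℕ) (h : l + 1 < n) (ν : Fin n → I),
      Rel C n (gt k l h ^ 2 * ge k ν)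
        (Qel C (ν ⟨l, Nat.lt_of_succ_lt h⟩) (ν ⟨l + 1, h⟩)
          (gx k ⟨l, Nat.lt_of_succ_lt h⟩) (gx k ⟨l + 1, h⟩) * ge k ν)
  | taux : ∀ (l : ℕ) (h : l + 1 < n) (m : Fin n) (ν : Fin n → I),
      Rel C n ((gt k l h * gx k m
          - gx k (Equiv.swap (⟨l, Nat.lt_of_succ_lt h⟩ : Fin n) ⟨l + 1, h⟩ m) * gt k l h) * ge k ν)
        (if m = ⟨l, Nat.lt_of_succ_lt h⟩ ∧ ν ⟨l, Nat.lt_of_succ_lt h⟩ = ν ⟨l + 1, h⟩ then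
            -(ge k ν)
          else if m = (⟨l + 1, h⟩ : Fin n) ∧ ν ⟨l, Nat.lt_of_succ_lt h⟩ = ν ⟨l + 1, h⟩ then
            ge k ν
          else 0)
  | braid : ∀ (l : ℕ) (h2 : l + 2 < n) (ν : Fin n → I),
      Rel C n ((gt k (l + 1) h2 * gt k l (Nat.lt_of_succ_lt h2) * gt k (l + 1) h2
          - gt k l (Nat.lt_of_succ_lt h2) * gt k (l + 1) h2 * gt k l (Nat.lt_of_succ_lt h2))
          * ge k ν)
        (if ν ⟨l, Nat.lt_of_succ_lt (Nat.lt_of_succ_lt h2)⟩ = ν ⟨l + 2, h2⟩ then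
            Qdiff C (ν ⟨l, Nat.lt_of_succ_lt (Nat.lt_of_succ_lt h2)⟩)
              (ν ⟨l + 1, Nat.lt_of_succ_lt h2⟩)
              (gx k ⟨l, Nat.lt_of_succ_lt (Nat.lt_of_succ_lt h2)⟩)
              (gx k ⟨l + 1, Nat.lt_of_succ_lt h2⟩)
              (gx k ⟨l + 2, h2⟩) * ge k ν
          else 0)

/-- The Khovanov–Lauda–Rouquier algebra `R(n)`. -/
abbrev Alg (C : CartanDatum k I) (n : ℕ) : Type := RingQuot (Rel C n)

variable (C : CartanDatum k I)

/-- The generator `e(ν)` of `R(n)`. -/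
noncomputable def Ee {n : ℕ} (ν : Fin n → I) : Alg C n :=
  RingQuot.mkAlgHom k (Rel C n) (ge k ν)

/-- The generator `x_a` of `R(n)`. -/
noncomputable def Xx {n : ℕ} (a : Fin n) : Alg C n :=
  RingQuot.mkAlgHom k (Rel C n) (gx k a)

/-- The generator `τ_l` of `R(n)`. -/
noncomputable def Tt {n : ℕ} (l : ℕ) (h : l + 1 < n) : Alg C n :=
  RingQuot.mkAlgHom k (Rel C n) (gt k l h)

variable (I) in
/-- The height of `β = Σ k_i α_i`. -/
def ht (β : I → ℕ) : ℕ := ∑ i, β i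

/-- The content of a sequence `ν`. -/
def content {m : ℕ} (ν : Fin m → I) : I → ℕ :=
  fun i => (Finset.univ.filter (fun a => ν a = i)).card

/-- The set `I^β` of sequences of length `m` with content `β`. -/
def seqs (β : I → ℕ) (m : ℕ) : Finset (Fin m → I) :=
  Finset.univ.filter (fun ν => content ν = β)

/-- The central idempotent `e(β)` in `R(n)`. -/
noncomputable def eIdem (n : ℕ) (β : I → ℕ) : Alg C n := ∑ ν ∈ seqs β n, Ee C ν

/-- `β + α_i`. -/
def addA (β : I → ℕ) (i : I) : I → ℕ := fun j => β j + if j = i then 1 else 0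

/-- The idempotent `e(β, α_i)` of `R(n+1)` (sum over `ν ∈ I^{β+α_i}` with `ν_{n+1} = i`). -/
noncomputable def eR (n : ℕ) (β : I → ℕ) (i : I) : Alg C (n + 1) :=
  ∑ ν ∈ (seqs (addA β i) (n + 1)).filter (fun ν => ν (Fin.last n) = i), Ee C ν

/-- The idempotent `e(α_i, β)` of `R(n+1)` (sum over `ν ∈ I^{β+α_i}` with `ν_1 = i`). -/
noncomputable def eL (n : ℕ) (β : I → ℕ) (i : I) : Alg C (n + 1) :=
  ∑ ν ∈ (seqs (addA β i) (n + 1)).filter (fun ν => ν 0 = i), Ee C ν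

/-- The idempotent `e(β - α_i, α_i)` of `R(n)`: sum over `ν ∈ I^β` with last entry `i`;
this is `0` when the coefficient of `α_i` in `β` is `0` or `n = 0`. -/
noncomputable def eD (n : ℕ) (β : I → ℕ) (i : I) : Alg C n :=
  ∑ ν ∈ (seqs β n).filter (fun ν => if h : 0 < n then ν ⟨n - 1, Nat.sub_lt h one_pos⟩ = i
      else False), Ee C ν

/-- The relations defining `R(β) = R(n)e(β)` (a unital ring with unit the image of
`e(β)`): the KLR relations together with the relation `e(β) = 1`. -/
inductive URel (n : ℕ) (β : I → ℕ) : FA k I n → FA k I n → Prop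
  | base : ∀ {x y : FA k I n}, Rel C n x y → URel n β x y
  | unit : URel n β (∑ ν ∈ seqs β n, ge k ν) 1

/-- The algebra `R(β)`, realized as the quotient of `R(n)` identifying `e(β)` with `1`. -/
abbrev bAlg (n : ℕ) (β : I → ℕ) : Type := RingQuot (URel C n β)

/-- The canonical projection `R(n) → R(β)`. -/
noncomputable def toB {n : ℕ} {β : I → ℕ} : Alg C n →ₐ[k] bAlg C n β :=
  RingQuot.liftAlgHom (S := k)
    ⟨RingQuot.mkAlgHom k (URel C n β),
      fun _ _ h => RingQuot.mkAlgHom_rel k (URel.base h)⟩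

/-- The element `a^Λ(x_1)` at the level of the free algebra. -/
noncomputable def aLamF (Λ : I → ℕ) (n : ℕ) (β : I → ℕ) : FA k I n :=
  if h : 0 < n then
    ∑ ν ∈ seqs β n, (gx k (⟨0, h⟩ : Fin n)) ^ (Λ (ν ⟨0, h⟩)) * ge k ν
  else 0

/-- The element `a^Λ(x_1)` of `R(β)`. -/
noncomputable def aLam (Λ : I → ℕ) (n : ℕ) (β : I → ℕ) : bAlg C n β :=
  RingQuot.mkAlgHom k (URel C n β) (aLamF Λ n β)

/-- The relations defining the cyclotomic quotient `R^Λ(β)`. -/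
inductive CRel (Λ : I → ℕ) (n : ℕ) (β : I → ℕ) : FA k I n → FA k I n → Prop
  | base : ∀ {x y : FA k I n}, Rel C n x y → CRel Λ n β x y
  | unit : CRel Λ n β (∑ ν ∈ seqs β n, ge k ν) 1
  | cyc : CRel Λ n β (aLamF Λ n β) 0

/-- The cyclotomic KLR algebra `R^Λ(β)`. -/
abbrev cAlg (Λ : I → ℕ) (n : ℕ) (β : I → ℕ) : Type := RingQuot (CRel C Λ n β)

/-- The canonical projection `R(β) → R^Λ(β)`. -/
noncomputable def toC {Λ : I → ℕ} {n : ℕ} {β : I → ℕ} : bAlg C n β →ₐ[k] cAlg C Λ n β :=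
  RingQuot.liftAlgHom (S := k)
    ⟨RingQuot.mkAlgHom k (CRel C Λ n β),
      fun _ _ h => by
        cases h with
        | base hb => exact RingQuot.mkAlgHom_rel k (CRel.base hb)
        | unit => exact RingQuot.mkAlgHom_rel k CRel.unit⟩

/-- The canonical projection `R(n) → R^Λ(β)`. -/
noncomputable def toCB (Λ : I → ℕ) {n : ℕ} {β : I → ℕ} : Alg C n →ₐ[k] cAlg C Λ n β :=
  (toC C).comp (toB C)

end KLR
namespace KLR

variable {k : Type} [Field k] {I : Type} [Fintype I] [DecidableEq I] (C : CartanDatum k I)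

section Homs

/-- Characterization of the non-unital algebra homomorphism `R(n) → R(n+1)` adding `i`
on the right: `e(ν) ↦ e(ν∗(i))`, `x_a ↦ x_a e(…,α_i)`, `τ_l ↦ τ_l e(…,α_i)`,
where the relevant idempotent is supplied as `e`. -/
def IsUpR {n : ℕ} (i : I) (e : Alg C (n + 1)) (φ : Alg C n →ₙₐ[k] Alg C (n + 1)) : Prop :=
  (∀ ν : Fin n → I, φ (Ee C ν) = Ee C (Fin.snoc ν i)) ∧
  (∀ a : Fin n, φ (Xx C a) = Xx C a.castSucc * e) ∧
  (∀ (l : ℕ) (h : l + 1 < n), φ (Tt C l h) = Tt C l (Nat.lt_succ_of_lt h) * e)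

/-- Characterization of the non-unital algebra homomorphism `R(n) → R(n+1)` adding `i`
on the left: `e(ν) ↦ e((i)∗ν)`, `x_a ↦ x_{a+1} e(α_i,…)`, `τ_l ↦ τ_{l+1} e(α_i,…)`. -/
def IsUpL {n : ℕ} (i : I) (e : Alg C (n + 1)) (φ : Alg C n →ₙₐ[k] Alg C (n + 1)) : Prop :=
  (∀ ν : Fin n → I, φ (Ee C ν) = Ee C (Fin.cons i ν)) ∧
  (∀ a : Fin n, φ (Xx C a) = Xx C a.succ * e) ∧
  (∀ (l : ℕ) (h : l + 1 < n), φ (Tt C l h) = Tt C (l + 1) (Nat.succ_lt_succ h) * e)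

/-- Characterization of the non-unital homomorphism `R(β) → R(β+α_i)` (right version). -/
def IsUpRb {n : ℕ} {β γ' : I → ℕ} (i : I)
    (φ : bAlg C n β →ₙₐ[k] bAlg C (n + 1) γ') : Prop :=
  (∀ ν : Fin n → I, φ (toB C (Ee C ν)) = toB C (Ee C (Fin.snoc ν i))) ∧
  (∀ a : Fin n, φ (toB C (Xx C a)) = toB C (Xx C a.castSucc * eR C n β i)) ∧
  (∀ (l : ℕ) (h : l + 1 < n),
    φ (toB C (Tt C l h)) = toB C (Tt C l (Nat.lt_succ_of_lt h) * eR C n β i))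

/-- Characterization of the non-unital homomorphism `R(β) → R(β+α_i)` (left version). -/
def IsUpLb {n : ℕ} {β γ' : I → ℕ} (i : I)
    (φ : bAlg C n β →ₙₐ[k] bAlg C (n + 1) γ') : Prop :=
  (∀ ν : Fin n → I, φ (toB C (Ee C ν)) = toB C (Ee C (Fin.cons i ν))) ∧
  (∀ a : Fin n, φ (toB C (Xx C a)) = toB C (Xx C a.succ * eL C n β i)) ∧
  (∀ (l : ℕ) (h : l + 1 < n),
    φ (toB C (Tt C l h)) = toB C (Tt C (l + 1) (Nat.succ_lt_succ h) * eL C n β i))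

/-- Characterization of the non-unital homomorphism `R^Λ(β) → R^Λ(β+α_i)` (right version). -/
def IsUpRc (Λ : I → ℕ) {n : ℕ} {β γ' : I → ℕ} (i : I)
    (φ : cAlg C Λ n β →ₙₐ[k] cAlg C Λ (n + 1) γ') : Prop :=
  (∀ ν : Fin n → I, φ (toCB C Λ (Ee C ν)) = toCB C Λ (Ee C (Fin.snoc ν i))) ∧
  (∀ a : Fin n, φ (toCB C Λ (Xx C a)) = toCB C Λ (Xx C a.castSucc * eR C n β i)) ∧
  (∀ (l : ℕ) (h : l + 1 < n),
    φ (toCB C Λ (Tt C l h)) = toCB C Λ (Tt C l (Nat.lt_succ_of_lt h) * eR C n β i))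

end Homs

section Tensor

open scoped TensorProduct

variable (S B M : Type) [Ring S] [Algebra k S] [Ring B] [Algebra k B]
  [AddCommGroup M] [Module k M] [Module S M] [IsScalarTower k S M]

variable (k) in
/-- The relation submodule defining the balanced tensor product `B ⊗_S M` where `S`
acts on `B` on the right through the (non-unital) homomorphism `φ : S → B`. -/
def TRel (φ : S →ₙₐ[k] B) : Submodule B (B ⊗[k] M) :=
  Submodule.span B {z | ∃ (b : B) (r : S) (m : M), z = (b * φ r) ⊗ₜ[k] m - b ⊗ₜ[k] (r • m)}

variable (k) in
/-- The balanced tensor product `B ⊗_S M` (over the homomorphism `φ : S → B`). -/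
abbrev OT (φ : S →ₙₐ[k] B) : Type := (B ⊗[k] M) ⧸ TRel k S B M φ

variable (k) in
/-- The canonical projection onto the balanced tensor product. -/
def OTmk (φ : S →ₙₐ[k] B) (z : B ⊗[k] M) : OT k S B M φ := Submodule.Quotient.mk z

end Tensor

section ESub

variable (A : Type) [Ring A] [Algebra k A] (N : Type) [AddCommGroup N] [Module k N]
  [Module A N] [IsScalarTower k A N]

variable (k) in
/-- Multiplication by `e` as a `k`-linear endomorphism of an `A`-module. -/
def eMap (e : A) : N →ₗ[k] N where
  toFun x := e • x
  map_add' x y := smul_add e x y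
  map_smul' c x := by
    simp only [RingHom.id_apply]
    rw [← algebraMap_smul A c x, ← mul_smul, ← Algebra.commutes, mul_smul, algebraMap_smul]

variable (k) in
/-- The `k`-submodule `eN` of an `A`-module `N`. -/
def eSub (e : A) : Submodule k N := LinearMap.range (eMap k A N e)

end ESub

section Grading

variable {A M : Type}

variable (k) in
/-- `𝒜` is an algebra grading of `A`. -/
def IsAlgGrading [Ring A] [Algebra k A] (𝒜 : ℤ → Submodule k A) : Prop :=
  (1 : A) ∈ 𝒜 0 ∧ (∀ {c₁ c₂ : ℤ} {a b : A}, a ∈ 𝒜 c₁ → b ∈ 𝒜 c₂ → a * b ∈ 𝒜 (c₁ + c₂)) ∧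
    DirectSum.IsInternal 𝒜

variable (k) in
/-- `gr` is a grading of the `A`-module `M` compatible with the algebra grading `𝒜`. -/
def IsModGrading [Ring A] [Algebra k A] [AddCommGroup M] [Module k M] [Module A M]
    (𝒜 : ℤ → Submodule k A) (gr : ℤ → Submodule k M) : Prop :=
  DirectSum.IsInternal gr ∧
    ∀ {c m : ℤ} {a : A} {x : M}, a ∈ 𝒜 c → x ∈ gr m → a • x ∈ gr (c + m)

end Grading

section KLRGrading

/-- The canonical grading property for `R(n)`-type quotients: images of `e(ν)` have degree 0,
`x_a e(ν)` has degree `(α_{ν_a}, α_{ν_a})`, and `τ_l e(ν)` has degree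
`-(α_{ν_l}, α_{ν_{l+1}})`.  Here `p : R(n) → A` is the canonical projection onto the
quotient under consideration. -/
def IsKLRGrading {n : ℕ} {A : Type} [Ring A] [Algebra k A] (p : Alg C n →ₐ[k] A)
    (𝒜 : ℤ → Submodule k A) : Prop :=
  IsAlgGrading k 𝒜 ∧
  (∀ ν : Fin n → I, p (Ee C ν) ∈ 𝒜 0) ∧
  (∀ (a : Fin n) (ν : Fin n → I), p (Xx C a * Ee C ν) ∈ 𝒜 (B C (ν a) (ν a))) ∧
  (∀ (l : ℕ) (h : l + 1 < n) (ν : Fin n → I),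
    p (Tt C l h * Ee C ν) ∈ 𝒜 (-(B C (ν ⟨l, Nat.lt_of_succ_lt h⟩) (ν ⟨l + 1, h⟩))))

end KLRGrading

end KLR
namespace KLR

open scoped TensorProduct

variable {k : Type} [Field k] {I : Type} [Fintype I] [DecidableEq I] (C : CartanDatum k I)

section IndGrading

variable (S B M : Type) [Ring S] [Algebra k S] [Ring B] [Algebra k B]
  [AddCommGroup M] [Module k M] [Module S M] [IsScalarTower k S M]

variable (k) in
/-- The induced grading on the balanced tensor product `B ⊗_S M`. -/
def otGr (φ : S →ₙₐ[k] B) (𝒜 : ℤ → Submodule k B) (gr : ℤ → Submodule k M)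
    (c : ℤ) : Submodule k (OT k S B M φ) :=
  Submodule.span k {z | ∃ (c₁ c₂ : ℤ) (b : B) (m : M),
    c₁ + c₂ = c ∧ b ∈ 𝒜 c₁ ∧ m ∈ gr c₂ ∧ z = OTmk k S B M φ (b ⊗ₜ[k] m)}

end IndGrading

section ESubGrading

variable (A N : Type) [Ring A] [Algebra k A] [AddCommGroup N] [Module k N]
  [Module A N] [IsScalarTower k A N]

variable (k) in
/-- The induced grading on the submodule `eN ⊆ N`. -/
def eSubGr (e : A) (gr : ℤ → Submodule k N) (c : ℤ) : Submodule k ↥(eSub k A N e) :=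
  (gr c).comap (eSub k A N e).subtype

end ESubGrading

section Instances

variable (n : ℕ) (β : I → ℕ) (Λ : I → ℕ)

noncomputable instance : Module (bAlg C n β) (cAlg C Λ n β) :=
  Module.compHom _ (toC C (Λ := Λ) (n := n) (β := β)).toRingHom

instance : IsScalarTower k (bAlg C n β) (cAlg C Λ n β) := by
  constructor
  intro c s m
  show (toC C (c • s)) * m = c • (toC C s * m)
  rw [map_smul, Algebra.smul_mul_assoc]

end Instances


end KLR
namespace KLR

open scoped TensorProduct

variable {k : Type} [Field k] {I : Type} [Fintype I] [DecidableEq I] (C : CartanDatum k I)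

/-- `⟨h_i, β⟩ = Σ_j k_j a_{ij}`. -/
def pairH (i : I) (β : I → ℕ) : ℤ := ∑ j, (β j : ℤ) * C.a i j

/-- `(α_i, β) = Σ_j k_j (α_i, α_j)`. -/
def pairB (i : I) (β : I → ℕ) : ℤ := ∑ j, (β j : ℤ) * B C i j

/-- The ordered product `τ_1 τ_2 ⋯ τ_n` in `R(β+α_i)`-type quotients. -/
noncomputable def tauProd (n : ℕ) (γ : I → ℕ) : bAlg C (n + 1) γ :=
  (List.ofFn (fun l : Fin n => toB C (Tt C l.val (Nat.succ_lt_succ l.isLt)))).prod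

/-- The right ideal `Ae` as a `k`-submodule. -/
noncomputable def rId {A : Type} [Ring A] [Algebra k A] (e : A) : Submodule k A :=
  LinearMap.range (LinearMap.mulRight k e)

/-- The left ideal `eA` as a `k`-submodule. -/
noncomputable def lId {A : Type} [Ring A] [Algebra k A] (e : A) : Submodule k A :=
  LinearMap.range (LinearMap.mulLeft k e)

variable (k) in
/-- Characterization of the module structure on `eN` over `S'` acting through
the (non-unital) homomorphism `φ : S' → A`. -/
def IsEAction {A N S' : Type} [Ring A] [Algebra k A] [AddCommGroup N] [Module k N]
    [Module A N] [IsScalarTower k A N] [Ring S'] [Algebra k S']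
    (e : A) (φ : S' →ₙₐ[k] A) (inst : Module S' ↥(eSub k A N e)) : Prop :=
  letI := inst
  ∀ (r : S') (x : ↥(eSub k A N e)), ((r • x : ↥(eSub k A N e)) : N) = φ r • (x : N)

end KLR

namespace KLR

variable {k : Type} [Field k] {I : Type} [Fintype I] [DecidableEq I] (C : CartanDatum k I)

/-- The image of `e(β,α_i)` in `R(β+α_i)`. -/
noncomputable def eRb (n : ℕ) (β : I → ℕ) (i : I) : bAlg C (n + 1) (addA β i) :=
  toB C (eR C n β i)

/-- The image of `e(α_i,β)` in `R(β+α_i)`. -/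
noncomputable def eLb (n : ℕ) (β : I → ℕ) (i : I) : bAlg C (n + 1) (addA β i) :=
  toB C (eL C n β i)

/-- The image of `e(β-α_i,α_i)` in `R(β)`. -/
noncomputable def eDb (n : ℕ) (β : I → ℕ) (i : I) : bAlg C n β :=
  toB C (eD C n β i)

/-- The image of `e(β,α_i)` in `R^Λ(β+α_i)`. -/
noncomputable def eRc (Λ : I → ℕ) (n : ℕ) (β : I → ℕ) (i : I) :
    cAlg C Λ (n + 1) (addA β i) :=
  toCB C Λ (eR C n β i)

/-- The image of `e(β-α_i,α_i)` in `R^Λ(β)`. -/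
noncomputable def eDc (Λ : I → ℕ) (n : ℕ) (β : I → ℕ) (i : I) : cAlg C Λ n β :=
  toCB C Λ (eD C n β i)

end KLR

namespace KLR

variable {k : Type} [Field k] {I : Type} [Fintype I] [DecidableEq I]

variable (k) in
/-- Bundled data of the canonical module structure on `eN` over `S'`, acting through
the non-unital homomorphism `φ : S' → A`, together with its scalar-tower property. -/
structure EData {A S' : Type} (N : Type) [Ring A] [Algebra k A] [AddCommGroup N]
    [Module k N] [Module A N] [IsScalarTower k A N] [Ring S'] [Algebra k S']
    (e : A) (φ : S' →ₙₐ[k] A) : Type where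
  inst : Module S' ↥(eSub k A N e)
  compat : IsEAction k e φ inst
  tower : letI := inst; IsScalarTower k S' ↥(eSub k A N e)

end KLR

namespace KLR
/-- `β - α_i` (truncated subtraction). -/
def subA {I : Type} [DecidableEq I] (β : I → ℕ) (i : I) : I → ℕ :=
  fun j => β j - if j = i then 1 else 0
end KLR



namespace KLR
variable {k : Type} [Field k] {I : Type} [Fintype I] [DecidableEq I] (C : CartanDatum k I)

/-- A family of elements of an algebra satisfying the KLR relations. -/
structure IsRep {n : ℕ} {A : Type} [Ring A] [Algebra k A] (ε : (Fin n → I) → A) (ξ : Fin n → A)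
    (θ : ∀ l : ℕ, l + 1 < n → A) : Prop where
  ee : ∀ ν ν' : Fin n → I, ε ν * ε ν' = if ν = ν' then ε ν else 0
  esum : ∑ ν : Fin n → I, ε ν = 1
  xx : ∀ a b : Fin n, ξ a * ξ b = ξ b * ξ a
  xe : ∀ (a : Fin n) (ν : Fin n → I), ξ a * ε ν = ε ν * ξ a
  taue : ∀ (l : ℕ) (h : l + 1 < n) (ν : Fin n → I),
      θ l h * ε ν =
        ε (ν ∘ Equiv.swap (⟨l, Nat.lt_of_succ_lt h⟩ : Fin n) ⟨l + 1, h⟩) * θ l h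
  tautau : ∀ (l : ℕ) (h : l + 1 < n) (l' : ℕ) (h' : l' + 1 < n),
      (l + 1 < l' ∨ l' + 1 < l) → θ l h * θ l' h' = θ l' h' * θ l h
  tausq : ∀ (l : ℕ) (h : l + 1 < n) (ν : Fin n → I),
      θ l h ^ 2 * ε ν =
        Qel C (ν ⟨l, Nat.lt_of_succ_lt h⟩) (ν ⟨l + 1, h⟩)
          (ξ ⟨l, Nat.lt_of_succ_lt h⟩) (ξ ⟨l + 1, h⟩) * ε ν
  taux : ∀ (l : ℕ) (h : l + 1 < n) (m : Fin n) (ν : Fin n → I),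
      (θ l h * ξ m
          - ξ (Equiv.swap (⟨l, Nat.lt_of_succ_lt h⟩ : Fin n) ⟨l + 1, h⟩ m) * θ l h) * ε ν =
        (if m = ⟨l, Nat.lt_of_succ_lt h⟩ ∧ ν ⟨l, Nat.lt_of_succ_lt h⟩ = ν ⟨l + 1, h⟩ then
            -(ε ν)
          else if m = (⟨l + 1, h⟩ : Fin n) ∧ ν ⟨l, Nat.lt_of_succ_lt h⟩ = ν ⟨l + 1, h⟩ then
            ε ν
          else 0)
  braid : ∀ (l : ℕ) (h2 : l + 2 < n) (ν : Fin n → I),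
      (θ (l + 1) h2 * θ l (Nat.lt_of_succ_lt h2) * θ (l + 1) h2
          - θ l (Nat.lt_of_succ_lt h2) * θ (l + 1) h2 * θ l (Nat.lt_of_succ_lt h2))
          * ε ν =
        (if ν ⟨l, Nat.lt_of_succ_lt (Nat.lt_of_succ_lt h2)⟩ = ν ⟨l + 2, h2⟩ then
            Qdiff C (ν ⟨l, Nat.lt_of_succ_lt (Nat.lt_of_succ_lt h2)⟩)
              (ν ⟨l + 1, Nat.lt_of_succ_lt h2⟩)
              (ξ ⟨l, Nat.lt_of_succ_lt (Nat.lt_of_succ_lt h2)⟩)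
              (ξ ⟨l + 1, Nat.lt_of_succ_lt h2⟩)
              (ξ ⟨l + 2, h2⟩) * ε ν
          else 0)

section
variable {A A' : Type} [Ring A] [Algebra k A] [Ring A'] [Algebra k A']

theorem map_Qel (f : A →ₐ[k] A') (i j : I) (u v : A) :
    f (Qel C i j u v) = Qel C i j (f u) (f v) := by
  unfold Qel
  split_ifs
  · simp
  · simp only [map_sum]
    refine Finset.sum_congr rfl fun p _ => Finset.sum_congr rfl fun q _ => ?_
    split_ifs <;> simp

theorem map_Qdiff (f : A →ₐ[k] A') (i j : I) (u v w : A) :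
    f (Qdiff C i j u v w) = Qdiff C i j (f u) (f v) (f w) := by
  unfold Qdiff
  split_ifs
  · simp
  · simp only [map_sum]
    refine Finset.sum_congr rfl fun p _ => Finset.sum_congr rfl fun q _ => ?_
    split_ifs <;> simp

end

theorem isRep_alg (n : ℕ) : IsRep C (Ee C (n := n)) (Xx C) (Tt C) := by
  have key : ∀ {a b : FA k I n}, Rel C n a b →
      RingQuot.mkAlgHom k (Rel C n) a = RingQuot.mkAlgHom k (Rel C n) b :=
    fun h => RingQuot.mkAlgHom_rel k h
  constructor
  · intro ν ν'
    have := key (Rel.ee ν ν')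
    rw [map_mul] at this
    refine this.trans ?_
    split_ifs <;> simp [Ee]
  · have := key (Rel.esum)
    simpa [Ee] using this
  · intro a b
    simpa [Ee, Xx, Tt] using key (Rel.xx a b)
  · intro a b
    simpa [Ee, Xx, Tt] using key (Rel.xe a b)
  · intro l h ν
    simpa [Ee, Xx, Tt] using key (Rel.taue l h ν)
  · intro l h l' h' hh
    simpa [Ee, Xx, Tt] using key (Rel.tautau l h l' h' hh)
  · intro l h ν
    have := key (Rel.tausq l h ν)
    simp only [map_mul, map_pow, map_Qel] at this
    exact this
  · intro l h m ν
    have := key (Rel.taux l h m ν)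
    simp only [map_mul, map_sub] at this
    refine this.trans ?_
    split_ifs <;> simp [Ee]
  · intro l h ν
    have := key (Rel.braid l h ν)
    simp only [map_mul, map_sub] at this
    refine this.trans ?_
    split_ifs <;> simp [Ee, map_Qdiff, Xx]

/-- The value of a family on generators. -/
def genFun {n : ℕ} {A : Type} (ε : (Fin n → I) → A) (ξ : Fin n → A)
    (θ : ∀ l : ℕ, l + 1 < n → A) : Gen I n → A
  | Gen.e ν => ε ν
  | Gen.x a => ξ a
  | Gen.tau l h => θ l h

section lift
variable {C}
variable {n : ℕ} {A : Type} [Ring A] [Algebra k A] {ε : (Fin n → I) → A} {ξ : Fin n → A}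
    {θ : ∀ l : ℕ, l + 1 < n → A}

/-- Universal property of the KLR algebra. -/
noncomputable def liftA (H : IsRep C ε ξ θ) : Alg C n →ₐ[k] A :=
  RingQuot.liftAlgHom (S := k) ⟨FreeAlgebra.lift k (genFun ε ξ θ), by
    intro x y h
    have h1 : ∀ ν, FreeAlgebra.lift k (genFun ε ξ θ) (ge k ν) = ε ν := by
      intro ν; simp [ge, genFun]
    have h2 : ∀ a, FreeAlgebra.lift k (genFun ε ξ θ) (gx k a) = ξ a := by
      intro ν; simp [gx, genFun]
    have h3 : ∀ l h, FreeAlgebra.lift k (genFun ε ξ θ) (gt k l h) = θ l h := by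
      intro l h; simp [gt, genFun]
    cases h with
    | ee ν ν' => 
      rw [map_mul, h1, h1, H.ee]; split_ifs <;> simp [h1]
    | esum => simp only [map_sum, h1, H.esum, map_one]
    | xx a b => simp only [map_mul, h2, H.xx a b]
    | xe a b => simp only [map_mul, h2, h1, H.xe a b]
    | taue l h ν => simp only [map_mul, h3, h1, H.taue l h]
    | tautau l h l' h' hh => simp only [map_mul, h3, H.tautau l h l' h' hh]
    | tausq l h ν => simp only [map_mul, map_pow, map_Qel, h3, h1, h2, H.tausq l h]
    | taux l h m ν =>
      simp only [map_mul, map_sub, h3, h1, h2, H.taux l h]; split_ifs <;> simp [h1]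
    | braid l h ν =>
      simp only [map_mul, map_sub, h3, h1, H.braid l h]
      split_ifs <;> simp [h1, map_Qdiff, h2]⟩

@[simp] theorem liftA_e (H : IsRep C ε ξ θ) (ν) : liftA H (Ee C ν) = ε ν := by
  simp [liftA, Ee, ge, genFun]
@[simp] theorem liftA_x (H : IsRep C ε ξ θ) (a) : liftA H (Xx C a) = ξ a := by
  simp [liftA, Xx, gx, genFun]
@[simp] theorem liftA_t (H : IsRep C ε ξ θ) (l h) : liftA H (Tt C l h) = θ l h := by
  simp [liftA, Tt, gt, genFun]

end lift

@[elab_as_elim]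
theorem alg_induction {n : ℕ} {p : Alg C n → Prop} (r : Alg C n)
    (hc : ∀ c : k, p (algebraMap k _ c)) (he : ∀ ν, p (Ee C ν)) (hx : ∀ a, p (Xx C a))
    (ht : ∀ l h, p (Tt C l h)) (hm : ∀ a b, p a → p b → p (a * b))
    (ha : ∀ a b, p a → p b → p (a + b)) : p r := by
  obtain ⟨a, rfl⟩ := RingQuot.mkAlgHom_surjective k (Rel C n) r
  induction a using FreeAlgebra.induction with
  | grade0 c => simpa using hc c
  | grade1 g =>
    cases g with
    | e ν => exact he ν
    | x a => exact hx a
    | tau l h => exact ht l h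
  | mul a b iha ihb => simpa using hm _ _ iha ihb
  | add a b iha ihb => simpa using ha _ _ iha ihb

theorem algHom_ext {n : ℕ} {A : Type} [Ring A] [Algebra k A] {f g : Alg C n →ₐ[k] A}
    (he : ∀ ν, f (Ee C ν) = g (Ee C ν)) (hx : ∀ a, f (Xx C a) = g (Xx C a))
    (ht : ∀ l h, f (Tt C l h) = g (Tt C l h)) : f = g := by
  ext r
  cases r with
  | e ν => exact he ν
  | x a => exact hx a
  | tau l h => exact ht l h

end KLR


set_option linter.unusedSectionVars false
namespace KLR
variable {k : Type} [Field k] {I : Type} [Fintype I] [DecidableEq I] (C : CartanDatum k I)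

theorem Tt_congr {n : ℕ} {l l' : ℕ} (h : l + 1 < n) (h' : l' + 1 < n) (e : l = l') :
    Tt C l h = Tt C l' h' := by subst e; rfl

theorem Xx_congr {n : ℕ} {a b : Fin n} (e : a.val = b.val) : Xx C a = Xx C b := by
  rw [Fin.ext e]

section Qsymm
variable {A : Type} [Ring A] [Algebra k A]

theorem Qel_symm (i j : I) {u v : A} (h : u * v = v * u) : Qel C i j u v = Qel C j i v u := by
  unfold Qel
  by_cases hij : i = j
  · simp [hij]
  · rw [if_neg hij, if_neg (Ne.symm hij), Finset.sum_comm]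
    refine Finset.sum_congr rfl fun q _ => Finset.sum_congr rfl fun p _ => ?_
    have h1 : u ^ p * v ^ q = v ^ q * u ^ p := (Commute.pow_pow h p q)
    rw [C.symmetrize i j, C.t_symm i j, h1, add_comm]

theorem Qdiff_symm (i j : I) {u v w : A} (h : u * w = w * u) :
    Qdiff C i j u v w = Qdiff C i j w v u := by
  unfold Qdiff
  by_cases hij : i = j
  · simp [hij]
  · rw [if_neg hij, if_neg hij]
    refine Finset.sum_congr rfl fun q _ => Finset.sum_congr rfl fun p _ => ?_
    rw [Commute.geom_sum₂_comm q h]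
end Qsymm

theorem snoc_comp_swap {n : ℕ} (l : ℕ) (h : l + 1 < n) (ν : Fin n → I) (i : I) :
    (Fin.snoc (ν ∘ Equiv.swap (⟨l, Nat.lt_of_succ_lt h⟩ : Fin n) ⟨l + 1, h⟩) i : Fin (n+1) → I) =
    (Fin.snoc ν i : Fin (n+1) → I) ∘ Equiv.swap (⟨l, by omega⟩ : Fin (n+1)) ⟨l + 1, by omega⟩ := by
  have e1 : (⟨l, by omega⟩ : Fin (n+1)) = Fin.castSucc ⟨l, Nat.lt_of_succ_lt h⟩ := rfl
  have e2 : (⟨l+1, by omega⟩ : Fin (n+1)) = Fin.castSucc ⟨l+1, h⟩ := rfl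
  funext a
  refine Fin.lastCases ?_ (fun a => ?_) a
  · rw [Fin.snoc_last, Function.comp_apply, Equiv.swap_apply_of_ne_of_ne, Fin.snoc_last]
    · rw [e1]; exact (Fin.castSucc_lt_last _).ne'
    · rw [e2]; exact (Fin.castSucc_lt_last _).ne'
  · rw [Fin.snoc_castSucc, Function.comp_apply, Function.comp_apply, e1, e2,
      (Fin.castSucc_injective n).swap_apply, Fin.snoc_castSucc]

theorem snoc_mk {n : ℕ} (l : ℕ) (h : l < n) (ν : Fin n → I) (i : I) (h') :
    (Fin.snoc ν i : Fin (n+1) → I) ⟨l, h'⟩ = ν ⟨l, h⟩ := 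
  Fin.snoc_castSucc (α := fun _ => I) i ν ⟨l, h⟩

theorem sum_snoc {n : ℕ} {A : Type} [AddCommMonoid A] (f : (Fin (n+1) → I) → A) :
    ∑ ν : Fin n → I, ∑ i, f (Fin.snoc ν i) = ∑ μ, f μ := by
  rw [← Finset.sum_product']
  refine Fintype.sum_equiv ((Equiv.prodComm _ _).trans (Fin.snocEquiv (fun _ => I))) _ _ ?_
  intro x; rfl

theorem isRep_up (n : ℕ) : IsRep C (n := n) (fun ν => ∑ i, Ee C (Fin.snoc ν i : Fin (n+1) → I))
    (fun a => Xx C a.castSucc) (fun l h => Tt C l (Nat.lt_succ_of_lt h)) := by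
  have H := isRep_alg C (n+1)
  constructor
  · intro ν ν'
    rw [Finset.sum_mul_sum]
    simp only [H.ee]
    by_cases h : ν = ν'
    · subst h; simp
    · rw [if_neg h]
      refine Finset.sum_eq_zero fun i _ => Finset.sum_eq_zero fun j _ => if_neg ?_
      intro hh; exact h (Fin.snoc_injective2 hh).1
  · rw [sum_snoc, H.esum]
  · intro a b; exact H.xx _ _
  · intro a ν; simp only [Finset.mul_sum, Finset.sum_mul, H.xe]
  · intro l h ν
    simp only [Finset.mul_sum, Finset.sum_mul, H.taue, snoc_comp_swap]
  · intro l h l' h' hh; exact H.tautau _ _ _ _ hh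
  · intro l h ν
    simp only [Finset.mul_sum, H.tausq]
    refine Finset.sum_congr rfl fun i _ => ?_
    rw [snoc_mk l (by omega), snoc_mk (l+1) (by omega)]; rfl
  · intro l h m ν
    have e := H.taux l (by omega) m.castSucc
    have e3 : (Equiv.swap (⟨l, by omega⟩ : Fin (n+1)) ⟨l + 1, by omega⟩) m.castSucc =
       (Equiv.swap (⟨l, by omega⟩ : Fin n) ⟨l + 1, by omega⟩ m).castSucc := by
      have e1 : (⟨l, by omega⟩ : Fin (n+1)) = Fin.castSucc ⟨l, Nat.lt_of_succ_lt h⟩ := rfl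
      have e2 : (⟨l+1, by omega⟩ : Fin (n+1)) = Fin.castSucc ⟨l+1, h⟩ := rfl
      rw [e1, e2, (Fin.castSucc_injective n).swap_apply]
    rw [e3] at e
    rw [Finset.mul_sum]
    simp only [e, snoc_mk l (show l < n by omega), snoc_mk (l+1) (show l + 1 < n by omega)]
    have e4 : (m.castSucc = ⟨l, by omega⟩) = (m = ⟨l, by omega⟩) := by simp [Fin.ext_iff]
    have e5 : (m.castSucc = ⟨l+1, by omega⟩) = (m = ⟨l+1, by omega⟩) := by simp [Fin.ext_iff]
    simp only [e4, e5]
    split_ifs <;> simp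
  · intro l h ν
    simp only [Finset.mul_sum, H.braid]
    split_ifs with hc
    · refine Finset.sum_congr rfl fun i _ => ?_
      rw [snoc_mk l (by omega), snoc_mk (l+1) (by omega), snoc_mk (l+2) (by omega), if_pos hc]; rfl
    · refine Finset.sum_eq_zero fun i _ => ?_
      rw [snoc_mk l (by omega), snoc_mk (l+2) (by omega), if_neg hc]

/-- The unital inclusion `R(n) → R(n+1)`. -/
noncomputable def up (n : ℕ) : Alg C n →ₐ[k] Alg C (n+1) := liftA (isRep_up C n)

theorem rev_comp_swap {n : ℕ} (l m : ℕ) (h : l + 1 < n) (hm : l + 2 + m = n) (ν : Fin n → I) :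
    (ν ∘ Equiv.swap (⟨l, by omega⟩ : Fin n) ⟨l + 1, h⟩) ∘ Fin.rev =
    (ν ∘ Fin.rev) ∘ Equiv.swap (⟨m, by omega⟩ : Fin n) ⟨m + 1, by omega⟩ := by
  have e1 : (⟨l, by omega⟩ : Fin n) = Fin.rev ⟨m+1, by omega⟩ := by ext; simp [Fin.val_rev]; omega
  have e2 : (⟨l+1, h⟩ : Fin n) = Fin.rev ⟨m, by omega⟩ := by ext; simp [Fin.val_rev]; omega
  funext a
  simp only [Function.comp_apply]
  rw [e1, e2, Equiv.swap_comm, Fin.rev_injective.swap_apply]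

theorem isRep_flip {n : ℕ} {A : Type} [Ring A] [Algebra k A] {ε : (Fin n → I) → A}
    {ξ : Fin n → A} {θ : ∀ l : ℕ, l + 1 < n → A} (H : IsRep C ε ξ θ) :
    IsRep C (n := n) (fun ν => ε (ν ∘ Fin.rev))
    (fun a => ξ a.rev) (fun l h => - θ (n - 2 - l) (by omega)) := by
  have θc : ∀ {l l' : ℕ} (h : l + 1 < n) (h' : l' + 1 < n) (e : l = l'), θ l h = θ l' h' := by
    intro l l' h h' e; subst e; rfl
  have rinj : ∀ ν ν' : Fin n → I, ν ∘ Fin.rev = ν' ∘ Fin.rev ↔ ν = ν' := by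
    intro ν ν'
    exact (Fin.revPerm.surjective.injective_comp_right).eq_iff
  constructor
  · intro ν ν'
    rw [H.ee]; simp only [rinj]
  · rw [← H.esum]
    exact Fintype.sum_equiv (Equiv.arrowCongr Fin.revPerm (Equiv.refl I)) _ _ (fun _ => rfl)
  · intro a b; exact H.xx _ _
  · intro a ν; exact H.xe _ _
  · intro l h ν
    obtain ⟨m, hm⟩ : ∃ m, l + 2 + m = n := ⟨n - (l+2), by omega⟩
    rw [θc (l' := m) (by omega) (by omega) (by omega), neg_mul, mul_neg, H.taue,
      rev_comp_swap l m h hm]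
  · intro l h l' h' hh; rw [neg_mul_neg, neg_mul_neg]; exact H.tautau _ _ _ _ (by omega)
  · intro l h ν
    obtain ⟨m, hm⟩ : ∃ m, l + 2 + m = n := ⟨n - (l+2), by omega⟩
    have e1 : Fin.rev (⟨l, by omega⟩ : Fin n) = ⟨m+1, by omega⟩ := by
      ext; simp [Fin.val_rev]; omega
    have e2 : Fin.rev (⟨l+1, h⟩ : Fin n) = ⟨m, by omega⟩ := by
      ext; simp [Fin.val_rev]; omega
    have e3 : Fin.rev (⟨m+1, by omega⟩ : Fin n) = ⟨l, by omega⟩ := by rw [← e1, Fin.rev_rev]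
    have e4 : Fin.rev (⟨m, by omega⟩ : Fin n) = ⟨l+1, by omega⟩ := by rw [← e2, Fin.rev_rev]
    rw [θc (l' := m) (by omega) (by omega) (by omega), neg_sq, H.tausq]
    simp only [Function.comp_apply, e1, e2, e3, e4]
    rw [Qel_symm C _ _ (H.xx _ _)]
  · intro l h a ν
    obtain ⟨m, hm⟩ : ∃ m, l + 2 + m = n := ⟨n - (l+2), by omega⟩
    have e1 : Fin.rev (⟨l, by omega⟩ : Fin n) = ⟨m+1, by omega⟩ := by
      ext; simp [Fin.val_rev]; omega
    have e2 : Fin.rev (⟨l+1, h⟩ : Fin n) = ⟨m, by omega⟩ := by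
      ext; simp [Fin.val_rev]; omega
    have e3 : Fin.rev (⟨m+1, by omega⟩ : Fin n) = ⟨l, by omega⟩ := by rw [← e1, Fin.rev_rev]
    have e4 : Fin.rev (⟨m, by omega⟩ : Fin n) = ⟨l+1, by omega⟩ := by rw [← e2, Fin.rev_rev]
    have e5 : Fin.rev (Equiv.swap (⟨l, by omega⟩ : Fin n) ⟨l + 1, h⟩ a) =
      Equiv.swap (⟨m, by omega⟩ : Fin n) ⟨m + 1, by omega⟩ a.rev := by
      rw [← Fin.rev_injective.swap_apply, e1, e2, Equiv.swap_comm]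
    have e := H.taux m (by omega) a.rev (ν ∘ Fin.rev)
    have e6 : (a.rev = ⟨m, by omega⟩) = (a = ⟨l+1, h⟩) := by
      rw [← e2, Fin.rev_inj]
    have e7 : (a.rev = ⟨m+1, by omega⟩) = (a = ⟨l, by omega⟩) := by
      rw [← e1, Fin.rev_inj]
    simp only [Function.comp_apply, e3, e4, e6, e7, ← e5] at e
    rw [θc (l' := m) (by omega) (by omega) (by omega)]
    rw [show ∀ a b c : A, (-a * b - c * -a) = -(a * b - c * a) by intros; noncomm_ring,
      neg_mul, e]
    by_cases hν : ν ⟨l, by omega⟩ = ν ⟨l+1, h⟩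
    · by_cases ha : a = ⟨l, by omega⟩
      · simp [ha, hν]
      · simp [ha, hν]; split_ifs <;> simp
    · have : ¬ ν ⟨l+1, h⟩ = ν ⟨l, by omega⟩ := fun h => hν h.symm
      simp [hν, this]
  · intro l h ν
    obtain ⟨m, hm⟩ : ∃ m, l + 3 + m = n := ⟨n - (l+3), by omega⟩
    have e1 : Fin.rev (⟨m, by omega⟩ : Fin n) = ⟨l+2, by omega⟩ := by
      ext; simp [Fin.val_rev]; omega
    have e2 : Fin.rev (⟨m+1, by omega⟩ : Fin n) = ⟨l+1, by omega⟩ := by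
      ext; simp [Fin.val_rev]; omega
    have e3 : Fin.rev (⟨m+2, by omega⟩ : Fin n) = ⟨l, by omega⟩ := by
      ext; simp [Fin.val_rev]; omega
    have e := H.braid m (by omega) (ν ∘ Fin.rev)
    rw [θc (l := n - 2 - l) (l' := m+1) (by omega) (by omega) (by omega),
      θc (l := n - 2 - (l+1)) (l' := m) (by omega) (by omega) (by omega)]
    rw [show ∀ a b : A, (-a * -b * -a - -b * -a * -b) = b * a * b - a * b * a by
      intros; noncomm_ring, e]
    simp only [Function.comp_apply, e1, e2, e3]
    rw [← e1, ← e2, ← e3, Fin.rev_rev, Fin.rev_rev, Fin.rev_rev]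
    simp only [e1, e2, e3]
    by_cases hν : ν ⟨l, by omega⟩ = ν ⟨l+2, h⟩
    · rw [if_pos hν.symm, if_pos hν, hν, Qdiff_symm C _ _ (H.xx _ _)]
    · rw [if_neg (fun h => hν h.symm), if_neg hν]

/-- The flip of the KLR algebra. -/
noncomputable def flip (n : ℕ) : Alg C n →ₐ[k] Alg C n := liftA (isRep_flip C (isRep_alg C n))

theorem flip_flip {n : ℕ} (z : Alg C n) : flip C n (flip C n z) = z := by
  have : (flip C n).comp (flip C n) = AlgHom.id k _ := by
    apply algHom_ext
    · intro ν
      simp only [flip, AlgHom.comp_apply, liftA_e, AlgHom.id_apply]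
      congr 1; funext a; simp
    · intro a
      simp [flip]
    · intro l h
      simp only [flip, AlgHom.comp_apply, liftA_t, AlgHom.id_apply, map_neg, neg_neg]
      exact Tt_congr C _ _ (by omega)
  exact DFunLike.congr_fun this z

/-- The unital inclusion `R(n) → R(n+1)` on the other side. -/
noncomputable def upL (n : ℕ) : Alg C n →ₐ[k] Alg C (n+1) :=
  (flip C (n+1)).comp ((up C n).comp (flip C n))

end KLR

set_option linter.unusedSectionVars false

namespace KLR
variable {k : Type} [Field k] {I : Type} [Fintype I] [DecidableEq I] (C : CartanDatum k I)

section absK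
variable {K : Type} [Field K] [Algebra k K]

/-- Half of `Q`. -/
noncomputable def Pel (i j : I) (u v : K) : K :=
  if Fintype.equivFin I i < Fintype.equivFin I j then 1 else Qel C i j u v

theorem Pel_mul (i j : I) (hij : i ≠ j) (u v : K) : Pel C i j u v * Pel C j i v u = Qel C i j u v := by
  unfold Pel
  have : Fintype.equivFin I i ≠ Fintype.equivFin I j := fun h => hij ((Fintype.equivFin I).injective h)
  rcases lt_or_gt_of_ne this with h | h
  · rw [if_pos h, if_neg h.not_gt, one_mul, Qel_symm C _ _ (mul_comm _ _)]
  · rw [if_neg h.not_gt, if_pos h, mul_one]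

theorem map_Pel (s : K ≃ₐ[k] K) (i j : I) (u v : K) : s (Pel C i j u v) = Pel C i j (s u) (s v) := by
  unfold Pel
  split_ifs
  · simp
  · exact map_Qel C s.toAlgHom i j u v

theorem Qdiff_mul (i j : I) (u v w : K) :
    Qdiff C i j u v w * (u - w) = Qel C i j u v - Qel C i j w v := by
  unfold Qdiff Qel
  split_ifs
  · simp
  · simp only [Finset.sum_mul, ← Finset.sum_sub_distrib]
    refine Finset.sum_congr rfl fun p _ => Finset.sum_congr rfl fun q _ => ?_
    split_ifs
    · rw [← smul_sub, ← sub_mul, ← geom_sum₂_mul, Algebra.smul_mul_assoc]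
      congr 1; simp only [← Finset.sum_mul]; ring
    · simp

theorem Qel_one_zero (i j : I) (hij : i ≠ j) :
    Qel C i j (1 : k) (0 : k) = C.t i j (-(C.a i j)).toNat 0 := by
  unfold Qel
  rw [if_neg hij]
  have ha := C.a_nonpos i j hij
  have hd := C.d_pos i
  rw [Finset.sum_eq_single (-(C.a i j)).toNat]
  · rw [Finset.sum_eq_single 0]
    · rw [if_pos]; · simp
      rw [Int.toNat_of_nonneg (by omega)]; simp
    · intro q _ hq
      simp [hq]
    · simp
  · intro p _ hp
    refine Finset.sum_eq_zero fun q _ => ?_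
    by_cases hq : q = 0
    · subst hq
      rw [if_neg]
      intro h
      apply hp
      have : C.d i * ((p : ℤ) + C.a i j) = 0 := by push_cast at h; linarith
      rcases mul_eq_zero.1 this with h | h <;> omega
    · simp [hq]
  · simp

/-- Coefficient of the twisted part. -/
noncomputable def Ac (u v : K) (i j : I) : K := if i = j then (u - v)⁻¹ else Pel C i j u v
/-- Coefficient of the untwisted part. -/
noncomputable def Dc (u v : K) (i j : I) : K := if i = j then -(u - v)⁻¹ else 0

theorem map_Ac (s : K ≃ₐ[k] K) (i j : I) (u v : K) : s (Ac C u v i j) = Ac C (s u) (s v) i j := by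
  unfold Ac
  split_ifs
  · simp
  · exact map_Pel C s i j u v
theorem map_Dc (s : K ≃ₐ[k] K) (i j : I) (u v : K) : s (Dc u v i j) = Dc (s u) (s v) i j := by
  unfold Dc
  split_ifs <;> simp

theorem sq_abs (s : K ≃ₐ[k] K) (x y : K) (hxy : x ≠ y) (sx : s x = y) (sy : s y = x)
    (ss : ∀ f, s (s f) = f) (G : I → I → K) (a b : I) :
    Ac C x y a b * s (Ac C x y b a * s (G a b) + Dc x y b a * G b a) +
      Dc x y a b * (Ac C x y a b * s (G b a) + Dc x y a b * G a b) = Qel C a b x y * G a b := by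
  have h1 : x - y ≠ 0 := sub_ne_zero.2 hxy
  have h2 : y - x ≠ 0 := sub_ne_zero.2 hxy.symm
  simp only [map_add, map_mul, map_Ac, map_Dc, sx, sy, ss]
  by_cases hab : a = b
  · subst hab
    simp only [Ac, Dc, if_true, Qel]
    field_simp
    ring
  · rw [← Pel_mul C a b hab]
    simp only [Ac, Dc, if_neg hab, if_neg (Ne.symm hab)]
    ring

theorem braid_abs (s t : K ≃ₐ[k] K) (x y z : K) (hxy : x ≠ y) (hyz : y ≠ z) (hxz : x ≠ z)
    (sx : s x = y) (sy : s y = x) (sz : s z = z) (tx : t x = x) (ty : t y = z) (tz : t z = y)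
    (ss : ∀ f, s (s f) = f) (tt : ∀ f, t (t f) = f) (st : ∀ f, t (s (t f)) = s (t (s f)))
    (S T : (I → I → I → K) → (I → I → I → K))
    (hS : ∀ G a b c, S G a b c = Ac C x y a b * s (G b a c) + Dc x y a b * G a b c)
    (hT : ∀ G a b c, T G a b c = Ac C y z b c * t (G a c b) + Dc y z b c * G a b c)
    (G : I → I → I → K) (a b c : I) :
    T (S (T G)) a b c - S (T (S G)) a b c = if a = c then Qdiff C a b x y z * G a b c else 0 := by
  have h1 : x - y ≠ 0 := sub_ne_zero.2 hxy
  have h2 : y - x ≠ 0 := sub_ne_zero.2 hxy.symm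
  have h3 : y - z ≠ 0 := sub_ne_zero.2 hyz
  have h4 : z - y ≠ 0 := sub_ne_zero.2 hyz.symm
  have h5 : x - z ≠ 0 := sub_ne_zero.2 hxz
  have h6 : z - x ≠ 0 := sub_ne_zero.2 hxz.symm
  simp only [hS, hT, map_add, map_mul, map_Ac, map_Dc, sx, sy, sz, tx, ty, tz, ss, tt, st]
  by_cases hab : a = b
  · subst hab
    by_cases hac : a = c
    · subst hac
      simp only [Ac, Dc, if_true, Qdiff]
      field_simp
      ring
    · simp only [Ac, Dc, if_true, if_neg hac, if_neg (Ne.symm hac)]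
      field_simp
      ring
  · by_cases hbc : b = c
    · subst hbc
      simp only [Ac, Dc, if_true, if_neg hab, if_neg (Ne.symm hab)]
      field_simp
      ring
    · by_cases hac : a = c
      · subst hac
        have e := Qdiff_mul C a b x y z
        rw [← Pel_mul C a b hab, ← Pel_mul C a b hab] at e
        have e' : Qdiff C a b x y z = (Pel C a b x y * Pel C b a y x - Pel C a b z y * Pel C b a y z) / (x - z) := by
          field_simp; exact e
        simp only [Ac, Dc, if_true, if_neg hab, if_neg hbc, e']
        field_simp
        ring
      · simp only [Ac, Dc, if_neg hac, if_neg hab, if_neg hbc,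
          if_neg (Ne.symm hab), if_neg (Ne.symm hbc)]
        ring

end absK
end KLR

set_option linter.unusedSectionVars false

namespace KLR
variable {k : Type} [Field k] {I : Type} [Fintype I] [DecidableEq I] (C : CartanDatum k I)

variable (k) in
/-- Rational functions in infinitely many variables. -/
abbrev KK : Type := FractionRing (MvPolynomial ℕ k)

variable (k) in
/-- The variables. -/
noncomputable def xv (m : ℕ) : KK k := algebraMap (MvPolynomial ℕ k) (KK k) (MvPolynomial.X m)

theorem xv_injective : Function.Injective (xv k) := by
  intro a b h
  exact MvPolynomial.X_injective (IsFractionRing.injective (MvPolynomial ℕ k) (KK k) h)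

variable (k) in
/-- The simple transposition acting on rational functions. -/
noncomputable def sw (l : ℕ) : KK k ≃ₐ[k] KK k :=
  IsFractionRing.algEquivOfAlgEquiv (MvPolynomial.renameEquiv k (Equiv.swap l (l+1)))

theorem sw_xv (l m : ℕ) : sw k l (xv k m) = xv k (Equiv.swap l (l+1) m) := by
  unfold sw xv
  rw [IsFractionRing.algEquivOfAlgEquiv_algebraMap]
  simp

theorem KK_ext {f g : KK k →ₐ[k] KK k} (h : ∀ m, f (xv k m) = g (xv k m)) : f = g := by
  have : f.comp (IsScalarTower.toAlgHom k (MvPolynomial ℕ k) (KK k)) =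
    g.comp (IsScalarTower.toAlgHom k (MvPolynomial ℕ k) (KK k)) := by
    apply MvPolynomial.algHom_ext
    intro i
    exact h i
  have h2 : f.toRingHom = g.toRingHom := by
    apply IsLocalization.ringHom_ext (nonZeroDivisors (MvPolynomial ℕ k))
    ext x
    · exact DFunLike.congr_fun this (MvPolynomial.C x)
    · exact DFunLike.congr_fun this (MvPolynomial.X x)
  exact AlgHom.ext fun x => DFunLike.congr_fun h2 x

theorem sw_sw (l : ℕ) (f : KK k) : sw k l (sw k l f) = f := by
  have : ((sw k l).toAlgHom.comp (sw k l).toAlgHom) = AlgHom.id k _ := by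
    apply KK_ext
    intro m
    show sw k l (sw k l _) = _
    simp [sw_xv]
  exact DFunLike.congr_fun this f

theorem sw_comm (l l' : ℕ) (h : l + 1 < l' ∨ l' + 1 < l) (f : KK k) :
    sw k l (sw k l' f) = sw k l' (sw k l f) := by
  have : ((sw k l).toAlgHom.comp (sw k l').toAlgHom) = ((sw k l').toAlgHom.comp (sw k l).toAlgHom) := by
    apply KK_ext
    intro m
    show sw k l (sw k l' _) = sw k l' (sw k l _)
    simp only [sw_xv]
    congr 1
    simp only [Equiv.swap_apply_def]
    split_ifs <;> omega
  exact DFunLike.congr_fun this f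

theorem sw_braid (l : ℕ) (f : KK k) :
    sw k (l+1) (sw k l (sw k (l+1) f)) = sw k l (sw k (l+1) (sw k l f)) := by
  have : ((sw k (l+1)).toAlgHom.comp ((sw k l).toAlgHom.comp (sw k (l+1)).toAlgHom)) =
      ((sw k l).toAlgHom.comp ((sw k (l+1)).toAlgHom.comp (sw k l).toAlgHom)) := by
    apply KK_ext
    intro m
    show sw k (l+1) (sw k l (sw k (l+1) _)) = sw k l (sw k (l+1) (sw k l _))
    simp only [sw_xv]
    congr 1
    simp only [Equiv.swap_apply_def]
    split_ifs <;> omega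
  exact DFunLike.congr_fun this f

theorem Ac_ne_zero (l : ℕ) (i j : I) : Ac C (xv k l) (xv k (l+1)) i j ≠ 0 := by
  unfold Ac
  split_ifs with h
  · apply inv_ne_zero
    rw [sub_ne_zero]
    intro h; have := xv_injective h; omega
  · unfold Pel
    split_ifs
    · exact one_ne_zero
    · have : Qel C i j (xv k l) (xv k (l+1)) =
        IsScalarTower.toAlgHom k (MvPolynomial ℕ k) (KK k)
          (Qel C i j (MvPolynomial.X l) (MvPolynomial.X (l+1))) := by
        rw [map_Qel]; rfl
      rw [this]
      intro h0
      have h1 : Qel C i j (MvPolynomial.X l) (MvPolynomial.X (l+1)) = (0 : MvPolynomial ℕ k) :=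
        IsFractionRing.injective (MvPolynomial ℕ k) (KK k) (h0.trans (map_zero _).symm)
      have h2 := congrArg (MvPolynomial.aeval (R := k) (fun m => if m = l then (1 : k) else 0)) h1
      rw [map_Qel] at h2
      simp [Qel_one_zero C i j h] at h2
      exact C.t_lead i j h h2

variable (k I) in
/-- The space of the polynomial (rational) representation. -/
abbrev VV (n : ℕ) : Type := (Fin n → I) → KK k

/-- The transposition of two neighbouring strands. -/
def fs {n : ℕ} (l : ℕ) (h : l + 1 < n) : Equiv.Perm (Fin n) :=
  Equiv.swap (⟨l, Nat.lt_of_succ_lt h⟩ : Fin n) ⟨l + 1, h⟩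

/-- The action of `τ_l`. -/
noncomputable def tauOp {n : ℕ} (l : ℕ) (h : l + 1 < n) : Module.End k (VV k I n) where
  toFun F μ := Ac C (xv k l) (xv k (l+1)) (μ ⟨l, Nat.lt_of_succ_lt h⟩) (μ ⟨l + 1, h⟩) *
      sw k l (F (μ ∘ fs l h)) +
      Dc (xv k l) (xv k (l+1)) (μ ⟨l, Nat.lt_of_succ_lt h⟩) (μ ⟨l + 1, h⟩) * F μ
  map_add' F G := by
    funext μ; simp only [Pi.add_apply, map_add]; ring
  map_smul' c F := by
    funext μ
    simp only [Pi.smul_apply, map_smul, RingHom.id_apply, mul_smul_comm, smul_add]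

theorem tauOp_apply {n : ℕ} (l : ℕ) (h : l + 1 < n) (F : VV k I n) (μ : Fin n → I) :
    tauOp C l h F μ = Ac C (xv k l) (xv k (l+1)) (μ ⟨l, Nat.lt_of_succ_lt h⟩) (μ ⟨l + 1, h⟩) *
      sw k l (F (μ ∘ fs l h)) +
      Dc (xv k l) (xv k (l+1)) (μ ⟨l, Nat.lt_of_succ_lt h⟩) (μ ⟨l + 1, h⟩) * F μ := rfl

variable (k) in
/-- The action of `e(ν)`. -/
noncomputable def eOp {n : ℕ} (ν : Fin n → I) : Module.End k (VV k I n) where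
  toFun F μ := if μ = ν then F μ else 0
  map_add' F G := by funext μ; simp only [Pi.add_apply]; split_ifs <;> simp
  map_smul' c F := by funext μ; simp only [Pi.smul_apply]; split_ifs <;> simp

theorem eOp_apply {n : ℕ} (ν : Fin n → I) (F : VV k I n) (μ : Fin n → I) :
    eOp k ν F μ = if μ = ν then F μ else 0 := rfl

variable (k I) in
/-- The action of a scalar. -/
noncomputable def kOp (n : ℕ) : KK k →ₐ[k] Module.End k (VV k I n) := Algebra.lsmul k k (VV k I n)

theorem kOp_apply {n : ℕ} (f : KK k) (F : VV k I n) (μ : Fin n → I) :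
    kOp k I n f F μ = f * F μ := rfl

/-- Changing three consecutive entries. -/
def up3 {n : ℕ} (l : ℕ) (μ : Fin n → I) (a b c : I) : Fin n → I :=
  fun p => if p.val = l then a else if p.val = l + 1 then b else if p.val = l + 2 then c else μ p

theorem up3_s {n : ℕ} (l : ℕ) (h : l + 2 < n) (μ : Fin n → I) (a b c : I) :
    up3 l μ a b c ∘ fs l (Nat.lt_of_succ_lt h) = up3 l μ b a c := by
  funext p
  simp only [up3, fs, Function.comp_apply, Equiv.swap_apply_def, Fin.ext_iff]
  by_cases h1 : p.val = l
  · simp [h1]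
  · by_cases h2 : p.val = l + 1
    · simp [h2]
    · simp [h1, h2]

theorem up3_t {n : ℕ} (l : ℕ) (h : l + 2 < n) (μ : Fin n → I) (a b c : I) :
    up3 l μ a b c ∘ fs (l+1) h = up3 l μ a c b := by
  funext p
  simp only [up3, fs, Function.comp_apply, Equiv.swap_apply_def, Fin.ext_iff]
  by_cases h1 : p.val = l + 1
  · simp [h1, show ¬ l + 1 + 1 = l by omega]
  · by_cases h2 : p.val = l + 2
    · simp [h2]
    · simp [h1, h2]

theorem isRep_pol (n : ℕ) : IsRep C (n := n) (fun ν => eOp k ν) (fun a => kOp k I n (xv k a))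
    (fun l h => tauOp C l h) := by
  have hne : ∀ {a b : ℕ}, a ≠ b → xv k a ≠ xv k b := fun h hh => h (xv_injective hh)
  constructor
  · intro ν ν'
    refine LinearMap.ext fun F => funext fun μ => ?_
    simp only [Module.End.mul_apply, eOp_apply]
    split_ifs <;> simp_all [eOp_apply]
  · refine LinearMap.ext fun F => funext fun μ => ?_
    simp [LinearMap.sum_apply, Finset.sum_apply, eOp_apply]
  · intro a b
    rw [← map_mul, mul_comm, map_mul]
  · intro a ν
    refine LinearMap.ext fun F => funext fun μ => ?_
    simp only [Module.End.mul_apply, eOp_apply, kOp_apply]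
    split_ifs <;> simp
  · intro l h ν
    refine LinearMap.ext fun F => funext fun μ => ?_
    simp only [Module.End.mul_apply, eOp_apply, tauOp_apply]
    have e1 : μ ∘ fs l h = ν ↔ μ = ν ∘ fs l h := by
      constructor
      · rintro rfl; funext p; simp [fs]
      · rintro rfl; funext p; simp [fs]
    change _ = if μ = ν ∘ fs l h then _ else _
    simp only [e1]
    by_cases hμ : μ ⟨l, Nat.lt_of_succ_lt h⟩ = μ ⟨l + 1, h⟩
    · have e2 : μ ∘ fs l h = μ := by
        funext p
        simp only [fs, Function.comp_apply, Equiv.swap_apply_def]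
        split_ifs <;> simp_all
      rw [e2] at e1 ⊢
      simp only [e1]
      split_ifs <;> simp
    · simp only [Dc, if_neg hμ]
      split_ifs <;> simp
  · intro l h l' h' hh
    refine LinearMap.ext fun F => funext fun μ => ?_
    simp only [Module.End.mul_apply, tauOp_apply, map_add, map_mul, map_Ac, map_Dc, sw_xv]
    have e1 : (μ ∘ fs l h) ∘ fs l' h' = (μ ∘ fs l' h') ∘ fs l h := by
      funext p
      simp only [Function.comp_apply]
      congr 1
      ext
      simp only [fs, Equiv.swap_apply_def]
      split_ifs <;> simp only [Fin.ext_iff] at * <;> omega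
    have e2 : ∀ (m : ℕ) (hm : m < n), m ≠ l → m ≠ l+1 → fs l h ⟨m, hm⟩ = ⟨m, hm⟩ := by
      intro m hm h1 h2
      simp [fs, Equiv.swap_apply_def, h1, h2]
    have e3 : ∀ (m : ℕ) (hm : m < n), m ≠ l' → m ≠ l'+1 → fs l' h' ⟨m, hm⟩ = ⟨m, hm⟩ := by
      intro m hm h1 h2
      simp [fs, Equiv.swap_apply_def, h1, h2]
    have e4 : ∀ m, m ≠ l → m ≠ l+1 → Equiv.swap l (l+1) m = m := fun m h1 h2 =>
      Equiv.swap_apply_of_ne_of_ne h1 h2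
    have e5 : ∀ m, m ≠ l' → m ≠ l'+1 → Equiv.swap l' (l'+1) m = m := fun m h1 h2 =>
      Equiv.swap_apply_of_ne_of_ne h1 h2
    simp only [Function.comp_apply]
    rw [e2 l' _ (by omega) (by omega), e2 (l'+1) _ (by omega) (by omega),
      e3 l _ (by omega) (by omega), e3 (l+1) _ (by omega) (by omega),
      e4 l' (by omega) (by omega), e4 (l'+1) (by omega) (by omega),
      e5 l (by omega) (by omega), e5 (l+1) (by omega) (by omega), sw_comm l l' hh, e1]
    ring
  · intro l h ν
    rw [← map_Qel]
    refine LinearMap.ext fun F => funext fun μ => ?_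
    simp only [pow_two, Module.End.mul_apply, kOp_apply]
    generalize hF : eOp k ν F = F'
    have := sq_abs C (sw k l) (xv k l) (xv k (l+1)) (hne (by omega)) (by simp [sw_xv]) (by simp [sw_xv])
      (sw_sw l) (fun a b => F' (if a = μ ⟨l, Nat.lt_of_succ_lt h⟩ ∧ b = μ ⟨l + 1, h⟩ then μ else μ ∘ fs l h))
      (μ ⟨l, Nat.lt_of_succ_lt h⟩) (μ ⟨l + 1, h⟩)
    have e1 : (μ ∘ fs l h) ∘ fs l h = μ := by funext p; simp [fs]
    have e2 : (if μ ⟨l + 1, h⟩ = μ ⟨l, Nat.lt_of_succ_lt h⟩ ∧ μ ⟨l, Nat.lt_of_succ_lt h⟩ = μ ⟨l + 1, h⟩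
        then μ else μ ∘ fs l h) = μ ∘ fs l h := by
      split_ifs with hc
      · funext p
        simp only [fs, Function.comp_apply, Equiv.swap_apply_def]
        split_ifs with q1 q2
        · rw [q1]; exact hc.2
        · rw [q2]; exact (hc.2).symm
        · rfl
      · rfl
    simp only [e2, and_self, if_true] at this
    have e3 : (μ ∘ fs l h) ⟨l, Nat.lt_of_succ_lt h⟩ = μ ⟨l+1, h⟩ := by simp [fs]
    have e4 : (μ ∘ fs l h) ⟨l+1, h⟩ = μ ⟨l, Nat.lt_of_succ_lt h⟩ := by simp [fs]
    simp only [tauOp_apply, e1, e3, e4]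
    rw [this]
    subst hF
    simp only [eOp_apply]
    split_ifs with hμ
    · rw [hμ]
    · simp
  · intro l h m ν
    refine LinearMap.ext fun F => funext fun μ => ?_
    simp only [Module.End.mul_apply, LinearMap.sub_apply, Pi.sub_apply, kOp_apply, tauOp_apply, map_mul,
      sw_xv]
    generalize hF : eOp k ν F = F'
    have e1 : Equiv.swap l (l+1) m.val = (Equiv.swap (⟨l, Nat.lt_of_succ_lt h⟩ : Fin n) ⟨l + 1, h⟩ m).val := by
      simp only [Equiv.swap_apply_def, Fin.ext_iff]
      split_ifs <;> simp
    rw [← e1]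
    refine Eq.trans (b := if m = ⟨l, Nat.lt_of_succ_lt h⟩ ∧ μ ⟨l, Nat.lt_of_succ_lt h⟩ = μ ⟨l + 1, h⟩ then
            - (F' μ)
          else if m = (⟨l + 1, h⟩ : Fin n) ∧ μ ⟨l, Nat.lt_of_succ_lt h⟩ = μ ⟨l + 1, h⟩ then
            F' μ
          else 0) ?_ ?_
    rotate_left
    · subst hF
      by_cases hμ : μ = ν
      · subst hμ; split_ifs <;> simp
      · simp only [eOp_apply, if_neg hμ]
        split_ifs <;> simp [eOp_apply, hμ]
    · have h1 : xv k l - xv k (l+1) ≠ 0 := sub_ne_zero.2 (hne (by omega))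
      by_cases hμ : μ ⟨l, Nat.lt_of_succ_lt h⟩ = μ ⟨l + 1, h⟩
      · simp only [hμ, Dc, if_true, and_true, Fin.ext_iff]
        by_cases hm : m.val = l
        · simp only [hm, if_true, Equiv.swap_apply_left]
          field_simp
          ring
        · by_cases hm' : m.val = l + 1
          · simp only [hm', if_true, Equiv.swap_apply_right, if_neg (show ¬ l + 1 = l by omega)]
            field_simp
            ring
          · rw [Equiv.swap_apply_of_ne_of_ne hm hm', if_neg hm, if_neg hm']
            ring
      · simp only [Dc, hμ, and_false, if_false]
        ring
  · intro l h ν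
    rw [← map_Qdiff]
    refine LinearMap.ext fun F => funext fun μ => ?_
    simp only [Module.End.mul_apply, LinearMap.sub_apply, Pi.sub_apply]
    generalize hF : eOp k ν F = F'
    have := braid_abs C (sw k l) (sw k (l+1)) (xv k l) (xv k (l+1)) (xv k (l+2)) (hne (by omega))
      (hne (by omega)) (hne (by omega)) (by simp [sw_xv]) (by simp [sw_xv])
      (by rw [sw_xv, Equiv.swap_apply_of_ne_of_ne] <;> omega)
      (by rw [sw_xv, Equiv.swap_apply_of_ne_of_ne] <;> omega)
      (by simp [sw_xv]) (by simp [sw_xv]) (sw_sw l) (sw_sw (l+1)) (sw_braid l) _ _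
      (fun G a b c => rfl) (fun G a b c => rfl)
      (fun a b c => F' (up3 l μ a b c)) (μ ⟨l, by omega⟩) (μ ⟨l + 1, by omega⟩) (μ ⟨l + 2, h⟩)
    have hSt : ∀ (F : VV k I n) a b c, tauOp C l (Nat.lt_of_succ_lt h) F (up3 l μ a b c) =
        Ac C (xv k l) (xv k (l+1)) a b * sw k l (F (up3 l μ b a c)) +
        Dc (xv k l) (xv k (l+1)) a b * F (up3 l μ a b c) := by
      intro F a b c
      rw [tauOp_apply, up3_s l h]
      simp [up3]
    have hTt : ∀ (F : VV k I n) a b c, tauOp C (l+1) h F (up3 l μ a b c) =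
        Ac C (xv k (l+1)) (xv k (l+2)) b c * sw k (l+1) (F (up3 l μ a c b)) +
        Dc (xv k (l+1)) (xv k (l+2)) b c * F (up3 l μ a b c) := by
      intro F a b c
      rw [tauOp_apply, up3_t l h]
      simp [up3, show ¬ l + 1 + 1 = l by omega]
    simp only [← hSt, ← hTt] at this
    have e0 : up3 l μ (μ ⟨l, by omega⟩) (μ ⟨l + 1, by omega⟩) (μ ⟨l + 2, h⟩) = μ := by
      funext p
      simp only [up3]
      split_ifs with h1 h2 h3
      · congr 1; exact Fin.ext h1.symm
      · congr 1; exact Fin.ext h2.symm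
      · congr 1; exact Fin.ext h3.symm
      · rfl
    rw [e0] at this
    rw [this]
    subst hF
    by_cases hμ : μ = ν
    · subst hμ; split_ifs <;> simp [kOp_apply]
    · simp only [eOp_apply, if_neg hμ]
      split_ifs <;> simp [eOp_apply, kOp_apply, hμ]

/-- The polynomial representation. -/
noncomputable def rho (n : ℕ) : Alg C n →ₐ[k] Module.End k (VV k I n) := liftA (isRep_pol C n)

end KLR

set_option linter.unusedSectionVars false

namespace KLR
variable {k : Type} [Field k] {I : Type} [Fintype I] [DecidableEq I] (C : CartanDatum k I)

section
variable {A : Type} [Ring A] [Algebra k A]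

theorem Qel_stable (U : Submodule k A) (i j : I) {u v : A} (hu : ∀ z ∈ U, u * z ∈ U)
    (hv : ∀ z ∈ U, v * z ∈ U) : ∀ z ∈ U, Qel C i j u v * z ∈ U := by
  intro z hz
  have hp : ∀ (w : A), (∀ z ∈ U, w * z ∈ U) → ∀ (p : ℕ), ∀ z ∈ U, w ^ p * z ∈ U := by
    intro w hw p
    induction p with
    | zero => intro z hz; simpa using hz
    | succ p ih => intro z hz; rw [pow_succ, mul_assoc]; exact ih _ (hw _ hz)
  unfold Qel
  split_ifs
  · simp
  · simp only [Finset.sum_mul]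
    refine Submodule.sum_mem _ fun p _ => Submodule.sum_mem _ fun q _ => ?_
    split_ifs
    · rw [smul_mul_assoc, mul_assoc]
      exact U.smul_mem _ (hp _ hu _ _ (hp _ hv _ _ hz))
    · simp

theorem Qdiff_stable (U : Submodule k A) (i j : I) {u v w : A} (hu : ∀ z ∈ U, u * z ∈ U)
    (hv : ∀ z ∈ U, v * z ∈ U) (hw : ∀ z ∈ U, w * z ∈ U) :
    ∀ z ∈ U, Qdiff C i j u v w * z ∈ U := by
  intro z hz
  have hp : ∀ (w : A), (∀ z ∈ U, w * z ∈ U) → ∀ (p : ℕ), ∀ z ∈ U, w ^ p * z ∈ U := by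
    intro w hw p
    induction p with
    | zero => intro z hz; simpa using hz
    | succ p ih => intro z hz; rw [pow_succ, mul_assoc]; exact ih _ (hw _ hz)
  unfold Qdiff
  split_ifs
  · simp
  · simp only [Finset.sum_mul]
    refine Submodule.sum_mem _ fun p _ => Submodule.sum_mem _ fun q _ => ?_
    split_ifs
    · rw [smul_mul_assoc, Finset.sum_mul]
      refine U.smul_mem _ (Submodule.sum_mem _ fun c _ => ?_)
      rw [mul_assoc, mul_assoc]
      exact hp _ hu _ _ (hp _ hw _ _ (hp _ hv _ _ hz))
    · simp

theorem stable_abs {n : ℕ} {ε : (Fin (n+1) → I) → A} {ξ : Fin (n+1) → A}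
    {θ : ∀ l : ℕ, l + 1 < n + 1 → A} (H : IsRep C ε ξ θ) (U : ℕ → Submodule k A)
    (h0 : ∀ a, a < n → U (a+1) ≤ U a)
    (h1 : ∀ a (h : a + 1 < n + 1), ∀ u ∈ U (a+1), θ a h * u ∈ U a)
    (h2 : ∀ a (h : a + 1 < n + 1), ∀ u ∈ U a, ∃ w ∈ U (a+1), ∃ w' ∈ U (a+1), u = θ a h * w + w')
    (h3 : ∀ a (h : a + 1 < n + 1), a + 2 ≤ n → ∀ u ∈ U (a+2), θ a h * u ∈ U (a+2))
    (he : ∀ ν, ∀ u ∈ U n, ε ν * u ∈ U n) (hx : ∀ m, ∀ u ∈ U n, ξ m * u ∈ U n) :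
    ∀ d a, a + d = n → (∀ ν, ∀ u ∈ U a, ε ν * u ∈ U a) ∧ (∀ m, ∀ u ∈ U a, ξ m * u ∈ U a) ∧
      ∀ l (h : l + 1 < n + 1), a ≤ l → ∀ u ∈ U a, θ l h * u ∈ U a := by
  intro d
  induction d using Nat.strong_induction_on with
  | _ d ihs =>
  rcases d with _ | d
  · intro a ha
    obtain rfl : a = n := by omega
    exact ⟨he, hx, fun l h h' => by omega⟩
  · intro a ha
    have h : a + 1 < n + 1 := by omega
    obtain ⟨ie, ix, it⟩ := ihs d (by omega) (a+1) (by omega)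
    have hle := h0 a (by omega)
    have hsum : ∀ u : A, u = ∑ ν, ε ν * u := fun u => by
      rw [← Finset.sum_mul, H.esum, one_mul]
    refine ⟨?_, ?_, ?_⟩
    · intro ν u hu
      obtain ⟨w, hw, w', hw', rfl⟩ := h2 a h u hu
      rw [mul_add]
      refine (U a).add_mem ?_ (hle (ie _ _ hw'))
      have := H.taue a h (ν ∘ Equiv.swap (⟨a, Nat.lt_of_succ_lt h⟩ : Fin (n+1)) ⟨a + 1, h⟩)
      have e : (ν ∘ Equiv.swap (⟨a, Nat.lt_of_succ_lt h⟩ : Fin (n+1)) ⟨a + 1, h⟩) ∘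
        Equiv.swap (⟨a, Nat.lt_of_succ_lt h⟩ : Fin (n+1)) ⟨a + 1, h⟩ = ν := by
        funext p; simp
      rw [e] at this
      rw [← mul_assoc, ← this, mul_assoc]
      exact h1 a h _ (ie _ _ hw)
    · intro m u hu
      obtain ⟨w, hw, w', hw', rfl⟩ := h2 a h u hu
      rw [mul_add]
      refine (U a).add_mem ?_ (hle (ix _ _ hw'))
      rw [hsum w, Finset.mul_sum, Finset.mul_sum]
      refine Submodule.sum_mem _ fun ν _ => ?_
      have := H.taux a h (Equiv.swap (⟨a, Nat.lt_of_succ_lt h⟩ : Fin (n+1)) ⟨a + 1, h⟩ m) ν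
      rw [Equiv.swap_apply_self, sub_mul, sub_eq_iff_eq_add'] at this
      replace this := (sub_eq_of_eq_add this).symm
      have e : ξ m * (θ a h * (ε ν * w)) = (ξ m * θ a h * ε ν) * w := by simp only [mul_assoc]
      rw [e, this, sub_mul]
      refine (U a).sub_mem ?_ ?_
      · rw [mul_assoc, mul_assoc]
        exact h1 a h _ (ix _ _ (ie _ _ hw))
      · split_ifs
        · rw [neg_mul]; exact (U a).neg_mem (hle (ie _ _ hw))
        · exact hle (ie _ _ hw)
        · simp
    · intro l hl hal u hu
      obtain ⟨w, hw, w', hw', rfl⟩ := h2 a h u hu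
      rw [mul_add]
      rcases Nat.lt_or_ge a l with hlt | hge
      · refine (U a).add_mem ?_ (hle (it l hl hlt _ hw'))
        rcases Nat.lt_or_ge (a+1) l with hlt2 | hge2
        · rw [← mul_assoc, H.tautau l hl a h (Or.inr hlt2), mul_assoc]
          exact h1 a h _ (it l hl hlt _ hw)
        · obtain rfl : l = a + 1 := by omega
          obtain ⟨v, hv, v', hv', rfl⟩ := h2 (a+1) hl w hw
          have hle2 := h0 (a+1) (by omega)
          rw [mul_add, mul_add]
          refine (U a).add_mem ?_ ?_
          · rw [hsum v, Finset.mul_sum, Finset.mul_sum, Finset.mul_sum]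
            refine Submodule.sum_mem _ fun ν _ => ?_
            have := H.braid a hl ν
            rw [sub_mul, sub_eq_iff_eq_add] at this
            have e : θ (a+1) hl * (θ a h * (θ (a+1) hl * (ε ν * v))) =
              (θ (a+1) hl * θ a h * θ (a+1) hl * ε ν) * v := by simp only [mul_assoc]
            have iv : ε ν * v ∈ U (a+2) := (ihs (d-1) (by omega) (a+2) (by omega)).1 _ _ hv
            rw [e, this, add_mul]
            refine (U a).add_mem ?_ ?_
            · split_ifs
              · rw [mul_assoc]
                exact hle (Qdiff_stable C _ _ _ (ix _) (ix _) (ix _) _ (hle2 iv))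
              · simp
            · simp only [mul_assoc]
              exact h1 a h _ (h1 (a+1) hl _ (h3 a h (by omega) _ iv))
          · exact hle (h1 (a+1) hl _ (h3 a h (by omega) _ hv'))
      · obtain rfl : l = a := by omega
        refine (U l).add_mem ?_ (h1 l h _ hw')
        rw [hsum w, Finset.mul_sum, Finset.mul_sum]
        refine Submodule.sum_mem _ fun ν _ => ?_
        have := H.tausq l h ν
        have e : θ l hl * (θ l h * (ε ν * w)) = θ l h ^ 2 * ε ν * w := by
          simp only [pow_two, mul_assoc]
        rw [e, this, mul_assoc]
        exact hle (Qel_stable C _ _ _ (ix _) (ix _) _ (ie _ _ hw))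
end
end KLR

set_option linter.unusedSectionVars false

namespace KLR
variable {k : Type} [Field k] {I : Type} [Fintype I] [DecidableEq I] (C : CartanDatum k I)

theorem up_e {n : ℕ} (ν : Fin n → I) : up C n (Ee C ν) = ∑ i, Ee C (Fin.snoc ν i : Fin (n+1) → I) :=
  liftA_e _ _
theorem up_x {n : ℕ} (a : Fin n) : up C n (Xx C a) = Xx C a.castSucc := liftA_x _ _
theorem up_t {n : ℕ} (l : ℕ) (h : l + 1 < n) : up C n (Tt C l h) = Tt C l (Nat.lt_succ_of_lt h) :=
  liftA_t _ _ _

/-- The element `τ_a ⋯ τ_{n-1}` of `R(n+1)`. -/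
noncomputable def TT : (n : ℕ) → ℕ → Alg C (n+1)
  | 0, _ => 1
  | n+1, a => if a ≤ n then up C (n+1) (TT n a) * Tt C n (Nat.lt_succ_self _) else 1

theorem TT_ge (n a : ℕ) (h : n ≤ a) : TT C n a = 1 := by
  cases n with
  | zero => rfl
  | succ n => rw [TT, if_neg (by omega)]

theorem TT_succ (n a : ℕ) (h : a ≤ n) :
    TT C (n+1) a = up C (n+1) (TT C n a) * Tt C n (Nat.lt_succ_self _) := by
  rw [TT, if_pos h]

theorem TT_left (n : ℕ) : ∀ (a : ℕ) (h : a + 1 < n + 1), Tt C a h * TT C n (a+1) = TT C n a := by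
  induction n with
  | zero => intro a h; omega
  | succ n ih =>
    intro a h
    rw [TT_succ C n a (by omega)]
    rcases Nat.lt_or_ge a n with h1 | h1
    · rw [TT_succ C n (a+1) (by omega), ← ih a (by omega), map_mul, up_t, mul_assoc]
    · obtain rfl : a = n := by omega
      rw [TT_ge C (a+1) (a+1) le_rfl, TT_ge C a a le_rfl, map_one, one_mul, mul_one]

theorem TT_comm (n : ℕ) : ∀ (a b : ℕ) (h : a + 1 < n + 1), a + 1 < b → b ≤ n →
    Tt C a h * TT C n b = TT C n b * Tt C a h := by
  induction n with
  | zero => intro a b h; omega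
  | succ n ih =>
    intro a b h hab hb
    rcases Nat.lt_or_ge b (n+1) with h1 | h1
    · rw [TT_succ C n b (by omega)]
      have e : Tt C a h = up C (n+1) (Tt C a (by omega)) := (up_t C a _).symm
      rw [mul_assoc, (isRep_alg C (n+2)).tautau n (Nat.lt_succ_self _) a h (by omega), ← mul_assoc,
        ← mul_assoc, e, ← map_mul, ← map_mul, ih a b _ hab (by omega)]
    · rw [TT_ge C _ _ h1, one_mul, mul_one]

/-- The idempotent of all sequences ending in `j`. -/
noncomputable def Er (n : ℕ) (j : I) : Alg C (n+1) := ∑ ν : Fin n → I, Ee C (Fin.snoc ν j : Fin (n+1) → I)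

theorem snoc_inj {n : ℕ} {ν ν' : Fin n → I} {i j : I} :
    (Fin.snoc ν i : Fin (n+1) → I) = Fin.snoc ν' j ↔ ν = ν' ∧ i = j := by
  constructor
  · intro h
    refine ⟨?_, ?_⟩
    · funext a
      have := congr_fun h a.castSucc
      simpa only [Fin.snoc_castSucc] using this
    · have := congr_fun h (Fin.last n)
      simpa only [Fin.snoc_last] using this
  · rintro ⟨rfl, rfl⟩; rfl

theorem up_e_Er {n : ℕ} (ν : Fin n → I) (j : I) : up C n (Ee C ν) * Er C n j = Ee C (Fin.snoc ν j) := by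
  rw [up_e, Er, Finset.sum_mul]
  simp only [Finset.mul_sum, (isRep_alg C (n+1)).ee, snoc_inj]
  rw [Finset.sum_eq_single j]
  · simp
  · intro b _ hb; simp [hb]
  · simp

theorem Er_up_e {n : ℕ} (ν : Fin n → I) (j : I) : Er C n j * up C n (Ee C ν) = Ee C (Fin.snoc ν j) := by
  rw [up_e, Er, Finset.sum_mul]
  simp only [Finset.mul_sum, (isRep_alg C (n+1)).ee, snoc_inj]
  rw [Finset.sum_comm, Finset.sum_eq_single j]
  · simp
  · intro b _ hb; simp [hb.symm]
  · simp

theorem Er_mul {n : ℕ} (i j : I) : Er C n i * Er C n j = if i = j then Er C n i else 0 := by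
  rw [Er, Er, Finset.sum_mul]
  simp only [Finset.mul_sum, (isRep_alg C (n+1)).ee, snoc_inj]
  by_cases h : i = j <;> simp [h, Er]

theorem Er_sum (n : ℕ) : ∑ j, Er C n j = 1 := by
  rw [← (isRep_alg C (n+1)).esum, ← sum_snoc, Finset.sum_comm]; rfl

theorem Er_x {n : ℕ} (a : Fin (n+1)) (j : I) : Xx C a * Er C n j = Er C n j * Xx C a := by
  simp only [Er, Finset.sum_mul, Finset.mul_sum, (isRep_alg C (n+1)).xe]

theorem Er_up {n : ℕ} (j : I) (r : Alg C n) : up C n r * Er C n j = Er C n j * up C n r := by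
  induction r using alg_induction with
  | hc c => rw [AlgHom.commutes, Algebra.commutes]
  | he ν => rw [up_e_Er, Er_up_e]
  | hx a => rw [up_x, Er_x]
  | ht l h =>
    rw [up_t]
    simp only [Er, Finset.sum_mul, Finset.mul_sum, (isRep_alg C (n+1)).taue]
    refine Fintype.sum_equiv (Equiv.arrowCongr (fs l h) (Equiv.refl I)) _ _ ?_
    intro ν
    congr 2
    rw [← snoc_comp_swap l h]
    rfl
  | hm a b ha hb => rw [map_mul, mul_assoc, hb, ← mul_assoc, ha, mul_assoc]
  | ha a b ha hb => rw [map_add, add_mul, mul_add, ha, hb]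

theorem Xn_up {n : ℕ} (r : Alg C n) : Xx C (Fin.last n) * up C n r = up C n r * Xx C (Fin.last n) := by
  induction r using alg_induction with
  | hc c => rw [AlgHom.commutes, Algebra.commutes]
  | he ν => rw [up_e]; simp only [Finset.sum_mul, Finset.mul_sum, (isRep_alg C (n+1)).xe]
  | hx a => rw [up_x, (isRep_alg C (n+1)).xx]
  | ht l h =>
    have H := isRep_alg C (n+1)
    rw [up_t]
    have : ∀ z : Alg C (n+1), z = ∑ ν, z * Ee C ν := fun z => by rw [← Finset.mul_sum, H.esum, mul_one]
    rw [this (Xx C (Fin.last n) * _), this (Tt C l _ * _)]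
    refine Finset.sum_congr rfl fun ν _ => ?_
    have := H.taux l (Nat.lt_succ_of_lt h) (Fin.last n) ν
    have e1 : Fin.last n ≠ ⟨l, by omega⟩ := by simp [Fin.ext_iff]; omega
    have e2 : Fin.last n ≠ ⟨l+1, by omega⟩ := by simp [Fin.ext_iff]; omega
    rw [Equiv.swap_apply_of_ne_of_ne e1 e2, if_neg (fun h => e1 h.1), if_neg (fun h => e2 h.1), sub_mul,
      sub_eq_zero] at this
    exact this.symm
  | hm a b ha hb => rw [map_mul, ← mul_assoc, ha, mul_assoc, hb, mul_assoc]
  | ha a b ha hb => rw [map_add, add_mul, mul_add, ha, hb]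

/-- `x_n^c r e(j)`. -/
noncomputable def Pm (n : ℕ) (j : I) (c : ℕ) (r : Alg C n) : Alg C (n+1) :=
  Xx C (Fin.last n) ^ c * (up C n r * Er C n j)

theorem Xnp_up {n : ℕ} (c : ℕ) (r : Alg C n) :
    up C n r * Xx C (Fin.last n) ^ c = Xx C (Fin.last n) ^ c * up C n r :=
  ((show Commute (up C n r) (Xx C (Fin.last n)) from (Xn_up C r).symm).pow_right c).eq

theorem Xnp_Er {n : ℕ} (c : ℕ) (a : Fin (n+1)) (j : I) :
    Er C n j * Xx C a ^ c = Xx C a ^ c * Er C n j :=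
  ((show Commute (Er C n j) (Xx C a) from (Er_x C a j).symm).pow_right c).eq

theorem up_Pm {n : ℕ} (j : I) (c : ℕ) (r s : Alg C n) : up C n s * Pm C n j c r = Pm C n j c (s * r) := by
  rw [Pm, Pm, map_mul, ← mul_assoc, Xnp_up, mul_assoc, ← mul_assoc (up C n s)]

theorem Xn_Pm {n : ℕ} (j : I) (c : ℕ) (r : Alg C n) : Xx C (Fin.last n) * Pm C n j c r = Pm C n j (c+1) r := by
  rw [Pm, Pm, ← mul_assoc, pow_succ']

theorem Er_Pm {n : ℕ} (i j : I) (c : ℕ) (r : Alg C n) :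
    Er C n i * Pm C n j c r = if i = j then Pm C n j c r else 0 := by
  rw [Pm, ← mul_assoc, Xnp_Er, mul_assoc, ← mul_assoc (Er C n i), ← Er_up, mul_assoc, Er_mul]
  split_ifs with h
  · rw [h]
  · simp

/-- The filtration used in the spanning argument. -/
noncomputable def Uf (n : ℕ) (j : I) (a : ℕ) : Submodule k (Alg C (n+1)) :=
  Submodule.span k {z | ∃ (b c : ℕ) (r : Alg C n), a ≤ b ∧ b ≤ n ∧ z = TT C n b * Pm C n j c r}

theorem Uf_left {n : ℕ} {j : I} {a : ℕ} (g : Alg C (n+1)) (S : Submodule k (Alg C (n+1)))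
    (h : ∀ b c r, a ≤ b → b ≤ n → g * (TT C n b * Pm C n j c r) ∈ S) : ∀ u ∈ Uf C n j a, g * u ∈ S := by
  intro u hu
  induction hu using Submodule.span_induction with
  | mem x hx => obtain ⟨b, c, r, h1, h2, rfl⟩ := hx; exact h b c r h1 h2
  | zero => rw [mul_zero]; exact S.zero_mem
  | add x y _ _ hx hy => rw [mul_add]; exact S.add_mem hx hy
  | smul c x _ hx => rw [mul_smul_comm]; exact S.smul_mem _ hx

theorem Uf_mem {n : ℕ} {j : I} {a : ℕ} (b c : ℕ) (r : Alg C n) (h1 : a ≤ b) (h2 : b ≤ n) :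
    TT C n b * Pm C n j c r ∈ Uf C n j a := Submodule.subset_span ⟨b, c, r, h1, h2, rfl⟩

theorem Uf_stable (n : ℕ) (j : I) : ∀ d a, a + d = n →
    (∀ ν, ∀ u ∈ Uf C n j a, Ee C ν * u ∈ Uf C n j a) ∧ (∀ m, ∀ u ∈ Uf C n j a, Xx C m * u ∈ Uf C n j a) ∧
      ∀ l (h : l + 1 < n + 1), a ≤ l → ∀ u ∈ Uf C n j a, Tt C l h * u ∈ Uf C n j a := by
  have hup : ∀ (s : Alg C n), ∀ u ∈ Uf C n j n, up C n s * u ∈ Uf C n j n := by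
    intro s
    apply Uf_left
    intro b c r h1 h2
    rw [TT_ge C n b h1, one_mul, up_Pm, ← one_mul (Pm C n j c _), ← TT_ge C n b h1]
    exact Uf_mem C _ _ _ h1 h2
  have hEr : ∀ (i : I), ∀ u ∈ Uf C n j n, Er C n i * u ∈ Uf C n j n := by
    intro i
    apply Uf_left
    intro b c r h1 h2
    rw [TT_ge C n b h1, one_mul, Er_Pm]
    split_ifs
    · rw [← one_mul (Pm C n j c _), ← TT_ge C n b h1]
      exact Uf_mem C _ _ _ h1 h2
    · exact Submodule.zero_mem _
  have hτ : ∀ a (h : a + 1 < n + 1), ∀ b c r (h1 : a + 2 ≤ b) (h2 : b ≤ n),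
      Tt C a h * (TT C n b * Pm C n j c r) = TT C n b * Pm C n j c (Tt C a (by omega) * r) := by
    intro a h b c r h1 h2
    rw [← mul_assoc, TT_comm C n a b h (by omega) h2, mul_assoc, ← up_Pm, up_t]
  apply stable_abs C (isRep_alg C (n+1))
  · intro a ha
    apply Submodule.span_mono
    rintro z ⟨b, c, r, h1, h2, rfl⟩
    exact ⟨b, c, r, by omega, h2, rfl⟩
  · intro a h
    apply Uf_left
    intro b c r h1 h2
    rcases Nat.lt_or_ge (a+1) b with h3 | h3
    · rw [hτ a h b c r h3 h2]
      exact Uf_mem C _ _ _ (by omega) h2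
    · obtain rfl : b = a + 1 := by omega
      rw [← mul_assoc, TT_left]
      exact Uf_mem C _ _ _ (by omega) (by omega)
  · intro a h u hu
    induction hu using Submodule.span_induction with
    | mem x hx =>
      obtain ⟨b, c, r, h1, h2, rfl⟩ := hx
      rcases Nat.lt_or_ge a b with h3 | h3
      · exact ⟨0, Submodule.zero_mem _, _, Uf_mem C b c r h3 h2, by rw [mul_zero, zero_add]⟩
      · obtain rfl : b = a := by omega
        exact ⟨_, Uf_mem C (b+1) c r le_rfl (by omega), 0, Submodule.zero_mem _, by
          rw [add_zero, ← mul_assoc, TT_left]⟩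
    | zero => exact ⟨0, Submodule.zero_mem _, 0, Submodule.zero_mem _, by rw [mul_zero, zero_add]⟩
    | add x y _ _ hx hy =>
      obtain ⟨w, hw, w', hw', rfl⟩ := hx
      obtain ⟨v, hv, v', hv', rfl⟩ := hy
      exact ⟨_, Submodule.add_mem _ hw hv, _, Submodule.add_mem _ hw' hv', by rw [mul_add]; abel⟩
    | smul c x _ hx =>
      obtain ⟨w, hw, w', hw', rfl⟩ := hx
      exact ⟨_, Submodule.smul_mem _ c hw, _, Submodule.smul_mem _ c hw', by rw [smul_add, mul_smul_comm]⟩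
  · intro a h ha
    apply Uf_left
    intro b c r h1 h2
    rw [hτ a h b c r h1 h2]
    exact Uf_mem C _ _ _ h1 h2
  · intro ν u hu
    have e : ν = Fin.snoc (Fin.init ν) (ν (Fin.last n)) := (Fin.snoc_init_self ν).symm
    rw [e, ← up_e_Er, mul_assoc]
    exact hup _ _ (hEr _ _ hu)
  · intro m
    refine Fin.lastCases ?_ (fun a => ?_) m
    · apply Uf_left
      intro b c r h1 h2
      rw [TT_ge C n b h1, one_mul, Xn_Pm, ← one_mul (Pm C n j _ _), ← TT_ge C n b h1]
      exact Uf_mem C _ _ _ h1 h2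
    · intro u hu
      rw [← up_x]
      exact hup _ _ hu

/-- The map whose bijectivity onto `R(n+1) e(j)` is the right basis theorem. -/
noncomputable def Dm (n : ℕ) (j : I) : (Fin (n+1) × ℕ →₀ Alg C n) →ₗ[k] Alg C (n+1) :=
  Finsupp.lsum k fun q => (LinearMap.mulLeft k (TT C n q.1 * Xx C (Fin.last n) ^ q.2)).comp
    ((LinearMap.mulRight k (Er C n j)).comp (up C n).toLinearMap)

theorem Dm_single (n : ℕ) (j : I) (q) (r) : Dm C n j (Finsupp.single q r) =
    TT C n q.1 * Xx C (Fin.last n) ^ q.2 * (up C n r * Er C n j) := by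
  simp [Dm, mul_assoc]

theorem Dm_apply (n : ℕ) (j : I) (f) : Dm C n j f =
    f.sum fun q r => TT C n q.1 * Xx C (Fin.last n) ^ q.2 * (up C n r * Er C n j) := by
  rfl

theorem span_R (n : ℕ) (j : I) (z : Alg C (n+1)) : ∃ f, z * Er C n j = Dm C n j f := by
  have h1 : Uf C n j 0 ≤ LinearMap.range (Dm C n j) := by
    apply Submodule.span_le.2
    rintro z ⟨b, c, r, -, h2, rfl⟩
    exact ⟨Finsupp.single (⟨b, by omega⟩, c) r, by rw [Dm_single, Pm, mul_assoc]⟩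
  have h2 : ∀ u ∈ Uf C n j 0, z * u ∈ Uf C n j 0 := by
    obtain ⟨he, hx, ht⟩ := Uf_stable C n j n 0 (by omega)
    induction z using alg_induction with
    | hc c => intro u hu; rw [← Algebra.smul_def]; exact Submodule.smul_mem _ _ hu
    | he ν => exact he ν
    | hx a => exact hx a
    | ht l h => exact ht l h (Nat.zero_le _)
    | hm a b ha hb => intro u hu; rw [mul_assoc]; exact ha _ (hb _ hu)
    | ha a b ha hb => intro u hu; rw [add_mul]; exact Submodule.add_mem _ (ha _ hu) (hb _ hu)
  have h3 : Er C n j ∈ Uf C n j 0 := by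
    have : TT C n n * Pm C n j 0 1 = Er C n j := by
      rw [TT_ge C n n le_rfl, Pm, pow_zero, map_one, one_mul, one_mul, one_mul]
    rw [← this]
    exact Uf_mem C _ _ _ (by omega) le_rfl
  obtain ⟨f, hf⟩ := h1 (h2 _ h3)
  exact ⟨f, hf.symm⟩

end KLR

set_option linter.unusedSectionVars false

namespace KLR
variable {k : Type} [Field k] {I : Type} [Fintype I] [DecidableEq I] (C : CartanDatum k I)

theorem rho_e {n : ℕ} (ν : Fin n → I) : rho C n (Ee C ν) = eOp k ν := liftA_e _ _
theorem rho_x {n : ℕ} (a : Fin n) : rho C n (Xx C a) = kOp k I n (xv k a) := liftA_x _ _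
theorem rho_t {n : ℕ} (l : ℕ) (h : l + 1 < n) : rho C n (Tt C l h) = tauOp C l h := liftA_t _ _ _

theorem kOp_kOp {n : ℕ} (f g : KK k) (F : VV k I n) : kOp k I n f (kOp k I n g F) = kOp k I n (f * g) F := by
  rw [map_mul]; rfl

/-- Symmetric scalars commute with everything. -/
theorem rho_kOp {n : ℕ} (p : KK k) (hp : ∀ l, l + 1 < n → sw k l p = p) (r : Alg C n) :
    ∀ F, rho C n r (kOp k I n p F) = kOp k I n p (rho C n r F) := by
  induction r using alg_induction with
  | hc c => intro F; rw [AlgHom.commutes, Module.algebraMap_end_apply, Module.algebraMap_end_apply, map_smul]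
  | he ν =>
    intro F
    rw [rho_e]
    funext μ
    simp only [eOp_apply, kOp_apply, mul_ite, mul_zero]
  | hx a => intro F; rw [rho_x, kOp_kOp, kOp_kOp, mul_comm]
  | ht l h =>
    intro F
    rw [rho_t]
    funext μ
    simp only [tauOp_apply, kOp_apply, map_mul, hp l h]
    ring
  | hm a b ha hb => intro F; rw [map_mul, Module.End.mul_apply, Module.End.mul_apply, hb, ha]
  | ha a b ha hb => intro F; rw [map_add, LinearMap.add_apply, LinearMap.add_apply, ha, hb, map_add]

theorem sw_fix {l b : ℕ} (h : l + 1 < b ∨ b < l) (c : ℕ) : sw k l (xv k b ^ c) = xv k b ^ c := by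
  rw [map_pow, sw_xv, Equiv.swap_apply_of_ne_of_ne] <;> omega

theorem tau_shift {n : ℕ} (a : ℕ) (h : a + 1 < n) (b : ℕ) (hb : a + 1 < b) (c : ℕ) (F : VV k I n) :
    tauOp C a h (kOp k I n (xv k b ^ c) F) = kOp k I n (xv k b ^ c) (tauOp C a h F) := by
  funext μ
  simp only [tauOp_apply, kOp_apply, map_mul, sw_fix (Or.inl hb)]
  ring

theorem artin1 (n : ℕ) : ∀ d a, a + d = n → ∃ H : ℕ → VV k I (n+1) → VV k I (n+1),
    (∀ c G, rho C (n+1) (TT C n a) (kOp k I (n+1) (xv k n ^ c) G) =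
      ∑ b ∈ Finset.Icc a n, kOp k I (n+1) (xv k b ^ c) (H b G)) ∧ (∀ b, H b 0 = 0) ∧
      ∀ G, H a G = 0 → G = 0 := by
  intro d
  induction d with
  | zero =>
    intro a ha
    obtain rfl : a = n := by omega
    refine ⟨fun _ G => G, ?_, fun _ => rfl, fun _ h => h⟩
    intro c G
    rw [TT_ge C a a le_rfl, map_one]
    simp
  | succ d ih =>
    intro a ha
    obtain ⟨H, h1, h2, h3⟩ := ih (a+1) (by omega)
    have hh : a + 1 < n + 1 := by omega
    refine ⟨fun b G => if b = a then fun μ =>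
        Ac C (xv k a) (xv k (a+1)) (μ ⟨a, Nat.lt_of_succ_lt hh⟩) (μ ⟨a + 1, hh⟩) *
          sw k a (H (a+1) G (μ ∘ fs a hh))
      else if b = a + 1 then fun μ =>
        Dc (xv k a) (xv k (a+1)) (μ ⟨a, Nat.lt_of_succ_lt hh⟩) (μ ⟨a + 1, hh⟩) * H (a+1) G μ
      else tauOp C a hh (H b G), ?_, ?_, ?_⟩
    · intro c G
      rw [← TT_left C n a hh, map_mul, Module.End.mul_apply, h1, rho_t, map_sum]
      have e1 : Finset.Icc a n = insert a (Finset.Icc (a+1) n) := by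
        ext x; simp only [Finset.mem_Icc, Finset.mem_insert]; omega
      have e2 : Finset.Icc (a+1) n = insert (a+1) (Finset.Icc (a+2) n) := by
        ext x; simp only [Finset.mem_Icc, Finset.mem_insert]; omega
      rw [e1, Finset.sum_insert (by simp), e2, Finset.sum_insert (by simp), Finset.sum_insert (by simp),
        ← add_assoc]
      congr 1
      · funext μ
        have e3 : sw k a (xv k (a+1) ^ c) = xv k a ^ c := by rw [map_pow, sw_xv, Equiv.swap_apply_right]
        beta_reduce
        rw [if_pos rfl, if_neg (by omega), if_pos rfl]
        simp only [tauOp_apply, kOp_apply, map_mul, e3, Pi.add_apply]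
        ring
      · refine Finset.sum_congr rfl fun b hb => ?_
        rw [Finset.mem_Icc] at hb
        rw [tau_shift C a hh b (by omega)]
        beta_reduce
        rw [if_neg (by omega), if_neg (by omega)]
    · intro b
      simp only [h2, map_zero, Pi.zero_apply, mul_zero]
      split_ifs <;> rfl
    · intro G hG
      apply h3
      funext μ
      beta_reduce at hG
      rw [if_pos rfl] at hG
      have := congr_fun hG (μ ∘ fs a hh)
      have e : (μ ∘ fs a hh) ∘ fs a hh = μ := by
        funext x; simp [fs]
      simp only [e, Pi.zero_apply, mul_eq_zero, Ac_ne_zero, false_or] at this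
      simpa using this

theorem artin2 (n : ℕ) (G : ℕ → VV k I (n+1))
    (h : ∀ c, ∑ a ∈ Finset.range (n+1), rho C (n+1) (TT C n a) (kOp k I (n+1) (xv k n ^ c) (G a)) = 0) :
    ∀ a ≤ n, G a = 0 := by
  have hH := fun a (ha : a ≤ n) => artin1 C n (n - a) a (by omega)
  choose! H h1 h2 h3 using hH
  have key : ∀ c, ∑ b ∈ Finset.range (n+1), kOp k I (n+1) (xv k b ^ c)
      (∑ a ∈ Finset.range (b+1), H a b (G a)) = 0 := by
    intro c
    rw [← h c]
    simp only [map_sum]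
    rw [Finset.sum_sigma', Finset.sum_congr rfl (g := fun a => ∑ b ∈ Finset.Icc a n, kOp k I (n+1) (xv k b ^ c) (H a b (G a)))
      (fun a ha => h1 a (by simpa [Nat.lt_succ_iff] using ha) c (G a)), Finset.sum_sigma']
    refine Finset.sum_bij' (fun x _ => ⟨x.2, x.1⟩) (fun x _ => ⟨x.2, x.1⟩) ?_ ?_ ?_ ?_ ?_ <;>
      simp <;> omega
  have key2 : ∀ b ≤ n, ∑ a ∈ Finset.range (b+1), H a b (G a) = 0 := by
    intro b hb
    funext μ
    have := Matrix.eq_zero_of_forall_pow_sum_mul_pow_eq_zero (n := n+1) (f := fun b => xv k b)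
      (v := fun b => (∑ a ∈ Finset.range ((b:ℕ)+1), H a b (G a)) μ) (fun a b hab => Fin.ext (xv_injective hab))
      (fun c => by
        have := congr_fun (key c) μ
        rw [Finset.sum_apply, Finset.sum_range] at this
        rw [Pi.zero_apply] at this
        rw [← this]
        refine Finset.sum_congr rfl fun b _ => ?_
        rw [kOp_apply, mul_comm])
    exact congr_fun this ⟨b, by omega⟩
  intro a
  induction a using Nat.strong_induction_on with
  | _ a ih =>
    intro ha
    apply h3 a ha
    have := key2 a ha
    rw [Finset.sum_range_succ, Finset.sum_eq_zero, zero_add] at this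
    · exact this
    · intro b hb
      rw [Finset.mem_range] at hb
      rw [ih b hb (by omega), h2 b (by omega)]

/-- Extension of a function by `δ_j` in the last entry. -/
noncomputable def extj {n : ℕ} (j : I) (F : VV k I n) : VV k I (n+1) :=
  fun μ => if μ (Fin.last n) = j then F (Fin.init μ) else 0

theorem extj_kOp {n : ℕ} (j : I) (f : KK k) (F : VV k I n) :
    extj j (kOp k I n f F) = kOp k I (n+1) f (extj j F) := by
  funext μ
  simp only [extj, kOp_apply, mul_ite, mul_zero]

theorem rho_up {n : ℕ} (j : I) (r : Alg C n) : ∀ F, rho C (n+1) (up C n r) (extj j F) =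
    extj j (rho C n r F) := by
  induction r using alg_induction with
  | hc c =>
    intro F; rw [AlgHom.commutes, AlgHom.commutes, AlgHom.commutes, Module.algebraMap_end_apply, Module.algebraMap_end_apply]
    funext μ
    simp [extj]
  | he ν =>
    intro F
    rw [up_e, map_sum, LinearMap.sum_apply, rho_e]
    simp only [rho_e]
    funext μ
    simp only [Finset.sum_apply, eOp_apply, extj]
    have : ∀ i, (μ = Fin.snoc ν i ↔ Fin.init μ = ν ∧ μ (Fin.last n) = i) := by
      intro i
      rw [← snoc_inj, Fin.snoc_init_self]
    simp only [this]
    by_cases h : Fin.init μ = ν <;> simp [h]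
  | hx a => intro F; rw [up_x, rho_x, rho_x, extj_kOp]; rfl
  | ht l h =>
    intro F
    rw [up_t, rho_t, rho_t]
    funext μ
    simp only [tauOp_apply, extj]
    have e1 : Fin.last n ≠ ⟨l, by omega⟩ := by simp [Fin.ext_iff]; omega
    have e2 : Fin.last n ≠ ⟨l+1, by omega⟩ := by simp [Fin.ext_iff]; omega
    have e3 : (μ ∘ fs l (Nat.lt_succ_of_lt h)) (Fin.last n) = μ (Fin.last n) := by
      rw [Function.comp_apply, fs, Equiv.swap_apply_of_ne_of_ne e1 e2]
    have e4 : Fin.init (μ ∘ fs l (Nat.lt_succ_of_lt h)) = Fin.init μ ∘ fs l h := by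
      funext a
      simp only [Fin.init, Function.comp_apply, fs, Equiv.swap_apply_def, Fin.ext_iff, Fin.val_castSucc]
      split_ifs <;> rfl
    rw [e3, e4]
    by_cases hj : μ (Fin.last n) = j
    · simp only [hj, if_true]; rfl
    · simp [hj]
  | hm a b ha hb => intro F; rw [map_mul, map_mul, map_mul, Module.End.mul_apply, Module.End.mul_apply, hb, ha]
  | ha a b ha hb =>
    intro F
    rw [map_add, map_add, map_add, LinearMap.add_apply, LinearMap.add_apply, ha, hb]
    funext μ
    simp only [extj, Pi.add_apply]
    split_ifs <;> simp

theorem rho_Er {n : ℕ} (j : I) (F : VV k I n) : rho C (n+1) (Er C n j) (extj j F) = extj j F := by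
  have := rho_up C j 1 F
  rw [map_one, map_one, map_one, Module.End.one_apply] at this
  funext μ
  rw [Er, map_sum, LinearMap.sum_apply]
  simp only [rho_e, Finset.sum_apply, eOp_apply, extj]
  have : ∀ ν, (μ = Fin.snoc ν j ↔ Fin.init μ = ν ∧ μ (Fin.last n) = j) := by
    intro i
    rw [← snoc_inj, Fin.snoc_init_self]
  simp only [this]
  by_cases h : μ (Fin.last n) = j <;> simp [h]

theorem alg_zero (z : Alg C 0) : ∃ c : k, z = algebraMap k _ c := by
  induction z using alg_induction with
  | hc c => exact ⟨c, rfl⟩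
  | he ν =>
    refine ⟨1, ?_⟩
    have := (isRep_alg C 0).esum
    rw [Fintype.sum_eq_single ν (fun x h => absurd (Subsingleton.elim x ν) h)] at this
    rw [this, map_one]
  | hx a => exact a.elim0
  | ht l h => omega
  | hm a b ha hb =>
    obtain ⟨c, rfl⟩ := ha
    obtain ⟨d, rfl⟩ := hb
    exact ⟨c * d, (map_mul _ _ _).symm⟩
  | ha a b ha hb =>
    obtain ⟨c, rfl⟩ := ha
    obtain ⟨d, rfl⟩ := hb
    exact ⟨c + d, (map_add _ _ _).symm⟩

theorem Dm_sum (n : ℕ) (j : I) (f : Fin (n+1) × ℕ →₀ Alg C n) (B : Finset ℕ)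
    (hB : ∀ q ∈ f.support, q.2 ∈ B) : Dm C n j f = ∑ a : Fin (n+1), ∑ b ∈ B,
      TT C n a * Xx C (Fin.last n) ^ b * (up C n (f (a, b)) * Er C n j) := by
  rw [Dm_apply, Finsupp.sum_of_support_subset f (s := Finset.univ ×ˢ B), Finset.sum_product]
  · intro q hq; simp [hB q hq]
  · intro q _; simp

theorem Dm_act (n : ℕ) (j : I) (f : Fin (n+1) × ℕ →₀ Alg C n) (B : Finset ℕ)
    (hB : ∀ q ∈ f.support, q.2 ∈ B) (p : KK k) (hp : ∀ l, l + 1 < n + 1 → sw k l p = p)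
    (c : ℕ) (F : VV k I n) :
    kOp k I (n+1) p (rho C (n+1) (Dm C n j f) (kOp k I (n+1) (xv k n ^ c) (extj j F))) =
    ∑ a : Fin (n+1), rho C (n+1) (TT C n a) (kOp k I (n+1) (xv k n ^ c) (extj j
      (∑ b ∈ B, kOp k I n (xv k n ^ b * p) (rho C n (f (a, b)) F)))) := by
  have hadd : ∀ (s : Finset ℕ) (G : ℕ → VV k I n), extj j (∑ b ∈ s, G b) = ∑ b ∈ s, extj j (G b) := by
    intro s G
    funext μ
    simp only [extj, Finset.sum_apply]
    split_ifs <;> simp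
  have hx : ∀ c, rho C (n+1) (Xx C (Fin.last n) ^ c) = kOp k I (n+1) (xv k n ^ c) := by
    intro c; rw [map_pow, rho_x, map_pow]; rfl
  rw [Dm_sum C n j f B hB]
  simp only [map_sum, LinearMap.sum_apply, hadd]
  refine Finset.sum_congr rfl fun a _ => Finset.sum_congr rfl fun b _ => ?_
  have h1 : rho C (n+1) (TT C n a * Xx C (Fin.last n) ^ b * (up C n (f (a, b)) * Er C n j))
      (kOp k I (n+1) (xv k n ^ c) (extj j F)) = rho C (n+1) (TT C n a) (kOp k I (n+1) (xv k n ^ b)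
        (kOp k I (n+1) (xv k n ^ c) (extj j (rho C n (f (a, b)) F)))) := by
    rw [map_mul, map_mul, map_mul, Module.End.mul_apply, Module.End.mul_apply,
      Module.End.mul_apply, hx, ← rho_up]
    congr 2
    rw [← extj_kOp, rho_Er, extj_kOp, ← hx, ← Module.End.mul_apply, ← Module.End.mul_apply, ← map_mul,
      ← map_mul, Xnp_up]
  rw [h1, ← rho_kOp C p hp, extj_kOp]
  congr 1
  simp only [kOp_kOp]
  congr 2
  ring

theorem faithful (n : ℕ) : ∀ (ι : Type) (p : ι → KK k), (∀ s l, l + 1 < n → sw k l (p s) = p s) →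
    LinearIndependent k (fun q : (Fin n → ℕ) × ι => (∏ i : Fin n, xv k (i : ℕ) ^ q.1 i) * p q.2) →
    ∀ (S : Finset ι) (r : ι → Alg C n), (∀ F, ∑ s ∈ S, kOp k I n (p s) (rho C n (r s) F) = 0) →
    ∀ s ∈ S, r s = 0 := by
  induction n with
  | zero =>
    intro ι p _ hli S r h s hs
    choose c hc using fun s => alg_zero C (r s)
    have h1 := congr_fun (h fun _ => 1) Fin.elim0
    have h2 : LinearIndependent k p := by
      have := hli.comp (fun s => (Fin.elim0, s)) (fun a b hab => (Prod.ext_iff.1 hab).2)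
      simpa [Function.comp_def] using this
    have h3 : ∑ s ∈ S, c s • p s = 0 := by
      rw [Finset.sum_apply, Pi.zero_apply] at h1
      rw [← h1]
      refine Finset.sum_congr rfl fun s _ => ?_
      rw [kOp_apply, hc s, AlgHom.commutes, Module.algebraMap_end_apply, Pi.smul_apply, mul_smul_comm, mul_one]
    rw [hc s, linearIndependent_iff'.1 h2 S c h3 s hs, map_zero]
  | succ n ih =>
    intro ι p hp hli S r h
    suffices hs : ∀ j, ∀ s ∈ S, r s * Er C n j = 0 by
      intro s hs'
      rw [← mul_one (r s), ← Er_sum, Finset.mul_sum]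
      exact Finset.sum_eq_zero fun j _ => hs j s hs'
    intro j
    choose f hf using fun s => span_R C n j (r s)
    classical
    let B : Finset ℕ := S.biUnion fun s => (f s).support.image Prod.snd
    have hB : ∀ s ∈ S, ∀ q ∈ (f s).support, q.2 ∈ B := by
      intro s hs q hq
      exact Finset.mem_biUnion.2 ⟨s, hs, Finset.mem_image_of_mem _ hq⟩
    have hG : ∀ (a : Fin (n+1)) (F : VV k I n), ∑ q ∈ B ×ˢ S,
        kOp k I n (xv k n ^ q.1 * p q.2) (rho C n (f q.2 (a, q.1)) F) = 0 := by
      intro a F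
      have h1 := artin2 C n (fun a => if h : a < n + 1 then extj j (∑ q ∈ B ×ˢ S,
        kOp k I n (xv k n ^ q.1 * p q.2) (rho C n (f q.2 (⟨a, h⟩, q.1)) F)) else 0) ?_ a (by omega)
      · rw [dif_pos a.2] at h1
        funext μ
        have := congr_fun h1 (Fin.snoc μ j)
        simp only [extj, Fin.snoc_last, if_true, Fin.init_snoc] at this
        exact this
      · intro c
        rw [Finset.sum_range]
        rw [← h (kOp k I (n+1) (xv k n ^ c) (extj j F))]
        have e : ∀ s ∈ S, kOp k I (n+1) (p s) (rho C (n+1) (r s) (kOp k I (n+1) (xv k n ^ c) (extj j F))) =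
          ∑ a : Fin (n+1), rho C (n+1) (TT C n a) (kOp k I (n+1) (xv k n ^ c) (extj j
            (∑ b ∈ B, kOp k I n (xv k n ^ b * p s) (rho C n (f s (a, b)) F)))) := by
          intro s hs
          rw [← Dm_act C n j (f s) B (hB s hs) (p s) (hp s), ← hf s, map_mul, Module.End.mul_apply,
            ← extj_kOp, rho_Er]
        rw [Finset.sum_congr rfl e, Finset.sum_comm]
        refine Finset.sum_congr rfl fun a _ => ?_
        rw [dif_pos a.2, Finset.sum_product_right, ← map_sum, ← map_sum]
        congr 2
        funext μ
        simp only [extj, Finset.sum_apply]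
        split_ifs <;> simp
    have key : ∀ a, ∀ q ∈ B ×ˢ S, f q.2 (a, q.1) = 0 := by
      intro a
      refine ih (ℕ × ι) (fun q => xv k n ^ q.1 * p q.2) ?_ ?_ (B ×ˢ S) (fun q => f q.2 (a, q.1)) (hG a)
      · intro s l hl
        rw [map_mul, hp _ l (by omega), sw_fix (Or.inl hl)]
      · have := hli.comp (fun q : (Fin n → ℕ) × ℕ × ι => ((Fin.snoc q.1 q.2.1 : Fin (n+1) → ℕ), q.2.2)) ?_
        · refine (linearIndependent_equiv' (Equiv.refl _) ?_).1 this
          funext q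
          simp only [Function.comp_apply, Fin.prod_univ_castSucc, Fin.snoc_castSucc, Fin.snoc_last,
            Equiv.refl_apply, Fin.val_castSucc, Fin.val_last, mul_assoc]
        · rintro ⟨a, b, c⟩ ⟨a', b', c'⟩ hab
          simp only [Prod.mk.injEq] at hab
          have h1 := congrArg Fin.init hab.1
          have h2 := congr_fun hab.1 (Fin.last n)
          simp only [Fin.init_snoc, Fin.snoc_last] at h1 h2
          rw [h1, h2, hab.2]
    intro s hs
    rw [hf s, Dm_sum C n j (f s) B (hB s hs)]
    refine Finset.sum_eq_zero fun a _ => Finset.sum_eq_zero fun b hb => ?_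
    rw [key a (b, s) (Finset.mem_product.2 ⟨hb, hs⟩)]
    simp

theorem xmon_li (n : ℕ) :
    LinearIndependent k (fun q : (Fin n → ℕ) × ℕ => (∏ i : Fin n, xv k (i : ℕ) ^ q.1 i) * xv k n ^ q.2) := by
  have h1 := (MvPolynomial.basisMonomials ℕ k).linearIndependent
  have h2 := h1.map' ((IsScalarTower.toAlgHom k (MvPolynomial ℕ k) (KK k)).toLinearMap)
    (LinearMap.ker_eq_bot.2 (IsFractionRing.injective (MvPolynomial ℕ k) (KK k)))
  let g : (Fin n → ℕ) × ℕ → (ℕ →₀ ℕ) := fun q => (∑ i : Fin n, Finsupp.single (i : ℕ) (q.1 i)) + Finsupp.single n q.2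
  have hg1 : ∀ q (i : Fin n), g q i = q.1 i := by
    intro q i
    have : n ≠ i := by omega
    simp [g, Finsupp.finset_sum_apply, Finsupp.single_apply, Fin.val_inj, this]
  have hg2 : ∀ q, g q n = q.2 := by
    intro q
    have : ∀ i : Fin n, (i : ℕ) ≠ n := by intro i; omega
    simp [g, Finsupp.finset_sum_apply, Finsupp.single_apply, this]
  have h3 := h2.comp g (by
    intro q q' h
    refine Prod.ext (funext fun i => ?_) ?_
    · rw [← hg1, h, hg1]
    · rw [← hg2, h, hg2])
  refine (linearIndependent_equiv' (Equiv.refl _) ?_).1 h3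
  funext q
  simp only [Function.comp_apply, Equiv.refl_apply, g, MvPolynomial.coe_basisMonomials, xv, AlgHom.toLinearMap_apply,
    IsScalarTower.coe_toAlgHom', ← map_pow, ← map_prod, ← map_mul]
  congr 1
  rw [← MvPolynomial.prod_X_pow_eq_monomial]
  change _ = Finsupp.prod (((∑ i : Fin n, Finsupp.single (i : ℕ) (q.1 i)) + Finsupp.single n q.2))
    (fun x e => (MvPolynomial.X x : MvPolynomial ℕ k) ^ e)
  rw [Finsupp.prod_add_index' (by simp) (by intros; rw [pow_add])]
  rw [Finsupp.prod_single_index (by simp)]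
  rw [← Finsupp.prod_finset_sum_index (by simp) (by intros; rw [pow_add])]
  simp

theorem Dm_inj (n : ℕ) (j : I) (f) (h : Dm C n j f = 0) : f = 0 := by
  classical
  let B : Finset ℕ := f.support.image Prod.snd
  have hB : ∀ q ∈ f.support, q.2 ∈ B := fun q hq => Finset.mem_image_of_mem _ hq
  ext q : 1
  by_contra hq
  have hq' : q ∈ f.support := Finsupp.mem_support_iff.2 hq
  refine hq (faithful C n ℕ (fun b => xv k n ^ b) (fun s l hl => sw_fix (Or.inl hl) _) (xmon_li n) B
    (fun b => f (q.1, b)) (fun F => ?_) q.2 (hB q hq'))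
  have h1 := artin2 C n (fun a => if h : a < n + 1 then extj j (∑ b ∈ B,
        kOp k I n (xv k n ^ b) (rho C n (f (⟨a, h⟩, b)) F)) else 0) ?_ q.1 (by omega)
  · rw [dif_pos q.1.2] at h1
    funext μ
    have := congr_fun h1 (Fin.snoc μ j)
    simp only [extj, Fin.snoc_last, if_true, Fin.init_snoc] at this
    exact this
  · intro c
    have := Dm_act C n j f B hB 1 (fun l _ => map_one _) c F
    rw [h, map_zero, LinearMap.zero_apply, map_zero] at this
    rw [this, Finset.sum_range]
    refine Finset.sum_congr rfl fun a _ => ?_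
    rw [dif_pos a.2]
    simp only [mul_one]

end KLR

set_option linter.unusedSectionVars false

namespace KLR
open scoped TensorProduct

section abs
variable {k : Type} [Field k] {S B : Type} [Ring S] [Algebra k S] [Ring B] [Algebra k B]

/-- The map `⊕_q S → B`, `f ↦ Σ_q w_q φ(f_q)`. -/
noncomputable def DB {Q : Type} (φ : S →ₙₐ[k] B) (w : Q → B) : (Q →₀ S) →ₗ[k] B :=
  Finsupp.lsum k fun q => (LinearMap.mulLeft k (w q)).comp (φ : S →ₗ[k] B)

theorem DB_single {Q : Type} (φ : S →ₙₐ[k] B) (w : Q → B) (q : Q) (s : S) :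
    DB φ w (Finsupp.single q s) = w q * φ s := by
  simp [DB]

theorem DB_sum {Q : Type} (φ : S →ₙₐ[k] B) (w : Q → B) (f : Q →₀ S) :
    DB φ w f = f.sum fun q s => w q * φ s := rfl

variable {M : Type} [AddCommGroup M] [Module k M] [Module S M] [IsScalarTower k S M]

theorem OT_bal (φ : S →ₙₐ[k] B) (b : B) (r : S) (m : M) :
    OTmk k S B M φ ((b * φ r) ⊗ₜ[k] m) = OTmk k S B M φ (b ⊗ₜ[k] (r • m)) := by
  refine (Submodule.Quotient.eq _).2 ?_
  exact Submodule.subset_span ⟨b, r, m, rfl⟩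

theorem OT_add (φ : S →ₙₐ[k] B) (z z' : B ⊗[k] M) :
    OTmk k S B M φ (z + z') = OTmk k S B M φ z + OTmk k S B M φ z' := rfl

theorem OT_smul (φ : S →ₙₐ[k] B) (b : B) (z : B ⊗[k] M) :
    OTmk k S B M φ (b • z) = b • OTmk k S B M φ z := rfl

variable (M) in
theorem OT_zero (φ : S →ₙₐ[k] B) : OTmk k S B M φ 0 = 0 := rfl

theorem OT_sum {ι : Type} (φ : S →ₙₐ[k] B) (s : Finset ι) (f : ι → B ⊗[k] M) :
    OTmk k S B M φ (∑ i ∈ s, f i) = ∑ i ∈ s, OTmk k S B M φ (f i) :=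
  map_sum (Submodule.mkQ (TRel k S B M φ)) f s

theorem OT_one (φ : S →ₙₐ[k] B) (b : B) (m : M) :
    OTmk k S B M φ (b ⊗ₜ[k] m) = OTmk k S B M φ ((b * φ 1) ⊗ₜ[k] m) := by
  rw [OT_bal, one_smul]

/-- Every element of the balanced tensor product is a combination of the `w_q ⊗ m`. -/
theorem OT_span {Q : Type} (φ : S →ₙₐ[k] B) (w : Q → B) (h : ∀ b, ∃ f, b * φ 1 = DB φ w f)
    (y : OT k S B M φ) : ∃ x : Q →₀ M, y = x.sum fun q m => OTmk k S B M φ (w q ⊗ₜ[k] m) := by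
  obtain ⟨z, rfl⟩ := Submodule.Quotient.mk_surjective _ y
  change ∃ x : Q →₀ M, OTmk k S B M φ z = _
  induction z using TensorProduct.induction_on with
  | zero => exact ⟨0, by rw [OT_zero, Finsupp.sum_zero_index]⟩
  | tmul b m =>
    obtain ⟨f, hf⟩ := h b
    refine ⟨f.mapRange (fun s => s • m) (zero_smul _ _), ?_⟩
    rw [OT_one, hf, DB_sum, Finsupp.sum_mapRange_index, Finsupp.sum, Finsupp.sum, TensorProduct.sum_tmul, OT_sum]
    · exact Finset.sum_congr rfl fun q _ => OT_bal _ _ _ _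
    · intro q; rw [TensorProduct.tmul_zero, OT_zero]
  | add z z' hz hz' =>
    obtain ⟨x, hx⟩ := hz
    obtain ⟨x', hx'⟩ := hz'
    classical
    refine ⟨x + x', ?_⟩
    rw [OT_add, hx, hx', Finsupp.sum_add_index']
    · intro q; rw [TensorProduct.tmul_zero, OT_zero]
    · intro q m m'; rw [TensorProduct.tmul_add, OT_add]

/-- Uniqueness of coordinates. -/
theorem OT_ind {Q : Type} (φ : S →ₙₐ[k] B) (w : Q → B) (h : ∀ b, ∃ f, b * φ 1 = DB φ w f)
    (hi : ∀ f, DB φ w f = 0 → f = 0)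
    (x : Q →₀ M) (hx : (x.sum fun q m => OTmk k S B M φ (w q ⊗ₜ[k] m)) = 0) : x = 0 := by
  have hinj : ∀ f g, DB φ w f = DB φ w g → f = g := by
    intro f g hfg
    rw [← sub_eq_zero]
    exact hi _ (by rw [map_sub, hfg, sub_self])
  choose L hL using h
  have hLr : ∀ b r q, L (b * φ r) q = L b q * r := by
    intro b r q
    have : L (b * φ r) = (L b).mapRange (fun s => s * r) (zero_mul _) := by
      apply hinj
      rw [← hL, mul_assoc, ← map_mul, mul_one, DB_sum, Finsupp.sum_mapRange_index (by intro; simp)]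
      simp only [map_mul, ← mul_assoc]
      rw [← Finsupp.sum_mul, ← DB_sum, ← hL, mul_assoc, ← map_mul, one_mul]
    rw [this, Finsupp.mapRange_apply]
  let Ll : B →ₗ[k] (Q →₀ S) :=
    { toFun := L
      map_add' := fun a b => hinj _ _ (by rw [map_add, ← hL, ← hL, ← hL, add_mul])
      map_smul' := fun c a => hinj _ _ (by rw [RingHom.id_apply, map_smul, ← hL, ← hL, smul_mul_assoc]) }
  have hLw : ∀ q q' : Q, ∀ m : M, L (w q) q' • m = (Finsupp.single q m : Q →₀ M) q' := by
    intro q q' m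
    have : L (w q) = Finsupp.single q 1 := hinj _ _ (by rw [← hL, DB_single])
    rw [this]
    classical
    rw [Finsupp.single_apply, Finsupp.single_apply]
    split_ifs <;> simp
  let lam : Q → (B ⊗[k] M →ₗ[k] M) := fun q => TensorProduct.lift
    ((Algebra.lsmul k k M).toLinearMap.comp ((Finsupp.lapply q).comp Ll))
  have hlam : ∀ q b m, lam q (b ⊗ₜ[k] m) = L b q • m := fun q b m => rfl
  have hker : ∀ q, ∀ z ∈ TRel k S B M φ, ∀ b' : B, lam q (b' • z) = 0 := by
    intro q z hz
    induction hz using Submodule.span_induction with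
    | mem z hz =>
      obtain ⟨b, r, m, rfl⟩ := hz
      intro b'
      rw [smul_sub, TensorProduct.smul_tmul', TensorProduct.smul_tmul', map_sub, hlam, hlam, smul_eq_mul,
        smul_eq_mul, ← mul_assoc, hLr, mul_smul, sub_self]
    | zero => intro b'; rw [smul_zero, map_zero]
    | add z z' _ _ hz hz' => intro b'; rw [smul_add, map_add, hz, hz', add_zero]
    | smul b z _ hz => intro b'; rw [← mul_smul, hz]
  have hz : (x.sum fun q m => w q ⊗ₜ[k] m) ∈ TRel k S B M φ := by
    refine (Submodule.Quotient.mk_eq_zero _).1 ?_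
    rw [← hx]
    exact OT_sum φ _ _
  ext q'
  have h1 := hker q' _ hz 1
  rw [one_smul, Finsupp.sum, map_sum] at h1
  simp only [hlam, hLw] at h1
  rw [Finsupp.zero_apply, ← h1, ← Finsupp.finset_sum_apply]
  conv_lhs => rw [← Finsupp.sum_single x]
  rfl

end abs

section abs2
variable {k : Type} [Field k] {S0 B1 S1 B2 : Type} [Ring S0] [Algebra k S0] [Ring B1] [Algebra k B1]
  [Ring S1] [Algebra k S1] [Ring B2] [Algebra k B2]

theorem eSub_fix {A N S' : Type} [Ring A] [Algebra k A] [AddCommGroup N] [Module k N]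
    [Module A N] [IsScalarTower k A N] (e : A) (he : e * e = e) (x : ↥(eSub k A N e)) :
    e • (x : N) = x := by
  obtain ⟨x, y, rfl⟩ := x
  change e • (e • y) = e • y
  rw [← mul_smul, he]

set_option maxHeartbeats 1000000 in
theorem abs_equiv {P Q : Type} (φ1 : S0 →ₙₐ[k] B1) (φ0 : S0 →ₙₐ[k] S1) (φ2 : S1 →ₙₐ[k] B2) (ψ : B1 →ₙₐ[k] B2)
    (e : B2) (ei : S1) (t : B2) (he : e = ψ 1) (hei : ei = φ0 1)
    (v : P → B1) (w : Q → B2) (σ : P → Q) (hσ : Function.Injective σ)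
    (hspan1 : ∀ b, ∃ f, b * φ1 1 = DB φ1 v f) (hspan2 : ∀ b, ∃ f, b * φ2 1 = DB φ2 w f)
    (hind2 : ∀ f, DB φ2 w f = 0 → f = 0)
    (hIntw : ∀ r, ψ (φ1 r) * t * φ2 ei = t * φ2 (φ0 r))
    (hσw : ∀ p, ψ (v p) * t * φ2 ei = w (σ p) * φ2 ei)
    (hew : ∀ q, (∃ p, q = σ p ∧ e * (w q * φ2 1) = w q * φ2 ei) ∨ e * (w q * φ2 1) = 0)
    (M : Type) [AddCommGroup M] [Module k M] [Module S1 M] [IsScalarTower k S1 M]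
    (d1 : EData k M ei φ0) (d2 : EData k (OT k S1 B2 M φ2) e ψ) :
    letI := d1.inst; letI := d1.tower; letI := d2.inst
    ∃ Ψ : OT k S0 B1 ↥(eSub k S1 M ei) φ1 ≃ₗ[B1] ↥(eSub k B2 (OT k S1 B2 M φ2) e),
      ∀ b x, (Ψ (OTmk k S0 B1 ↥(eSub k S1 M ei) φ1 (b ⊗ₜ[k] x))).val =
        OTmk k S1 B2 M φ2 ((ψ b * t) ⊗ₜ[k] x.val) := by
  letI := d1.inst; letI := d1.tower; letI := d2.inst
  have heiei : ei * ei = ei := by rw [hei, ← map_mul, one_mul]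
  have hee : e * e = e := by rw [he, ← map_mul, one_mul]
  have hx : ∀ x : ↥(eSub k S1 M ei), ei • (x : M) = x := fun x => eSub_fix (S' := S0) ei heiei x
  have hmx : ∀ (b : B2) (x : ↥(eSub k S1 M ei)),
      OTmk k S1 B2 M φ2 (b ⊗ₜ[k] x.val) = OTmk k S1 B2 M φ2 ((b * φ2 ei) ⊗ₜ[k] x.val) := by
    intro b x; rw [OT_bal, hx]
  let N := OT k S1 B2 M φ2
  let g0 : B1 ⊗[k] ↥(eSub k S1 M ei) →ₗ[k] B2 ⊗[k] M :=
    TensorProduct.map ((LinearMap.mulRight k t).comp (ψ : B1 →ₗ[k] B2)) (eSub k S1 M ei).subtype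
  have hg0 : ∀ b x, g0 (b ⊗ₜ[k] x) = (ψ b * t) ⊗ₜ[k] x.val := fun b x => rfl
  have hg0l : ∀ (b : B1) z, g0 (b • z) = ψ b • g0 z := by
    intro b z
    induction z using TensorProduct.induction_on with
    | zero => rw [smul_zero, map_zero, smul_zero]
    | tmul b' x =>
      rw [TensorProduct.smul_tmul', hg0, hg0, TensorProduct.smul_tmul', smul_eq_mul, smul_eq_mul, map_mul, mul_assoc]
    | add z z' hz hz' => rw [smul_add, map_add, hz, hz', map_add, smul_add]
  have hmem : ∀ z, OTmk k S1 B2 M φ2 (g0 z) ∈ eSub k B2 (OT k S1 B2 M φ2) e := by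
    intro z
    refine ⟨OTmk k S1 B2 M φ2 (g0 z), ?_⟩
    change e • OTmk k S1 B2 M φ2 (g0 z) = _
    rw [← OT_smul, he, ← hg0l, one_smul]
  let g1 : B1 ⊗[k] ↥(eSub k S1 M ei) →ₗ[B1] ↥(eSub k B2 (OT k S1 B2 M φ2) e) :=
    { toFun := fun z => ⟨OTmk k S1 B2 M φ2 (g0 z), hmem z⟩
      map_add' := fun z z' => Subtype.ext (by
        change OTmk k S1 B2 M φ2 (g0 (z + z')) = OTmk k S1 B2 M φ2 (g0 z) + OTmk k S1 B2 M φ2 (g0 z')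
        rw [map_add, OT_add])
      map_smul' := fun b z => Subtype.ext (by
        rw [RingHom.id_apply, d2.compat]
        change OTmk k S1 B2 M φ2 (g0 (b • z)) = ψ b • OTmk k S1 B2 M φ2 (g0 z)
        rw [hg0l, OT_smul]) }
  have hker : TRel k S0 B1 ↥(eSub k S1 M ei) φ1 ≤ LinearMap.ker g1 := by
    refine Submodule.span_le.2 ?_
    rintro z ⟨b, r, x, rfl⟩
    refine LinearMap.mem_ker.2 ?_
    rw [map_sub, sub_eq_zero]
    refine Subtype.ext ?_
    change OTmk k S1 B2 M φ2 (g0 _) = OTmk k S1 B2 M φ2 (g0 _)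
    rw [hg0, hg0, hmx, d1.compat, ← OT_bal, map_mul, mul_assoc, mul_assoc, ← mul_assoc (ψ (φ1 r)), hIntw, mul_assoc]
  let Ψ : OT k S0 B1 ↥(eSub k S1 M ei) φ1 →ₗ[B1] ↥(eSub k B2 (OT k S1 B2 M φ2) e) :=
    Submodule.liftQ _ g1 hker
  have hΨ : ∀ b x, (Ψ (OTmk k S0 B1 ↥(eSub k S1 M ei) φ1 (b ⊗ₜ[k] x))).val =
        OTmk k S1 B2 M φ2 ((ψ b * t) ⊗ₜ[k] x.val) := fun b x => rfl
  refine ⟨LinearEquiv.ofBijective Ψ ⟨?_, ?_⟩, hΨ⟩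
  · rw [injective_iff_map_eq_zero]
    intro y hy
    obtain ⟨x, rfl⟩ := OT_span φ1 v hspan1 y
    have h1 : ((x.mapRange Subtype.val rfl).mapDomain σ) = (0 : Q →₀ M) := by
      refine OT_ind φ2 w hspan2 hind2 _ ?_
      rw [Finsupp.sum_mapDomain_index, Finsupp.sum_mapRange_index]
      · rw [Finsupp.sum, map_sum] at hy
        have hy' := congrArg Subtype.val hy
        rw [AddSubmonoidClass.coe_finset_sum] at hy'
        simp only [hΨ] at hy'
        refine Eq.trans ?_ hy'
        refine Finset.sum_congr rfl fun p _ => ?_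
        change OTmk k S1 B2 M φ2 (w (σ p) ⊗ₜ[k] (x p).val) = _
        rw [hmx (w (σ p)), hmx (ψ (v p) * t), hσw]
      · intro p; rw [TensorProduct.tmul_zero, OT_zero]
      · intro p; rw [TensorProduct.tmul_zero, OT_zero]
      · intro q m m'; rw [TensorProduct.tmul_add, OT_add]
    have h2 : x = 0 := by
      have := Finsupp.mapDomain_injective hσ (h1.trans Finsupp.mapDomain_zero.symm)
      ext p
      have := DFunLike.congr_fun this p
      rwa [Finsupp.mapRange_apply] at this
    rw [h2, Finsupp.sum_zero_index]
  · have key : ∀ x : Q →₀ M, ∃ u, (Ψ u).val = eMap k B2 (OT k S1 B2 M φ2) e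
        (x.sum fun q m => OTmk k S1 B2 M φ2 (w q ⊗ₜ[k] m)) := by
      intro x
      induction x using Finsupp.induction_linear with
      | zero => exact ⟨0, by rw [map_zero, Finsupp.sum_zero_index, map_zero]; rfl⟩
      | add x x' hx hx' =>
        obtain ⟨u, hu⟩ := hx
        obtain ⟨u', hu'⟩ := hx'
        refine ⟨u + u', ?_⟩
        have h3 : (Ψ (u + u')).val = (Ψ u).val + (Ψ u').val := by rw [map_add]; rfl
        rw [h3, hu, hu']
        classical
        rw [Finsupp.sum_add_index', map_add]
        · intro q; rw [TensorProduct.tmul_zero, OT_zero]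
        · intro q m m'; rw [TensorProduct.tmul_add, OT_add]
      | single q m =>
        have h1 : e • OTmk k S1 B2 M φ2 (w q ⊗ₜ[k] m) =
            OTmk k S1 B2 M φ2 ((e * (w q * φ2 1)) ⊗ₜ[k] m) := by
          rw [OT_one, ← OT_smul, TensorProduct.smul_tmul', smul_eq_mul]
        have h2 : eMap k B2 (OT k S1 B2 M φ2) e
            ((Finsupp.single q m).sum fun q m => OTmk k S1 B2 M φ2 (w q ⊗ₜ[k] m)) =
            OTmk k S1 B2 M φ2 ((e * (w q * φ2 1)) ⊗ₜ[k] m) := by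
          rw [Finsupp.sum_single_index, ← h1]
          · rfl
          · rw [TensorProduct.tmul_zero, OT_zero]
        rw [h2]
        rcases hew q with ⟨p, rfl, hp⟩ | h0
        · have hm : ei • m ∈ eSub k S1 M ei := ⟨m, rfl⟩
          refine ⟨OTmk k S0 B1 ↥(eSub k S1 M ei) φ1 (v p ⊗ₜ[k] ⟨ei • m, hm⟩), ?_⟩
          rw [hΨ, hp, ← OT_bal, hσw]
        · refine ⟨0, ?_⟩
          rw [map_zero, h0, TensorProduct.zero_tmul, OT_zero]
          rfl
    rintro ⟨_, y, rfl⟩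
    obtain ⟨x, hxx⟩ := OT_span φ2 w hspan2 y
    obtain ⟨u, hu⟩ := key x
    exact ⟨u, Subtype.ext (hu.trans (by rw [hxx]))⟩

set_option maxHeartbeats 1000000 in
theorem abs_nat {P Q : Type} (φ1 : S0 →ₙₐ[k] B1) (φ0 : S0 →ₙₐ[k] S1) (φ2 : S1 →ₙₐ[k] B2) (ψ : B1 →ₙₐ[k] B2)
    (e : B2) (ei : S1) (t : B2) (he : e = ψ 1) (hei : ei = φ0 1)
    (v : P → B1) (w : Q → B2) (σ : P → Q) (hσ : Function.Injective σ)
    (hspan1 : ∀ b, ∃ f, b * φ1 1 = DB φ1 v f) (hspan2 : ∀ b, ∃ f, b * φ2 1 = DB φ2 w f)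
    (hind2 : ∀ f, DB φ2 w f = 0 → f = 0)
    (hIntw : ∀ r, ψ (φ1 r) * t * φ2 ei = t * φ2 (φ0 r))
    (hσw : ∀ p, ψ (v p) * t * φ2 ei = w (σ p) * φ2 ei)
    (hew : ∀ q, (∃ p, q = σ p ∧ e * (w q * φ2 1) = w q * φ2 ei) ∨ e * (w q * φ2 1) = 0) :
    (∃ Φ : ∀ (M : Type) [AddCommGroup M] [Module k M] [Module S1 M] [IsScalarTower k S1 M]
        (d1 : EData k M ei φ0) (d2 : EData k (OT k S1 B2 M φ2) e ψ),
        (letI := d1.inst; letI := d1.tower; letI := d2.inst;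
          (↥(eSub k B2 (OT k S1 B2 M φ2) e) ≃ₗ[B1] (OT k S0 B1 ↥(eSub k S1 M ei) φ1))),
      ∀ (M M' : Type) (_ : AddCommGroup M) (_ : Module k M)
        (_ : Module S1 M) (_ : IsScalarTower k S1 M)
        (_ : AddCommGroup M') (_ : Module k M')
        (_ : Module S1 M') (_ : IsScalarTower k S1 M')
        (d1 : EData k M ei φ0) (d2 : EData k (OT k S1 B2 M φ2) e ψ)
        (d1' : EData k M' ei φ0) (d2' : EData k (OT k S1 B2 M' φ2) e ψ),
        letI := d1.inst; letI := d1.tower; letI := d2.inst;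
        letI := d1'.inst; letI := d1'.tower; letI := d2'.inst;
        ∀ (f : M →ₗ[S1] M')
          (gF : OT k S1 B2 M φ2 →ₗ[k] OT k S1 B2 M' φ2),
          (∀ (b : B2) (m : M),
            gF (OTmk k S1 B2 M φ2 (b ⊗ₜ[k] m)) = OTmk k S1 B2 M' φ2 (b ⊗ₜ[k] f m)) →
        ∀ (gEF : ↥(eSub k B2 (OT k S1 B2 M φ2) e) →ₗ[k] ↥(eSub k B2 (OT k S1 B2 M' φ2) e)),
          (∀ x, (gEF x).val = gF x.val) →
        ∀ (gE : ↥(eSub k S1 M ei) →ₗ[k] ↥(eSub k S1 M' ei)),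
          (∀ x, (gE x).val = f x.val) →
        ∀ (gFE : OT k S0 B1 ↥(eSub k S1 M ei) φ1 →ₗ[k] OT k S0 B1 ↥(eSub k S1 M' ei) φ1),
          (∀ (b : B1) (x : ↥(eSub k S1 M ei)),
            gFE (OTmk k S0 B1 ↥(eSub k S1 M ei) φ1 (b ⊗ₜ[k] x))
              = OTmk k S0 B1 ↥(eSub k S1 M' ei) φ1 (b ⊗ₜ[k] gE x)) →
          ∀ z, gFE (Φ M d1 d2 z) = Φ M' d1' d2' (gEF z)) := by
  have H := fun (M : Type) [AddCommGroup M] [Module k M] [Module S1 M] [IsScalarTower k S1 M] =>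
    abs_equiv φ1 φ0 φ2 ψ e ei t he hei v w σ hσ hspan1 hspan2 hind2 hIntw hσw hew M
  choose Ψ hΨ using H
  refine ⟨fun M _ _ _ _ d1 d2 => letI := d1.inst; letI := d1.tower; letI := d2.inst; (Ψ M d1 d2).symm, ?_⟩
  intro M M' _ _ _ _ _ _ _ _ d1 d2 d1' d2'
  letI := d1.inst; letI := d1.tower; letI := d2.inst
  letI := d1'.inst; letI := d1'.tower; letI := d2'.inst
  intro f gF hgF gEF hgEF gE hgE gFE hgFE z
  beta_reduce
  rw [LinearEquiv.eq_symm_apply]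
  have hgen : ∀ y, Ψ M' d1' d2' (gFE y) = gEF (Ψ M d1 d2 y) := by
    intro y
    obtain ⟨y, rfl⟩ := Submodule.Quotient.mk_surjective _ y
    change Ψ M' d1' d2' (gFE (OTmk k S0 B1 ↥(eSub k S1 M ei) φ1 y)) =
      gEF (Ψ M d1 d2 (OTmk k S0 B1 ↥(eSub k S1 M ei) φ1 y))
    induction y using TensorProduct.induction_on with
    | zero => rw [OT_zero, map_zero, map_zero, map_zero, map_zero]
    | tmul b x =>
      refine Subtype.ext ?_
      rw [hgFE, hΨ, hgEF, hΨ, hgF, hgE]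
    | add y y' hy hy' => rw [OT_add, map_add, map_add, map_add, map_add, hy, hy']
  rw [hgen, LinearEquiv.apply_symm_apply]

end abs2
end KLR

set_option linter.unusedSectionVars false

namespace KLR
variable {k : Type} [Field k] {I : Type} [Fintype I] [DecidableEq I] (C : CartanDatum k I)

theorem flip_e {n : ℕ} (ν : Fin n → I) : flip C n (Ee C ν) = Ee C (ν ∘ Fin.rev) := liftA_e _ _
theorem flip_x {n : ℕ} (a : Fin n) : flip C n (Xx C a) = Xx C a.rev := liftA_x _ _
theorem flip_t {n : ℕ} (l : ℕ) (h : l + 1 < n) :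
    flip C n (Tt C l h) = - Tt C (n - 2 - l) (by omega) := liftA_t _ _ _

/-- The idempotent of all sequences starting with `j`. -/
noncomputable def El (n : ℕ) (j : I) : Alg C (n+1) := flip C (n+1) (Er C n j)

theorem snoc_rev {n : ℕ} (ν : Fin n → I) (j : I) :
    (Fin.snoc (ν ∘ Fin.rev) j : Fin (n+1) → I) ∘ Fin.rev = Fin.cons j ν := by
  funext a
  refine Fin.cases ?_ (fun a => ?_) a
  · simp
  · simp only [Function.comp_apply, Fin.rev_succ, Fin.snoc_castSucc, Fin.cons_succ, Fin.rev_rev]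

theorem El_eq (n : ℕ) (j : I) : El C n j = ∑ ν : Fin n → I, Ee C (Fin.cons j ν : Fin (n+1) → I) := by
  rw [El, Er, map_sum]
  refine Fintype.sum_equiv (Equiv.arrowCongr Fin.revPerm (Equiv.refl I)) _ _ ?_
  intro ν
  rw [flip_e, ← snoc_rev]
  congr 2
  congr 1
  funext a
  simp

theorem upL_apply {n : ℕ} (r : Alg C n) : upL C n r = flip C (n+1) (up C n (flip C n r)) := rfl

theorem upL_flip {n : ℕ} (r : Alg C n) : upL C n (flip C n r) = flip C (n+1) (up C n r) := by
  rw [upL_apply, flip_flip]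

theorem up_flip {n : ℕ} (r : Alg C n) : up C n (flip C n r) = flip C (n+1) (upL C n r) := by
  rw [upL_apply, flip_flip]

theorem upL_e {n : ℕ} (ν : Fin n → I) :
    upL C n (Ee C ν) = ∑ i, Ee C (Fin.cons i ν : Fin (n+1) → I) := by
  rw [upL_apply, flip_e, up_e, map_sum]
  simp only [flip_e, snoc_rev]

theorem upL_e_El {n : ℕ} (ν : Fin n → I) (j : I) :
    upL C n (Ee C ν) * El C n j = Ee C (Fin.cons j ν) := by
  rw [upL_apply, El, ← map_mul, flip_e, up_e_Er, flip_e, snoc_rev]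

theorem upL_x {n : ℕ} (a : Fin n) : upL C n (Xx C a) = Xx C a.succ := by
  rw [upL_apply, flip_x, up_x, flip_x, Fin.rev_castSucc, Fin.rev_rev]

theorem upL_t {n : ℕ} (l : ℕ) (h : l + 1 < n) :
    upL C n (Tt C l h) = Tt C (l+1) (Nat.succ_lt_succ h) := by
  rw [upL_apply, flip_t, map_neg, up_t, map_neg, flip_t, neg_neg]
  exact Tt_congr C _ _ (by omega)

theorem El_upL {n : ℕ} (j : I) (r : Alg C n) : upL C n r * El C n j = El C n j * upL C n r := by
  rw [upL_apply, El, ← map_mul, ← map_mul, Er_up]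

theorem El_mul {n : ℕ} (i j : I) : El C n i * El C n j = if i = j then El C n i else 0 := by
  rw [El, El, ← map_mul, Er_mul]; split_ifs <;> simp

theorem up_upL {n : ℕ} (r : Alg C n) : up C (n+1) (upL C n r) = upL C (n+1) (up C n r) := by
  have : (up C (n+1)).comp (upL C n) = (upL C (n+1)).comp (up C n) := by
    apply algHom_ext
    · intro ν
      simp only [AlgHom.comp_apply, upL_e, up_e, map_sum]
      rw [Finset.sum_comm]
      simp only [Fin.cons_snoc_eq_snoc_cons]
    · intro a
      simp only [AlgHom.comp_apply, upL_x, up_x, Fin.succ_castSucc]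
    · intro l h
      simp only [AlgHom.comp_apply, upL_t, up_t]
  exact DFunLike.congr_fun this r

theorem upL_Er (n : ℕ) (i : I) : upL C (n+1) (Er C n i) = Er C (n+1) i := by
  rw [Er, map_sum, Er]
  simp only [upL_e]
  rw [← Fintype.sum_prod_type' (fun (ν : Fin n → I) (l : I) => Ee C (Fin.cons l (Fin.snoc ν i : Fin (n+1) → I) : Fin (n+2) → I))]
  refine Fintype.sum_equiv ((Equiv.prodComm _ _).trans (Fin.consEquiv (fun _ => I))) _ _ ?_
  rintro ⟨ν, l⟩
  change _ = Ee C (Fin.snoc (Fin.cons l ν : Fin (n+1) → I) i : Fin (n+2) → I)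
  rw [Fin.cons_snoc_eq_snoc_cons]

theorem up_El (n : ℕ) (i : I) : up C (n+1) (El C n i) = El C (n+1) i := by
  rw [El, up_flip, upL_Er, El]

theorem El_Er (n : ℕ) (i j : I) : El C (n+1) j * Er C (n+1) i = Er C (n+1) i * El C (n+1) j := by
  rw [← up_El, Er_up]

theorem snoc_snoc_swap {n : ℕ} (ν : Fin n → I) (i j : I) :
    (Fin.snoc (Fin.snoc ν i : Fin (n+1) → I) j : Fin (n+2) → I) ∘
      Equiv.swap (⟨n, by omega⟩ : Fin (n+2)) ⟨n+1, by omega⟩ =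
    Fin.snoc (Fin.snoc ν j : Fin (n+1) → I) i := by
  have e1 : (⟨n, by omega⟩ : Fin (n+2)) = (Fin.last n).castSucc := rfl
  have e2 : (⟨n+1, by omega⟩ : Fin (n+2)) = Fin.last (n+1) := rfl
  rw [e1, e2]
  funext a
  refine Fin.lastCases ?_ (fun a => ?_) a
  · simp only [Function.comp_apply, Equiv.swap_apply_right, Fin.snoc_castSucc, Fin.snoc_last]
  · refine Fin.lastCases ?_ (fun a => ?_) a
    · simp only [Function.comp_apply, Equiv.swap_apply_left, Fin.snoc_castSucc, Fin.snoc_last]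
    · rw [Function.comp_apply, Equiv.swap_apply_of_ne_of_ne]
      · simp only [Fin.snoc_castSucc]
      · simp [Fin.ext_iff]; omega
      · simp [Fin.ext_iff]; omega

/-- The last generator. -/
noncomputable def Tn (n : ℕ) : Alg C (n+2) := Tt C n (Nat.lt_succ_self _)

theorem Tn_e {n : ℕ} (ν : Fin n → I) (i j : I) :
    Tn C n * Ee C (Fin.snoc (Fin.snoc ν i : Fin (n+1) → I) j : Fin (n+2) → I) =
      Ee C (Fin.snoc (Fin.snoc ν j : Fin (n+1) → I) i : Fin (n+2) → I) * Tn C n := by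
  rw [Tn, (isRep_alg C (n+2)).taue, snoc_snoc_swap]

theorem Er_succ (n : ℕ) (j : I) : Er C (n+1) j = ∑ ν : Fin n → I, ∑ i,
    Ee C (Fin.snoc (Fin.snoc ν i : Fin (n+1) → I) j : Fin (n+2) → I) := by
  rw [Er, ← sum_snoc, Finset.sum_comm]

theorem up_Er (n : ℕ) (j : I) : up C (n+1) (Er C n j) = ∑ ν : Fin n → I, ∑ i,
    Ee C (Fin.snoc (Fin.snoc ν j : Fin (n+1) → I) i : Fin (n+2) → I) := by
  rw [Er, map_sum]
  simp only [up_e]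

theorem Tn_Er (n : ℕ) (j : I) : Tn C n * Er C (n+1) j = up C (n+1) (Er C n j) * Tn C n := by
  rw [Er_succ, up_Er]
  simp only [Finset.mul_sum, Finset.sum_mul, Tn_e]

theorem Tn_up_Er (n : ℕ) (j : I) : Tn C n * up C (n+1) (Er C n j) = Er C (n+1) j * Tn C n := by
  rw [Er_succ, up_Er]
  simp only [Finset.mul_sum, Finset.sum_mul, Tn_e]

theorem eq_sum_e {n : ℕ} (z : Alg C n) : z = ∑ ν, z * Ee C ν := by
  rw [← Finset.mul_sum, (isRep_alg C n).esum, mul_one]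

theorem Tn_x {n : ℕ} (a : Fin n) :
    Tn C n * Xx C a.castSucc.castSucc = Xx C a.castSucc.castSucc * Tn C n := by
  rw [eq_sum_e C (Tn C n * _), eq_sum_e C (_ * Tn C n)]
  refine Finset.sum_congr rfl fun ν _ => ?_
  have := (isRep_alg C (n+2)).taux n (Nat.lt_succ_self _) a.castSucc.castSucc ν
  have e1 : a.castSucc.castSucc ≠ ⟨n, by omega⟩ := by simp [Fin.ext_iff]; omega
  have e2 : a.castSucc.castSucc ≠ ⟨n+1, by omega⟩ := by simp [Fin.ext_iff]; omega
  rw [Equiv.swap_apply_of_ne_of_ne e1 e2, if_neg (fun h => e1 h.1), if_neg (fun h => e2 h.1), sub_mul,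
    sub_eq_zero] at this
  exact this

theorem Tn_upup {n : ℕ} (r : Alg C n) :
    Tn C n * up C (n+1) (up C n r) = up C (n+1) (up C n r) * Tn C n := by
  induction r using alg_induction with
  | hc c => rw [AlgHom.commutes, AlgHom.commutes, Algebra.commutes]
  | he ν =>
    simp only [up_e, map_sum, Finset.mul_sum, Finset.sum_mul, Tn_e]
    rw [Finset.sum_comm]
  | hx a => rw [up_x, up_x, Tn_x]
  | ht l h => rw [up_t, up_t, Tn, (isRep_alg C (n+2)).tautau _ _ _ _ (by omega)]
  | hm a b ha hb => rw [map_mul, map_mul, ← mul_assoc, ha, mul_assoc, hb, mul_assoc]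
  | ha a b ha hb => rw [map_add, map_add, add_mul, mul_add, ha, hb]

/-- `τ_n x_{n+1} = x_n τ_n` on sequences ending in `i j` with `i ≠ j`. -/
theorem Tn_xn {n : ℕ} (i j : I) (hij : i ≠ j) :
    Tn C n * Xx C (Fin.last (n+1)) * (up C (n+1) (Er C n i) * Er C (n+1) j) =
    up C (n+1) (Xx C (Fin.last n)) * Tn C n * (up C (n+1) (Er C n i) * Er C (n+1) j) := by
  have e : up C (n+1) (Er C n i) * Er C (n+1) j =
      ∑ ν : Fin n → I, Ee C (Fin.snoc (Fin.snoc ν i : Fin (n+1) → I) j : Fin (n+2) → I) := by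
    rw [Er, map_sum, Finset.sum_mul]
    simp only [up_e_Er]
  rw [e, Finset.mul_sum, Finset.mul_sum]
  refine Finset.sum_congr rfl fun ν _ => ?_
  have := (isRep_alg C (n+2)).taux n (Nat.lt_succ_self _) (Fin.last (n+1))
    (Fin.snoc (Fin.snoc ν i : Fin (n+1) → I) j : Fin (n+2) → I)
  have e1 : (⟨n, by omega⟩ : Fin (n+2)) = (Fin.last n).castSucc := rfl
  have e2 : (⟨n+1, by omega⟩ : Fin (n+2)) = Fin.last (n+1) := rfl
  rw [e1, e2, Equiv.swap_apply_right, Fin.snoc_last, Fin.snoc_castSucc, Fin.snoc_last,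
    if_neg (fun h => hij h.2), if_neg (fun h => hij h.2), sub_mul, sub_eq_zero] at this
  rw [up_x]
  exact this

theorem upL_TT (n : ℕ) : ∀ a, upL C (n+1) (TT C n a) = TT C (n+1) (a+1) := by
  induction n with
  | zero => intro a; rw [TT_ge C 0 a (by omega), map_one, TT_ge C _ _ (by omega)]
  | succ n ih =>
    intro a
    rcases Nat.lt_or_ge n a with h | h
    · rw [TT_ge C _ a h, map_one, TT_ge C _ _ (by omega)]
    · rw [TT_succ C n a h, map_mul, ← up_upL, ih, upL_t, ← TT_succ C (n+1) (a+1) (by omega)]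

/-- The right basis elements. -/
noncomputable def WR (n : ℕ) (q : Fin (n+1) × ℕ) : Alg C (n+1) := TT C n q.1 * Xx C (Fin.last n) ^ q.2

/-- The left basis elements. -/
noncomputable def WL (n : ℕ) (q : Fin (n+1) × ℕ) : Alg C (n+1) := flip C (n+1) (WR C n q)

theorem up_WL (n : ℕ) (a : Fin (n+1)) (b : ℕ) : up C (n+1) (WL C n (a, b)) = WL C (n+1) (a.succ, b) := by
  rw [WL, up_flip, WL, WR, WR, map_mul, map_pow, upL_TT, upL_x]
  rfl

theorem TT_zero_Er (n : ℕ) (j : I) : TT C n 0 * Er C n j = El C n j * TT C n 0 := by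
  induction n with
  | zero =>
    rw [TT_ge C 0 0 le_rfl, one_mul, mul_one, El_eq, Er]
    refine Finset.sum_congr rfl fun ν _ => ?_
    congr 1
    funext a
    obtain rfl : a = 0 := by ext; omega
    rfl
  | succ n ih =>
    rw [TT_succ C n 0 (by omega)]
    change up C (n+1) (TT C n 0) * Tn C n * _ = _ * (up C (n+1) (TT C n 0) * Tn C n)
    rw [mul_assoc, Tn_Er, ← mul_assoc, ← map_mul, ih, map_mul, up_El, mul_assoc]

theorem WR_zero (n : ℕ) (b : ℕ) (i j : I) (hij : i ≠ j) : El C n i * (WR C n (0, b) * Er C n j) = 0 := by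
  rw [WR, mul_assoc, ← Xnp_Er, ← mul_assoc (TT C n _), Fin.val_zero, TT_zero_Er, mul_assoc, ← mul_assoc (El C n i),
    El_mul, if_neg hij, zero_mul]

theorem WL_zero (n : ℕ) (b : ℕ) (i j : I) (hij : i ≠ j) : Er C n i * (WL C n (0, b) * El C n j) = 0 := by
  have := congrArg (flip C (n+1)) (WR_zero C n b i j hij)
  rw [map_mul, map_mul, El, flip_flip, map_zero] at this
  exact this

theorem Er_idem (n : ℕ) (i : I) : Er C n i * Er C n i = Er C n i := by rw [Er_mul, if_pos rfl]
theorem El_idem (n : ℕ) (i : I) : El C n i * El C n i = El C n i := by rw [El_mul, if_pos rfl]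

/- Case `F̄_j`. -/
theorem hintL (n : ℕ) (i j : I) (r : Alg C n) :
    up C (n+1) (upL C n r * El C n j) * Er C (n+1) i * (upL C (n+1) (Er C n i) * El C (n+1) j) =
    upL C (n+1) (up C n r * Er C n i) * El C (n+1) j := by
  rw [map_mul, map_mul, up_El, upL_Er, up_upL, mul_assoc, mul_assoc, ← mul_assoc (Er C (n+1) i), Er_idem,
    ← mul_assoc (El C (n+1) j), El_Er, mul_assoc (Er C (n+1) i), El_idem, mul_assoc]

theorem hsigL (n : ℕ) (i j : I) (a : Fin (n+1)) (b : ℕ) :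
    up C (n+1) (WL C n (a, b)) * Er C (n+1) i * (upL C (n+1) (Er C n i) * El C (n+1) j) =
    WL C (n+1) (a.succ, b) * (upL C (n+1) (Er C n i) * El C (n+1) j) := by
  rw [up_WL, upL_Er, mul_assoc, ← mul_assoc (Er C (n+1) i), Er_idem]

theorem hewL (n : ℕ) (i j : I) (a : Fin (n+1)) (b : ℕ) :
    Er C (n+1) i * (WL C (n+1) (a.succ, b) * El C (n+1) j) =
    WL C (n+1) (a.succ, b) * (upL C (n+1) (Er C n i) * El C (n+1) j) := by
  rw [← up_WL, upL_Er, ← mul_assoc, ← Er_up, mul_assoc]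

/- Case `F_j`. -/
theorem TF (n : ℕ) (i j : I) : Tn C n * (up C (n+1) (Er C n i) * Er C (n+1) j) =
    Er C (n+1) i * (up C (n+1) (Er C n j) * Tn C n) := by
  rw [← mul_assoc, Tn_up_Er, mul_assoc, Tn_Er]

theorem ErTF (n : ℕ) (i j : I) : Er C (n+1) i * (Tn C n * (up C (n+1) (Er C n i) * Er C (n+1) j)) =
    Tn C n * (up C (n+1) (Er C n i) * Er C (n+1) j) := by
  rw [TF, ← mul_assoc, Er_idem]

theorem hintR (n : ℕ) (i j : I) (r : Alg C n) :
    up C (n+1) (up C n r * Er C n j) * Er C (n+1) i * Tn C n * (up C (n+1) (Er C n i) * Er C (n+1) j) =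
    Tn C n * (up C (n+1) (up C n r * Er C n i) * Er C (n+1) j) := by
  rw [mul_assoc, mul_assoc, ErTF, map_mul, map_mul, mul_assoc (up C (n+1) (up C n r)) (up C (n+1) (Er C n i)),
    ← mul_assoc (Tn C n) (up C (n+1) (up C n r)), Tn_upup, mul_assoc, mul_assoc, TF,
    ← mul_assoc (up C (n+1) (Er C n j)), Er_up, mul_assoc, ← mul_assoc (up C (n+1) (Er C n j)), ← map_mul, Er_idem]

theorem Tn_xnp {n : ℕ} (i j : I) (hij : i ≠ j) (b : ℕ) :
    Tn C n * Xx C (Fin.last (n+1)) ^ b * (up C (n+1) (Er C n i) * Er C (n+1) j) =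
    up C (n+1) (Xx C (Fin.last n) ^ b) * Tn C n * (up C (n+1) (Er C n i) * Er C (n+1) j) := by
  induction b with
  | zero => rw [pow_zero, pow_zero, map_one, one_mul, mul_one]
  | succ b ih =>
    have hc : Xx C (Fin.last (n+1)) * (up C (n+1) (Er C n i) * Er C (n+1) j) =
        (up C (n+1) (Er C n i) * Er C (n+1) j) * Xx C (Fin.last (n+1)) := by
      rw [← mul_assoc, Xn_up, mul_assoc, Er_x, mul_assoc]
    rw [pow_succ, ← mul_assoc (Tn C n), mul_assoc (Tn C n * _), hc, ← mul_assoc, ih, mul_assoc, ← hc, mul_assoc, ← mul_assoc (Tn C n),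
      Tn_xn C i j hij, pow_succ, map_mul]
    simp only [mul_assoc]

theorem hsigR (n : ℕ) (i j : I) (hij : i ≠ j) (a : Fin (n+1)) (b : ℕ) :
    up C (n+1) (WR C n (a, b)) * Er C (n+1) i * Tn C n * (up C (n+1) (Er C n i) * Er C (n+1) j) =
    WR C (n+1) (a.castSucc, b) * (up C (n+1) (Er C n i) * Er C (n+1) j) := by
  rw [mul_assoc, mul_assoc, ErTF, WR, WR, map_mul, mul_assoc, ← mul_assoc (up C (n+1) (Xx C _ ^ _)), ← Tn_xnp C i j hij]
  simp only
  rw [TT_succ C n _ (show (a.castSucc : ℕ) ≤ n by simp; omega)]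
  simp only [mul_assoc]
  rfl

theorem hewR (n : ℕ) (i j : I) (a : Fin (n+1)) (b : ℕ) :
    Er C (n+1) i * (WR C (n+1) (a.castSucc, b) * Er C (n+1) j) =
    WR C (n+1) (a.castSucc, b) * (up C (n+1) (Er C n i) * Er C (n+1) j) := by
  rw [WR]
  simp only
  rw [TT_succ C n _ (show (a.castSucc : ℕ) ≤ n by simp; omega)]
  change Er C (n+1) i * (up C (n+1) (TT C n _) * Tn C n * _ * _) = up C (n+1) (TT C n _) * Tn C n * _ * _
  rw [mul_assoc, mul_assoc, ← mul_assoc (Er C (n+1) i), ← Er_up, mul_assoc, ← mul_assoc (Er C (n+1) i), ← Tn_up_Er,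
    mul_assoc, ← mul_assoc (up C (n+1) (Er C n i)), Xnp_up]
  simp only [mul_assoc]

theorem hewR0 (n : ℕ) (i j : I) (hij : i ≠ j) (b : ℕ) :
    Er C (n+1) i * (WR C (n+1) (Fin.last (n+1), b) * Er C (n+1) j) = 0 := by
  rw [WR, TT_ge C (n+1) _ (by simp), one_mul, ← mul_assoc, Xnp_Er, mul_assoc, Er_mul, if_neg hij, mul_zero]

end KLR

set_option linter.unusedSectionVars false

namespace KLR
variable {k : Type} [Field k] {I : Type} [Fintype I] [DecidableEq I] (C : CartanDatum k I)

theorem toB_mk {n : ℕ} {β : I → ℕ} (a : FA k I n) :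
    (toB C (RingQuot.mkAlgHom k (Rel C n) a) : bAlg C n β) = RingQuot.mkAlgHom k (URel C n β) a := by
  simp [toB]

theorem toB_surj {n : ℕ} {β : I → ℕ} (b : bAlg C n β) : ∃ z, toB C z = b := by
  obtain ⟨a, rfl⟩ := RingQuot.mkAlgHom_surjective k (URel C n β) b
  exact ⟨_, toB_mk C a⟩

theorem eIdem_mk (n : ℕ) (β : I → ℕ) :
    eIdem C n β = RingQuot.mkAlgHom k (Rel C n) (∑ ν ∈ seqs β n, ge k ν) := by
  rw [map_sum]; rfl

theorem toB_eIdem (n : ℕ) (β : I → ℕ) : (toB C (eIdem C n β) : bAlg C n β) = 1 := by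
  rw [eIdem_mk, toB_mk, RingQuot.mkAlgHom_rel k URel.unit, map_one]

theorem content_swap {n : ℕ} (ν : Fin n → I) (s : Equiv.Perm (Fin n)) : content (ν ∘ s) = content ν := by
  funext i
  unfold content
  refine Finset.card_bij (fun a _ => s a) ?_ ?_ ?_
  · intro a ha; simpa using ha
  · intro a _ b _ h; exact s.injective h
  · intro b hb; exact ⟨s.symm b, by simpa using hb, by simp⟩

theorem mem_seqs {n : ℕ} {β : I → ℕ} {ν : Fin n → I} : ν ∈ seqs β n ↔ content ν = β := by
  simp [seqs]

theorem eIdem_e {n : ℕ} (β : I → ℕ) (ν : Fin n → I) :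
    eIdem C n β * Ee C ν = if content ν = β then Ee C ν else 0 := by
  rw [eIdem, Finset.sum_mul]
  simp only [(isRep_alg C n).ee]
  rw [Finset.sum_ite_eq']
  simp only [mem_seqs]

theorem e_eIdem {n : ℕ} (β : I → ℕ) (ν : Fin n → I) :
    Ee C ν * eIdem C n β = if content ν = β then Ee C ν else 0 := by
  rw [eIdem, Finset.mul_sum]
  simp only [(isRep_alg C n).ee]
  rw [Finset.sum_ite_eq]
  simp only [mem_seqs]

theorem toB_e_ne {n : ℕ} {β : I → ℕ} (ν : Fin n → I) (h : content ν ≠ β) :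
    (toB C (Ee C ν) : bAlg C n β) = 0 := by
  rw [← one_mul (toB C (Ee C ν)), ← toB_eIdem, ← map_mul, eIdem_e, if_neg h, map_zero]

theorem eIdem_comm {n : ℕ} (β : I → ℕ) (z : Alg C n) : z * eIdem C n β = eIdem C n β * z := by
  induction z using alg_induction with
  | hc c => rw [Algebra.commutes]
  | he ν => rw [eIdem_e, e_eIdem]
  | hx a => simp only [eIdem, Finset.sum_mul, Finset.mul_sum, (isRep_alg C n).xe]
  | ht l h =>
    simp only [eIdem, Finset.sum_mul, Finset.mul_sum, (isRep_alg C n).taue]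
    refine Finset.sum_equiv (Equiv.arrowCongr (Equiv.swap (⟨l, by omega⟩ : Fin n) ⟨l+1, h⟩) (Equiv.refl I)) ?_ ?_
    · intro ν
      simp only [mem_seqs]
      rw [← content_swap ν (Equiv.swap ⟨l, by omega⟩ ⟨l+1, h⟩)]
      rfl
    · intro ν _
      rfl
  | hm a b ha hb => rw [mul_assoc, hb, ← mul_assoc, ha, mul_assoc]
  | ha a b ha hb => rw [add_mul, mul_add, ha, hb]

theorem eIdem_idem (n : ℕ) (β : I → ℕ) : eIdem C n β * eIdem C n β = eIdem C n β := by
  conv_lhs => enter [2]; rw [eIdem]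
  rw [Finset.mul_sum]
  conv_rhs => rw [eIdem]
  refine Finset.sum_congr rfl fun ν hν => ?_
  rw [eIdem_e, if_pos (mem_seqs.1 hν)]

/-- The ideal `R(n) e(β)`. -/
noncomputable def Wi (n : ℕ) (β : I → ℕ) : Submodule (Alg C n) (Alg C n) where
  carrier := {w | eIdem C n β * w = w}
  add_mem' := by
    intro a b ha hb
    change _ * (a + b) = a + b
    rw [mul_add, show _ * a = a from ha, show _ * b = b from hb]
  zero_mem' := mul_zero _
  smul_mem' := by
    intro c x hx
    change _ * (c * x) = c * x
    rw [← mul_assoc, ← eIdem_comm, mul_assoc, show _ * x = x from hx]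

theorem toB_ker {n : ℕ} {β : I → ℕ} (z : Alg C n) (h : (toB C z : bAlg C n β) = 0) :
    z * eIdem C n β = 0 := by
  let F : Alg C n →ₐ[k] Module.End k (Wi C n β) := Algebra.lsmul k k (Wi C n β)
  have hF : ∀ z (w : Wi C n β), (F z w : Alg C n) = z * w := fun z w => rfl
  let G : bAlg C n β →ₐ[k] Module.End k (Wi C n β) :=
    RingQuot.liftAlgHom (S := k) ⟨F.comp (RingQuot.mkAlgHom k (Rel C n)), by
      intro x y hxy
      cases hxy with
      | base hb => rw [AlgHom.comp_apply, AlgHom.comp_apply, RingQuot.mkAlgHom_rel k hb]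
      | unit =>
        rw [AlgHom.comp_apply, ← eIdem_mk, map_one]
        ext w
        rw [hF]
        exact w.2⟩
  have hG : ∀ z, G (toB C z) = F z := by
    intro z
    obtain ⟨a, rfl⟩ := RingQuot.mkAlgHom_surjective k (Rel C n) z
    rw [toB_mk]
    simp [G]
  have h1 := hG z
  rw [h, map_zero] at h1
  have h2 := hF z ⟨eIdem C n β, eIdem_idem C n β⟩
  rw [← h1] at h2
  exact h2.symm

theorem toB_ker' {n : ℕ} {β : I → ℕ} (z : Alg C n) (h : z * eIdem C n β = 0) :
    (toB C z : bAlg C n β) = 0 := by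
  rw [← mul_one (toB C z), ← toB_eIdem, ← map_mul, h, map_zero]

theorem content_snoc {n : ℕ} (ν : Fin n → I) (i : I) :
    content (Fin.snoc ν i : Fin (n+1) → I) = addA (content ν) i := by
  funext l
  unfold content addA
  simp only [Finset.card_filter]
  rw [Fin.sum_univ_castSucc]
  simp only [Fin.snoc_castSucc, Fin.snoc_last, eq_comm (a := i)]

theorem content_cons {n : ℕ} (ν : Fin n → I) (i : I) :
    content (Fin.cons i ν : Fin (n+1) → I) = addA (content ν) i := by
  funext l
  unfold content addA
  simp only [Finset.card_filter]
  rw [Fin.sum_univ_succ, add_comm]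
  simp only [Fin.cons_zero, Fin.cons_succ, eq_comm (a := i)]

theorem addA_inj {β β' : I → ℕ} {i : I} : addA β i = addA β' i ↔ β = β' := by
  constructor
  · intro h
    funext l
    have := congr_fun h l
    simpa [addA] using this
  · rintro rfl; rfl

theorem addA_comm (β : I → ℕ) (i j : I) : addA (addA β i) j = addA (addA β j) i := by
  funext l; simp only [addA]; omega

theorem Er_eIdem (n : ℕ) (β : I → ℕ) (i : I) :
    Er C n i * eIdem C (n+1) (addA β i) = up C n (eIdem C n β) * Er C n i := by
  have h : up C n (eIdem C n β) * Er C n i = ∑ ν ∈ seqs β n, Ee C (Fin.snoc ν i : Fin (n+1) → I) := by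
    rw [eIdem, map_sum, Finset.sum_mul]
    simp only [up_e_Er]
  rw [h, Er, Finset.sum_mul]
  simp only [e_eIdem, content_snoc, addA_inj]
  rw [← Finset.sum_filter]
  rfl

theorem El_eIdem (n : ℕ) (β : I → ℕ) (i : I) :
    El C n i * eIdem C (n+1) (addA β i) = upL C n (eIdem C n β) * El C n i := by
  have h : upL C n (eIdem C n β) * El C n i = ∑ ν ∈ seqs β n, Ee C (Fin.cons i ν : Fin (n+1) → I) := by
    rw [eIdem, map_sum, Finset.sum_mul]
    simp only [upL_e_El]
  rw [h, El_eq, Finset.sum_mul]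
  simp only [e_eIdem, content_cons, addA_inj]
  rw [← Finset.sum_filter]
  rfl

theorem toB_sum_filter {n : ℕ} {β : I → ℕ} (p : (Fin n → I) → Prop) [DecidablePred p] :
    (toB C (∑ ν ∈ (seqs β n).filter p, Ee C ν) : bAlg C n β) =
      toB C (∑ ν ∈ Finset.univ.filter p, Ee C ν) := by
  rw [map_sum, map_sum]
  refine Finset.sum_subset ?_ ?_
  · intro ν hν; simp only [Finset.mem_filter] at hν ⊢; exact ⟨Finset.mem_univ _, hν.2⟩
  · intro ν hν hν'
    apply toB_e_ne
    intro h
    simp only [Finset.mem_filter, mem_seqs, Finset.mem_univ, true_and, not_and] at hν hν'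
    exact hν' h hν

theorem Er_filter (n : ℕ) (i : I) :
    Er C n i = ∑ ν ∈ Finset.univ.filter (fun ν : Fin (n+1) → I => ν (Fin.last n) = i), Ee C ν := by
  rw [Finset.sum_filter, ← sum_snoc, Er, Finset.sum_comm]
  simp

theorem El_filter (n : ℕ) (i : I) :
    El C n i = ∑ ν ∈ Finset.univ.filter (fun ν : Fin (n+1) → I => ν 0 = i), Ee C ν := by
  rw [El_eq, Finset.sum_filter]
  rw [← (Fin.consEquiv (fun _ : Fin (n+1) => I)).sum_comp, Fintype.sum_prod_type, Finset.sum_comm]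
  simp [Fin.consEquiv]

theorem toB_eR {n : ℕ} {β : I → ℕ} (i : I) :
    (toB C (eR C n β i) : bAlg C (n+1) (addA β i)) = toB C (Er C n i) := by
  rw [eR, toB_sum_filter, Er_filter]

theorem toB_eL {n : ℕ} {β : I → ℕ} (i : I) :
    (toB C (eL C n β i) : bAlg C (n+1) (addA β i)) = toB C (El C n i) := by
  rw [eL, toB_sum_filter, El_filter]

theorem eDb_eq {n : ℕ} {β : I → ℕ} (i : I) : eDb C (n+1) β i = toB C (Er C n i) := by
  rw [eDb, eD, toB_sum_filter, Er_filter]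
  congr 2

theorem phi_one {n : ℕ} {β γ' : I → ℕ} (u : Alg C n →ₐ[k] Alg C (n+1)) (E : Alg C (n+1))
    (φ : bAlg C n β →ₙₐ[k] bAlg C (n+1) γ') (hE : E * eIdem C (n+1) γ' = u (eIdem C n β) * E)
    (he : ∀ ν, φ (toB C (Ee C ν)) = toB C (u (Ee C ν) * E)) : φ 1 = toB C E := by
  rw [← mul_one (toB C E), ← toB_eIdem C (n+1) γ', ← map_mul, hE, ← toB_eIdem, eIdem, map_sum, map_sum, map_sum,
    Finset.sum_mul, map_sum]
  exact Finset.sum_congr rfl fun ν _ => he ν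

theorem phi_eq {n : ℕ} {β γ' : I → ℕ} (u : Alg C n →ₐ[k] Alg C (n+1)) (E : Alg C (n+1))
    (φ : bAlg C n β →ₙₐ[k] bAlg C (n+1) γ') (hE : E * eIdem C (n+1) γ' = u (eIdem C n β) * E)
    (hEE : E * E = E) (huE : ∀ r, u r * E = E * u r)
    (he : ∀ ν, φ (toB C (Ee C ν)) = toB C (u (Ee C ν) * E))
    (hx : ∀ a, φ (toB C (Xx C a)) = toB C (u (Xx C a) * E))
    (ht : ∀ l h, φ (toB C (Tt C l h)) = toB C (u (Tt C l h) * E)) (r : Alg C n) :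
    φ (toB C r) = toB C (u r * E) := by
  induction r using alg_induction with
  | hc c => rw [AlgHom.commutes, Algebra.algebraMap_eq_smul_one, map_smul, phi_one C u E φ hE he, AlgHom.commutes, map_mul,
      AlgHom.commutes, Algebra.smul_def]
  | he ν => exact he ν
  | hx a => exact hx a
  | ht l h => exact ht l h
  | hm a b ha hb =>
    rw [map_mul, map_mul, ha, hb, ← map_mul, map_mul u]
    congr 1
    rw [mul_assoc, huE b, ← mul_assoc E, hEE, ← huE b, mul_assoc]
  | ha a b ha hb => rw [map_add, map_add, ha, hb, map_add, add_mul, map_add]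

theorem phiR {n : ℕ} {β : I → ℕ} (i : I) (φ : bAlg C n β →ₙₐ[k] bAlg C (n+1) (addA β i))
    (h : IsUpRb C i φ) (r : Alg C n) : φ (toB C r) = toB C (up C n r * Er C n i) := by
  refine phi_eq C (up C n) (Er C n i) φ (Er_eIdem C n β i) (Er_idem C n i) (Er_up C i) ?_ ?_ ?_ r
  · intro ν; rw [h.1, up_e_Er]
  · intro a; rw [h.2.1, up_x, map_mul, toB_eR, map_mul]
  · intro l hl; rw [h.2.2, up_t, map_mul, toB_eR, map_mul]

theorem phiR' {n : ℕ} {β γ' : I → ℕ} (i : I) (hγ : γ' = addA β i) (φ : bAlg C n β →ₙₐ[k] bAlg C (n+1) γ')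
    (h : IsUpRb C i φ) (r : Alg C n) : φ (toB C r) = toB C (up C n r * Er C n i) := by
  subst hγ
  exact phiR C i φ h r

theorem phiL {n : ℕ} {β : I → ℕ} (i : I) (φ : bAlg C n β →ₙₐ[k] bAlg C (n+1) (addA β i))
    (h : IsUpLb C i φ) (r : Alg C n) : φ (toB C r) = toB C (upL C n r * El C n i) := by
  refine phi_eq C (upL C n) (El C n i) φ (El_eIdem C n β i) (El_idem C n i) (El_upL C i) ?_ ?_ ?_ r
  · intro ν; rw [h.1, upL_e_El]
  · intro a; rw [h.2.1, upL_x, map_mul, toB_eL, map_mul]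
  · intro l hl; rw [h.2.2, upL_t, map_mul, toB_eL, map_mul]

theorem basis_span {n : ℕ} {β γ' : I → ℕ} {Q : Type} (u : Alg C n →ₐ[k] Alg C (n+1)) (E : Alg C (n+1))
    (φ : bAlg C n β →ₙₐ[k] bAlg C (n+1) γ') (hφ : ∀ r, φ (toB C r) = toB C (u r * E))
    (w : Q → Alg C (n+1))
    (hs : ∀ z, ∃ f : Q →₀ Alg C n, z * E = f.sum fun q r => w q * (u r * E))
    (b : bAlg C (n+1) γ') : ∃ f, b * φ 1 = DB φ (fun q => toB C (w q)) f := by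
  obtain ⟨z, rfl⟩ := toB_surj C b
  obtain ⟨f, hf⟩ := hs z
  refine ⟨f.mapRange (toB C) (map_zero _), ?_⟩
  rw [← map_one (toB C), hφ, map_one u, one_mul, ← map_mul, hf, DB_sum, Finsupp.sum_mapRange_index, Finsupp.sum, map_sum]
  · refine Finset.sum_congr rfl fun q _ => ?_
    beta_reduce
    rw [map_mul, hφ]
  · intro q; rw [map_zero, mul_zero]

theorem basis_ind {n : ℕ} {β γ' : I → ℕ} {Q : Type} (u : Alg C n →ₐ[k] Alg C (n+1)) (E : Alg C (n+1))
    (φ : bAlg C n β →ₙₐ[k] bAlg C (n+1) γ') (hφ : ∀ r, φ (toB C r) = toB C (u r * E))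
    (w : Q → Alg C (n+1)) (hE : E * eIdem C (n+1) γ' = u (eIdem C n β) * E)
    (hi : ∀ f : Q →₀ Alg C n, (f.sum fun q r => w q * (u r * E)) = 0 → f = 0)
    (f) (hf : DB φ (fun q => toB C (w q)) f = 0) : f = 0 := by
  choose s hs using fun b : bAlg C n β => toB_surj C b
  have h1 : (f.mapRange (fun b => s b * eIdem C n β) (toB_ker C _ (hs 0))) = 0 := by
    apply hi
    rw [Finsupp.sum_mapRange_index]
    · have h2 : (toB C (∑ q ∈ f.support, w q * (u (s (f q)) * E)) : bAlg C (n+1) γ') = 0 := by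
        rw [← hf, DB_sum, map_sum]
        refine Finset.sum_congr rfl fun q _ => ?_
        rw [map_mul, ← hφ, hs]
      have h3 := toB_ker C _ h2
      rw [Finset.sum_mul] at h3
      refine Eq.trans (Finset.sum_congr rfl fun q _ => ?_) h3
      beta_reduce
      rw [map_mul, mul_assoc, mul_assoc, mul_assoc, hE]
    · intro q; rw [map_zero, zero_mul, mul_zero]
  ext q
  have h2 := DFunLike.congr_fun h1 q
  rw [Finsupp.mapRange_apply, Finsupp.zero_apply] at h2
  rw [Finsupp.zero_apply, ← hs (f q)]
  exact toB_ker' C _ h2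

theorem span_WR (n : ℕ) (j : I) (z : Alg C (n+1)) : ∃ f : Fin (n+1) × ℕ →₀ Alg C n,
    z * Er C n j = f.sum fun q r => WR C n q * (up C n r * Er C n j) := span_R C n j z

theorem ind_WR (n : ℕ) (j : I) (f : Fin (n+1) × ℕ →₀ Alg C n)
    (h : (f.sum fun q r => WR C n q * (up C n r * Er C n j)) = 0) : f = 0 := Dm_inj C n j f h

theorem flip_sum (n : ℕ) (j : I) (f : Fin (n+1) × ℕ →₀ Alg C n) :
    flip C (n+1) (f.sum fun q r => WR C n q * (up C n r * Er C n j)) =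
    (f.mapRange (flip C n) (map_zero _)).sum fun q r => WL C n q * (upL C n r * El C n j) := by
  rw [Finsupp.sum_mapRange_index, Finsupp.sum, map_sum]
  · refine Finset.sum_congr rfl fun q _ => ?_
    beta_reduce
    rw [map_mul, map_mul, upL_flip]
    rfl
  · intro q; rw [map_zero, zero_mul, mul_zero]

theorem span_WL (n : ℕ) (j : I) (z : Alg C (n+1)) : ∃ f : Fin (n+1) × ℕ →₀ Alg C n,
    z * El C n j = f.sum fun q r => WL C n q * (upL C n r * El C n j) := by
  obtain ⟨f, hf⟩ := span_WR C n j (flip C (n+1) z)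
  refine ⟨f.mapRange (flip C n) (map_zero _), ?_⟩
  rw [← flip_sum, ← hf, map_mul, flip_flip, El]

theorem ind_WL (n : ℕ) (j : I) (f : Fin (n+1) × ℕ →₀ Alg C n)
    (h : (f.sum fun q r => WL C n q * (upL C n r * El C n j)) = 0) : f = 0 := by
  have e : f = (f.mapRange (flip C n) (map_zero _)).mapRange (flip C n) (map_zero _) := by
    ext q; rw [Finsupp.mapRange_apply, Finsupp.mapRange_apply, flip_flip]
  rw [e, ← flip_sum] at h
  have h2 := congrArg (flip C (n+1)) h
  rw [flip_flip, map_zero] at h2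
  rw [e, ind_WR C n j _ h2, Finsupp.mapRange_zero]

end KLR

set_option linter.unusedSectionVars false
open KLR TensorProduct in
set_option maxHeartbeats 1000000 in
/-- For `i ≠ j` and `β` whose coefficient of `α_i` is at least `1` (written
`β = γ + α_i`), there are natural isomorphisms `E_i F_j M ≅ F_j E_i M` and
`E_i F̄_j M ≅ F̄_j E_i M` of `R(β+α_j-α_i)`-modules. -/
theorem Ei_Fj_commute {k : Type} [Field k] {I : Type} [Fintype I]
    [DecidableEq I] (C : CartanDatum k I) (γ : I → ℕ) (i j : I) (hij : i ≠ j)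
    (n : ℕ) (hn : ht I γ = n)
    (φγi : bAlg C n γ →ₙₐ[k] bAlg C (n + 1) (addA γ i)) (hφγi : IsUpRb C i φγi)
    (φγjR : bAlg C n γ →ₙₐ[k] bAlg C (n + 1) (addA γ j)) (hφγjR : IsUpRb C j φγjR)
    (φγjL : bAlg C n γ →ₙₐ[k] bAlg C (n + 1) (addA γ j)) (hφγjL : IsUpLb C j φγjL)
    (φβjR : bAlg C (n + 1) (addA γ i) →ₙₐ[k] bAlg C (n + 2) (addA (addA γ i) j))
    (hφβjR : IsUpRb C j φβjR)
    (φβjL : bAlg C (n + 1) (addA γ i) →ₙₐ[k] bAlg C (n + 2) (addA (addA γ i) j))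
    (hφβjL : IsUpLb C j φβjL)
    (ψ : bAlg C (n + 1) (addA γ j) →ₙₐ[k] bAlg C (n + 2) (addA (addA γ i) j))
    (hψ : IsUpRb C i ψ) :
    -- `E_i F_j ≅ F_j E_i`
    (∃ Φ : ∀ (M : Type) [AddCommGroup M] [Module k M]
        [Module (bAlg C (n + 1) (addA γ i)) M]
        [IsScalarTower k (bAlg C (n + 1) (addA γ i)) M]
        (d1 : EData k M (eDb C (n + 1) (addA γ i) i) φγi)
        (d2 : EData k (OT k (bAlg C (n + 1) (addA γ i))
            (bAlg C (n + 2) (addA (addA γ i) j)) M φβjR)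
          (eDb C (n + 2) (addA (addA γ i) j) i) ψ),
        (letI := d1.inst; letI := d1.tower; letI := d2.inst;
          (↥(eSub k (bAlg C (n + 2) (addA (addA γ i) j))
              (OT k (bAlg C (n + 1) (addA γ i))
                (bAlg C (n + 2) (addA (addA γ i) j)) M φβjR)
              (eDb C (n + 2) (addA (addA γ i) j) i))
            ≃ₗ[bAlg C (n + 1) (addA γ j)]
            (OT k (bAlg C n γ) (bAlg C (n + 1) (addA γ j))
              ↥(eSub k (bAlg C (n + 1) (addA γ i)) M (eDb C (n + 1) (addA γ i) i))
              φγjR))),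
      ∀ (M M' : Type) (_ : AddCommGroup M) (_ : Module k M)
        (_ : Module (bAlg C (n + 1) (addA γ i)) M)
        (_ : IsScalarTower k (bAlg C (n + 1) (addA γ i)) M)
        (_ : AddCommGroup M') (_ : Module k M')
        (_ : Module (bAlg C (n + 1) (addA γ i)) M')
        (_ : IsScalarTower k (bAlg C (n + 1) (addA γ i)) M')
        (d1 : EData k M (eDb C (n + 1) (addA γ i) i) φγi)
        (d2 : EData k (OT k (bAlg C (n + 1) (addA γ i))
            (bAlg C (n + 2) (addA (addA γ i) j)) M φβjR)
          (eDb C (n + 2) (addA (addA γ i) j) i) ψ)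
        (d1' : EData k M' (eDb C (n + 1) (addA γ i) i) φγi)
        (d2' : EData k (OT k (bAlg C (n + 1) (addA γ i))
            (bAlg C (n + 2) (addA (addA γ i) j)) M' φβjR)
          (eDb C (n + 2) (addA (addA γ i) j) i) ψ),
        letI := d1.inst; letI := d1.tower; letI := d2.inst;
        letI := d1'.inst; letI := d1'.tower; letI := d2'.inst;
        ∀ (f : M →ₗ[bAlg C (n + 1) (addA γ i)] M')
          (gF : OT k (bAlg C (n + 1) (addA γ i))
              (bAlg C (n + 2) (addA (addA γ i) j)) M φβjR →ₗ[k]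
            OT k (bAlg C (n + 1) (addA γ i))
              (bAlg C (n + 2) (addA (addA γ i) j)) M' φβjR),
          (∀ (b : bAlg C (n + 2) (addA (addA γ i) j)) (m : M),
            gF (OTmk k (bAlg C (n + 1) (addA γ i))
                (bAlg C (n + 2) (addA (addA γ i) j)) M φβjR (b ⊗ₜ[k] m))
              = OTmk k (bAlg C (n + 1) (addA γ i))
                (bAlg C (n + 2) (addA (addA γ i) j)) M' φβjR (b ⊗ₜ[k] f m)) →
        ∀ (gEF : ↥(eSub k (bAlg C (n + 2) (addA (addA γ i) j))
            (OT k (bAlg C (n + 1) (addA γ i))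
              (bAlg C (n + 2) (addA (addA γ i) j)) M φβjR)
            (eDb C (n + 2) (addA (addA γ i) j) i)) →ₗ[k]
            ↥(eSub k (bAlg C (n + 2) (addA (addA γ i) j))
            (OT k (bAlg C (n + 1) (addA γ i))
              (bAlg C (n + 2) (addA (addA γ i) j)) M' φβjR)
            (eDb C (n + 2) (addA (addA γ i) j) i))),
          (∀ x, (gEF x).val = gF x.val) →
        ∀ (gE : ↥(eSub k (bAlg C (n + 1) (addA γ i)) M (eDb C (n + 1) (addA γ i) i))
            →ₗ[k]
            ↥(eSub k (bAlg C (n + 1) (addA γ i)) M' (eDb C (n + 1) (addA γ i) i))),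
          (∀ x, (gE x).val = f x.val) →
        ∀ (gFE : OT k (bAlg C n γ) (bAlg C (n + 1) (addA γ j))
            ↥(eSub k (bAlg C (n + 1) (addA γ i)) M (eDb C (n + 1) (addA γ i) i))
            φγjR →ₗ[k]
            OT k (bAlg C n γ) (bAlg C (n + 1) (addA γ j))
            ↥(eSub k (bAlg C (n + 1) (addA γ i)) M' (eDb C (n + 1) (addA γ i) i))
            φγjR),
          (∀ (b : bAlg C (n + 1) (addA γ j))
              (x : ↥(eSub k (bAlg C (n + 1) (addA γ i)) M
                (eDb C (n + 1) (addA γ i) i))),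
            gFE (OTmk k (bAlg C n γ) (bAlg C (n + 1) (addA γ j))
                ↥(eSub k (bAlg C (n + 1) (addA γ i)) M (eDb C (n + 1) (addA γ i) i))
                φγjR (b ⊗ₜ[k] x))
              = OTmk k (bAlg C n γ) (bAlg C (n + 1) (addA γ j))
                ↥(eSub k (bAlg C (n + 1) (addA γ i)) M' (eDb C (n + 1) (addA γ i) i))
                φγjR (b ⊗ₜ[k] gE x)) →
          ∀ z, gFE (Φ M d1 d2 z) = Φ M' d1' d2' (gEF z)) ∧
    -- `E_i F̄_j ≅ F̄_j E_i`
    (∃ Φ : ∀ (M : Type) [AddCommGroup M] [Module k M]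
        [Module (bAlg C (n + 1) (addA γ i)) M]
        [IsScalarTower k (bAlg C (n + 1) (addA γ i)) M]
        (d1 : EData k M (eDb C (n + 1) (addA γ i) i) φγi)
        (d2 : EData k (OT k (bAlg C (n + 1) (addA γ i))
            (bAlg C (n + 2) (addA (addA γ i) j)) M φβjL)
          (eDb C (n + 2) (addA (addA γ i) j) i) ψ),
        (letI := d1.inst; letI := d1.tower; letI := d2.inst;
          (↥(eSub k (bAlg C (n + 2) (addA (addA γ i) j))
              (OT k (bAlg C (n + 1) (addA γ i))
                (bAlg C (n + 2) (addA (addA γ i) j)) M φβjL)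
              (eDb C (n + 2) (addA (addA γ i) j) i))
            ≃ₗ[bAlg C (n + 1) (addA γ j)]
            (OT k (bAlg C n γ) (bAlg C (n + 1) (addA γ j))
              ↥(eSub k (bAlg C (n + 1) (addA γ i)) M (eDb C (n + 1) (addA γ i) i))
              φγjL))),
      ∀ (M M' : Type) (_ : AddCommGroup M) (_ : Module k M)
        (_ : Module (bAlg C (n + 1) (addA γ i)) M)
        (_ : IsScalarTower k (bAlg C (n + 1) (addA γ i)) M)
        (_ : AddCommGroup M') (_ : Module k M')
        (_ : Module (bAlg C (n + 1) (addA γ i)) M')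
        (_ : IsScalarTower k (bAlg C (n + 1) (addA γ i)) M')
        (d1 : EData k M (eDb C (n + 1) (addA γ i) i) φγi)
        (d2 : EData k (OT k (bAlg C (n + 1) (addA γ i))
            (bAlg C (n + 2) (addA (addA γ i) j)) M φβjL)
          (eDb C (n + 2) (addA (addA γ i) j) i) ψ)
        (d1' : EData k M' (eDb C (n + 1) (addA γ i) i) φγi)
        (d2' : EData k (OT k (bAlg C (n + 1) (addA γ i))
            (bAlg C (n + 2) (addA (addA γ i) j)) M' φβjL)
          (eDb C (n + 2) (addA (addA γ i) j) i) ψ),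
        letI := d1.inst; letI := d1.tower; letI := d2.inst;
        letI := d1'.inst; letI := d1'.tower; letI := d2'.inst;
        ∀ (f : M →ₗ[bAlg C (n + 1) (addA γ i)] M')
          (gF : OT k (bAlg C (n + 1) (addA γ i))
              (bAlg C (n + 2) (addA (addA γ i) j)) M φβjL →ₗ[k]
            OT k (bAlg C (n + 1) (addA γ i))
              (bAlg C (n + 2) (addA (addA γ i) j)) M' φβjL),
          (∀ (b : bAlg C (n + 2) (addA (addA γ i) j)) (m : M),
            gF (OTmk k (bAlg C (n + 1) (addA γ i))
                (bAlg C (n + 2) (addA (addA γ i) j)) M φβjL (b ⊗ₜ[k] m))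
              = OTmk k (bAlg C (n + 1) (addA γ i))
                (bAlg C (n + 2) (addA (addA γ i) j)) M' φβjL (b ⊗ₜ[k] f m)) →
        ∀ (gEF : ↥(eSub k (bAlg C (n + 2) (addA (addA γ i) j))
            (OT k (bAlg C (n + 1) (addA γ i))
              (bAlg C (n + 2) (addA (addA γ i) j)) M φβjL)
            (eDb C (n + 2) (addA (addA γ i) j) i)) →ₗ[k]
            ↥(eSub k (bAlg C (n + 2) (addA (addA γ i) j))
            (OT k (bAlg C (n + 1) (addA γ i))
              (bAlg C (n + 2) (addA (addA γ i) j)) M' φβjL)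
            (eDb C (n + 2) (addA (addA γ i) j) i))),
          (∀ x, (gEF x).val = gF x.val) →
        ∀ (gE : ↥(eSub k (bAlg C (n + 1) (addA γ i)) M (eDb C (n + 1) (addA γ i) i))
            →ₗ[k]
            ↥(eSub k (bAlg C (n + 1) (addA γ i)) M' (eDb C (n + 1) (addA γ i) i))),
          (∀ x, (gE x).val = f x.val) →
        ∀ (gFE : OT k (bAlg C n γ) (bAlg C (n + 1) (addA γ j))
            ↥(eSub k (bAlg C (n + 1) (addA γ i)) M (eDb C (n + 1) (addA γ i) i))
            φγjL →ₗ[k]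
            OT k (bAlg C n γ) (bAlg C (n + 1) (addA γ j))
            ↥(eSub k (bAlg C (n + 1) (addA γ i)) M' (eDb C (n + 1) (addA γ i) i))
            φγjL),
          (∀ (b : bAlg C (n + 1) (addA γ j))
              (x : ↥(eSub k (bAlg C (n + 1) (addA γ i)) M
                (eDb C (n + 1) (addA γ i) i))),
            gFE (OTmk k (bAlg C n γ) (bAlg C (n + 1) (addA γ j))
                ↥(eSub k (bAlg C (n + 1) (addA γ i)) M (eDb C (n + 1) (addA γ i) i))
                φγjL (b ⊗ₜ[k] x))
              = OTmk k (bAlg C n γ) (bAlg C (n + 1) (addA γ j))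
                ↥(eSub k (bAlg C (n + 1) (addA γ i)) M' (eDb C (n + 1) (addA γ i) i))
                φγjL (b ⊗ₜ[k] gE x)) →
          ∀ z, gFE (Φ M d1 d2 z) = Φ M' d1' d2' (gEF z)) := by
  have f0 := phiR C i φγi hφγi
  have f1R := phiR C j φγjR hφγjR
  have f1L := phiL C j φγjL hφγjL
  have f2R := phiR C j φβjR hφβjR
  have f2L := phiL C j φβjL hφβjL
  have fψ := phiR' C i (addA_comm γ i j) ψ hψ
  have h0 : eDb C (n + 1) (addA γ i) i = φγi 1 := by
    rw [eDb_eq, ← map_one (toB C), f0, map_one (up C n), one_mul]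
  have hψ1 : eDb C (n + 2) (addA (addA γ i) j) i = ψ 1 := by
    rw [eDb_eq, ← map_one (toB C), fψ, map_one (up C (n+1)), one_mul]
  have h2R : φβjR 1 = toB C (Er C (n+1) j) := by
    rw [← map_one (toB C), f2R, map_one (up C (n+1)), one_mul]
  have h2L : φβjL 1 = toB C (El C (n+1) j) := by
    rw [← map_one (toB C), f2L, map_one (upL C (n+1)), one_mul]
  constructor
  · refine abs_nat φγjR φγi φβjR ψ _ _ (toB C (Tn C n)) hψ1 h0
      (fun p => toB C (WR C n p)) (fun q => toB C (WR C (n+1) q))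
      (fun p => (p.1.castSucc, p.2)) ?_
      (basis_span C (up C n) (Er C n j) φγjR f1R (WR C n) (span_WR C n j))
      (basis_span C (up C (n+1)) (Er C (n+1) j) φβjR f2R (WR C (n+1)) (span_WR C (n+1) j))
      (basis_ind C (up C (n+1)) (Er C (n+1) j) φβjR f2R (WR C (n+1)) (Er_eIdem C (n+1) _ j)
        (ind_WR C (n+1) j)) ?_ ?_ ?_
    · rintro ⟨a, b⟩ ⟨a', b'⟩ h
      rw [Prod.mk.injEq, Fin.castSucc_inj] at h
      exact Prod.ext h.1 h.2
    · intro r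
      obtain ⟨r, rfl⟩ := toB_surj C r
      rw [eDb_eq, f1R, f0, fψ, f2R, f2R, ← map_mul, ← map_mul, ← map_mul, hintR]
    · rintro ⟨a, b⟩
      rw [eDb_eq, fψ, f2R, ← map_mul, ← map_mul, ← map_mul, hsigR C n i j hij]
    · rintro ⟨a, b⟩
      rw [h2R, eDb_eq, eDb_eq, f2R, ← map_mul, ← map_mul, ← map_mul]
      refine Fin.lastCases ?_ (fun a => ?_) a
      · right
        rw [hewR0 C n i j hij, map_zero]
      · left
        exact ⟨(a, b), rfl, by rw [hewR]⟩
  · refine abs_nat φγjL φγi φβjL ψ _ _ 1 hψ1 h0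
      (fun p => toB C (WL C n p)) (fun q => toB C (WL C (n+1) q))
      (fun p => (p.1.succ, p.2)) ?_
      (basis_span C (upL C n) (El C n j) φγjL f1L (WL C n) (span_WL C n j))
      (basis_span C (upL C (n+1)) (El C (n+1) j) φβjL f2L (WL C (n+1)) (span_WL C (n+1) j))
      (basis_ind C (upL C (n+1)) (El C (n+1) j) φβjL f2L (WL C (n+1)) (El_eIdem C (n+1) _ j)
        (ind_WL C (n+1) j)) ?_ ?_ ?_
    · rintro ⟨a, b⟩ ⟨a', b'⟩ h
      rw [Prod.mk.injEq, Fin.succ_inj] at h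
      exact Prod.ext h.1 h.2
    · intro r
      obtain ⟨r, rfl⟩ := toB_surj C r
      rw [mul_one, one_mul, eDb_eq, f1L, f0, fψ, f2L, f2L, ← map_mul, hintL]
    · rintro ⟨a, b⟩
      rw [mul_one, eDb_eq, fψ, f2L, ← map_mul, ← map_mul, hsigL]
    · rintro ⟨a, b⟩
      rw [h2L, eDb_eq, eDb_eq, f2L, ← map_mul, ← map_mul, ← map_mul]
      refine Fin.cases ?_ (fun a => ?_) a
      · right
        rw [WL_zero C (n+1) b i j hij, map_zero]
      · left
        exact ⟨(a, b), rfl, by rw [hewL]⟩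
end

section
/- The image of φ_k : C[Σ_k] → End_C(V^{⊗k}) is exactly the centralizer algebra End_{gl_n}(V^{⊗k}); that is, φ_k defines a surjective C-algebra homomorphism C[Σ_k] → End_{gl_n}(V^{⊗k}). -/
open scoped TensorProduct

/-- `V^{⊗k}` for `V = ℂ^n`. -/
abbrev SWTensor (n K : ℕ) : Type := ⨂[ℂ] (_ : Fin K), (Fin n → ℂ)

/-- The operator `D_A = Σ_j id ⊗ ⋯ ⊗ A ⊗ ⋯ ⊗ id` on `V^{⊗k}`. -/
noncomputable def SWD (n K : ℕ) (A : Matrix (Fin n) (Fin n) ℂ) :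
    Module.End ℂ (SWTensor n K) :=
  ∑ j : Fin K, PiTensorProduct.map
    (Function.update (fun _ : Fin K => (LinearMap.id : (Fin n → ℂ) →ₗ[ℂ] (Fin n → ℂ)))
      j A.mulVecLin)

namespace SWAux

section comb

variable {J M R : Type*} [DecidableEq J] [Mul M] [Ring R]

/-- Sum over injective placements of the list entries into the positions of `U`. -/
def S (ι : J → M → R) : List M → Finset J → R
  | [], _ => 1
  | A :: L, U => ∑ j ∈ U, ι j A * S ι L (U.erase j)

/-- All lists obtained by multiplying one entry by `B` on the left. -/
def mods (B : M) : List M → List (List M)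
  | [] => []
  | A :: L => ((B * A) :: L) :: (mods B L).map (fun L' => A :: L')

theorem mods_length (B : M) (L : List M) : ∀ L' ∈ mods B L, L'.length = L.length := by
  induction L with
  | nil => simp [mods]
  | cons A L ih =>
    intro L' h
    simp only [mods, List.mem_cons, List.mem_map] at h
    rcases h with rfl | ⟨L'', h, rfl⟩
    · simp
    · simp [ih _ h]

theorem S_swap (ι : J → M → R)
    (hc : ∀ i j A B, i ≠ j → ι i A * ι j B = ι j B * ι i A) (A B : M) (L : List M) (U : Finset J) :
    S ι (A :: B :: L) U = S ι (B :: A :: L) U := by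
  simp only [S, Finset.mul_sum]
  rw [Finset.sum_comm' (t' := U) (s' := fun l => U.erase l)]
  · refine Finset.sum_congr rfl fun l hl => Finset.sum_congr rfl fun j hj => ?_
    rw [← mul_assoc, ← mul_assoc, hc _ _ _ _ (Finset.ne_of_mem_erase hj), Finset.erase_right_comm]
  · intro x y
    simp only [Finset.mem_erase]
    tauto

theorem sum_map_S_cons (ι : J → M → R) (A : M) (U : Finset J) (LL : List (List M)) :
    ((LL.map (fun L' => A :: L')).map (fun L' => S ι L' U)).sum
      = ∑ l ∈ U, ι l A * (LL.map (fun L' => S ι L' (U.erase l))).sum := by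
  induction LL with
  | nil => simp
  | cons L LL ih =>
    simp only [List.map_cons, List.sum_cons, ih, mul_add, Finset.sum_add_distrib]
    rfl

theorem D_mul_S (ι : J → M → R) (hm : ∀ j A B, ι j (A * B) = ι j A * ι j B)
    (hc : ∀ i j A B, i ≠ j → ι i A * ι j B = ι j B * ι i A) (B : M) (L : List M) :
    ∀ U : Finset J, (∑ j ∈ U, ι j B) * S ι L U
      = S ι (B :: L) U + ((mods B L).map (fun L' => S ι L' U)).sum := by
  induction L with
  | nil => intro U; simp [S, mods]
  | cons A L ih =>
    intro U
    have key : ∀ l ∈ U, (∑ j ∈ U, ι j B) * (ι l A * S ι L (U.erase l))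
        = ι l (B * A) * S ι L (U.erase l)
          + (ι l A * S ι (B :: L) (U.erase l)
            + ι l A * ((mods B L).map (fun L' => S ι L' (U.erase l))).sum) := by
      intro l hl
      rw [← mul_add, ← ih, ← Finset.add_sum_erase _ _ hl, add_mul, hm, mul_assoc]
      congr 1
      rw [← mul_assoc, ← mul_assoc, Finset.sum_mul, Finset.mul_sum]
      congr 1
      exact Finset.sum_congr rfl fun j hj => hc _ _ _ _ (Finset.ne_of_mem_erase hj)
    have h1 : (∑ j ∈ U, ι j B) * S ι (A :: L) U
        = ∑ l ∈ U, (∑ j ∈ U, ι j B) * (ι l A * S ι L (U.erase l)) := by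
      rw [← Finset.mul_sum]; rfl
    rw [h1, Finset.sum_congr rfl key, Finset.sum_add_distrib, Finset.sum_add_distrib,
      ← sum_map_S_cons, S_swap ι hc B A]
    simp only [mods, List.map_cons, List.sum_cons]
    simp only [S]
    abel

theorem commute_S [Fintype J] (ι : J → M → R) (hm : ∀ j A B, ι j (A * B) = ι j A * ι j B)
    (hc : ∀ i j A B, i ≠ j → ι i A * ι j B = ι j B * ι i A) (f : R)
    (hf : ∀ A, Commute f (∑ j, ι j A)) (m : ℕ) :
    ∀ L : List M, L.length = m → Commute f (S ι L Finset.univ) := by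
  induction m with
  | zero =>
    intro L hL
    rw [List.length_eq_zero_iff] at hL
    subst hL
    exact Commute.one_right f
  | succ m ih =>
    intro L hL
    match L, hL with
    | B :: L, hL =>
      have hL' : L.length = m := by simpa using hL
      rw [eq_sub_of_add_eq (D_mul_S ι hm hc B L Finset.univ).symm]
      refine ((hf B).mul_right (ih L hL')).sub_right ?_
      apply Commute.list_sum_right
      intro b hb
      rw [List.mem_map] at hb
      obtain ⟨L', h, rfl⟩ := hb
      exact ih L' ((mods_length B L L' h).trans hL')

open Classical in
theorem S_ofFn [Fintype J] (ι : J → M → R) (m : ℕ) : ∀ (A : Fin m → M) (U : Finset J),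
    S ι (List.ofFn A) U = ∑ p : Fin m → J,
      if Function.Injective p ∧ ∀ i, p i ∈ U then (List.ofFn fun i => ι (p i) (A i)).prod else 0 := by
  induction m with
  | zero =>
    intro A U
    rw [Fintype.sum_unique, if_pos ⟨fun i => i.elim0, fun i => i.elim0⟩]
    simp [S]
  | succ m ih =>
    intro A U
    rw [List.ofFn_succ, ← (Fin.consEquiv (fun _ : Fin (m + 1) => J)).sum_comp,
      Fintype.sum_prod_type]
    simp only [S, ih]
    rw [← Finset.sum_subset (Finset.subset_univ U)]
    · refine Finset.sum_congr rfl fun j hj => ?_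
      rw [Finset.mul_sum]
      refine Finset.sum_congr rfl fun p _ => ?_
      have : (Function.Injective p ∧ ∀ i, p i ∈ U.erase j) ↔
          (Function.Injective ((Fin.consEquiv (fun _ : Fin (m + 1) => J)) (j, p)) ∧
            ∀ i, (Fin.consEquiv (fun _ : Fin (m + 1) => J)) (j, p) i ∈ U) := by
        have hcons : (Fin.consEquiv (fun _ : Fin (m + 1) => J)) (j, p)
            = (Fin.cons j p : Fin (m + 1) → J) := rfl
        rw [hcons, Fin.cons_injective_iff]
        simp only [Fin.forall_fin_succ, Fin.cons_zero,
          Fin.cons_succ, Finset.mem_erase, Set.mem_range, not_exists, hj, true_and]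
        constructor
        · rintro ⟨h1, h2⟩
          exact ⟨⟨fun i => (h2 i).1, h1⟩, fun i => (h2 i).2⟩
        · rintro ⟨⟨h1, h2⟩, h3⟩
          exact ⟨h2, fun i => ⟨h1 i, h3 i⟩⟩
      rw [if_congr this rfl rfl, mul_ite, mul_zero]
      simp [List.ofFn_succ]
    · intro j _ hj
      refine Finset.sum_eq_zero fun p _ => if_neg ?_
      rintro ⟨_, h⟩
      exact hj (by simpa using h 0)

theorem S_ofFn_perm {K : ℕ} (ι : Fin K → M → R) (A : Fin K → M) :
    S ι (List.ofFn A) Finset.univ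
      = ∑ σ : Equiv.Perm (Fin K), (List.ofFn fun i => ι (σ i) (A i)).prod := by
  classical
  rw [S_ofFn, ← Finset.sum_filter]
  symm
  refine Finset.sum_bij (fun σ _ => ⇑σ) ?_ ?_ ?_ ?_
  · intro σ _
    simp [σ.injective]
  · intro σ _ τ _ h
    exact DFunLike.coe_injective h
  · intro p hp
    simp only [Finset.mem_univ, implies_true, and_true, Finset.mem_filter, true_and] at hp
    exact ⟨Equiv.ofBijective p (Finite.injective_iff_bijective.mp hp), Finset.mem_univ _, rfl⟩
  · intro σ _
    rfl

end comb

theorem prod_mulSingle {J N : Type*} [DecidableEq J] [Monoid N] (m : ℕ) :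
    ∀ (p : Fin m → J) (A : Fin m → N), Function.Injective p →
      (∀ i, (List.ofFn fun i => (Pi.mulSingle (p i) (A i) : J → N)).prod (p i) = A i) ∧
      (∀ j, (∀ i, p i ≠ j) → (List.ofFn fun i => (Pi.mulSingle (p i) (A i) : J → N)).prod j = 1) := by
  induction m with
  | zero => intro p A _; exact ⟨fun i => i.elim0, fun j _ => by simp⟩
  | succ m ih =>
    intro p A hp
    obtain ⟨h1, h2⟩ := ih (fun i => p i.succ) (fun i => A i.succ)
      (hp.comp (Fin.succ_injective m))
    simp only [List.ofFn_succ, List.prod_cons, Pi.mul_apply]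
    refine ⟨fun i => ?_, fun j hj => ?_⟩
    · refine Fin.cases ?_ (fun i => ?_) i
      · rw [h2 _ fun i h => Fin.succ_ne_zero i (hp h)]
        simp
      · rw [h1, Pi.mulSingle_eq_of_ne, one_mul]
        exact fun h => Fin.succ_ne_zero i (hp h)
    · rw [h2 j fun i => hj _, mul_one, Pi.mulSingle_eq_of_ne (hj 0).symm]

/-- Double centralizer theorem for a finite group algebra. -/
theorem density {G W : Type} [Group G] [Finite G] [AddCommGroup W] [Module ℂ W]
    [Module.Finite ℂ W] (φ : MonoidAlgebra ℂ G →ₐ[ℂ] Module.End ℂ W) (f : Module.End ℂ W)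
    (hf : ∀ g : Module.End ℂ W, (∀ a, Commute (φ a) g) → Commute f g) :
    f ∈ Set.range φ := by
  letI : Module (MonoidAlgebra ℂ G) W := Module.compHom W φ.toRingHom
  have hs : ∀ (a : MonoidAlgebra ℂ G) (w : W), a • w = φ a w := fun a w => rfl
  have hlin : ∀ (g : Module.End (MonoidAlgebra ℂ G) W) (c : ℂ) (w : W), g (c • w) = c • g w := by
    intro g c w
    have h := g.map_smul (algebraMap ℂ (MonoidAlgebra ℂ G) c) w
    rw [hs, hs, AlgHom.commutes] at h
    simpa [Module.algebraMap_end_apply] using h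
  have hcomm : ∀ (g : Module.End (MonoidAlgebra ℂ G) W) (w : W), f (g w) = g (f w) := by
    intro g w
    let g' : Module.End ℂ W := { toFun := g, map_add' := g.map_add, map_smul' := hlin g }
    have := hf g' fun a => LinearMap.ext fun w => (g.map_smul a w).symm
    exact LinearMap.congr_fun this w
  let F : Module.End (Module.End (MonoidAlgebra ℂ G) W) W :=
    { toFun := f, map_add' := f.map_add, map_smul' := fun g w => hcomm g w }
  obtain ⟨s, hs'⟩ := Module.Finite.fg_top (R := ℂ) (M := W)
  obtain ⟨r, hr⟩ := jacobson_density F s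
  refine ⟨r, ?_⟩
  refine LinearMap.ext_on hs' fun w hw => ?_
  exact (hr w hw).symm

/-- `A` placed at position `j`. -/
noncomputable def pos (n K : ℕ) (j : Fin K) (A : Matrix (Fin n) (Fin n) ℂ) :
    Module.End ℂ (SWTensor n K) :=
  PiTensorProduct.mapMonoidHom (R := ℂ) (s := fun _ : Fin K => (Fin n → ℂ))
    (Pi.mulSingle (M := fun _ : Fin K => Module.End ℂ (Fin n → ℂ)) j A.mulVecLin)

theorem SWD_eq (n K : ℕ) (A : Matrix (Fin n) (Fin n) ℂ) : SWD n K A = ∑ j, pos n K j A := rfl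

theorem pos_mul (n K : ℕ) (j : Fin K) (A B : Matrix (Fin n) (Fin n) ℂ) :
    pos n K j (A * B) = pos n K j A * pos n K j B := by
  unfold pos
  erw [← map_mul, ← Pi.mulSingle_mul, Matrix.mulVecLin_mul]
  rfl

theorem pos_comm (n K : ℕ) (i j : Fin K) (A B : Matrix (Fin n) (Fin n) ℂ) (h : i ≠ j) :
    pos n K i A * pos n K j B = pos n K j B * pos n K i A := by
  unfold pos
  have := Pi.mulSingle_commute (f := fun _ : Fin K => Module.End ℂ (Fin n → ℂ)) h
    A.mulVecLin B.mulVecLin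
  exact (this.map (PiTensorProduct.mapMonoidHom (R := ℂ) (s := fun _ : Fin K => (Fin n → ℂ))))

theorem prod_pos (n K : ℕ) (σ : Equiv.Perm (Fin K)) (A : Fin K → Matrix (Fin n) (Fin n) ℂ) :
    (List.ofFn fun i => pos n K (σ i) (A i)).prod
      = PiTensorProduct.map (fun j => (A (σ⁻¹ j)).mulVecLin) := by
  have h : (List.ofFn fun i => pos n K (σ i) (A i))
      = (List.ofFn fun i => (Pi.mulSingle (σ i) (A i).mulVecLin :
          Fin K → Module.End ℂ (Fin n → ℂ))).map
        (PiTensorProduct.mapMonoidHom (R := ℂ) (s := fun _ : Fin K => (Fin n → ℂ))) := by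
    rw [List.map_ofFn]; rfl
  rw [h]
  refine (map_list_prod (PiTensorProduct.mapMonoidHom (R := ℂ)
    (s := fun _ : Fin K => (Fin n → ℂ))) _).symm.trans ?_
  refine congrArg (PiTensorProduct.map (R := ℂ)) (funext fun j => ?_)
  have := (prod_mulSingle K σ (fun i => (A i).mulVecLin) σ.injective).1 (σ⁻¹ j)
  simpa using this

theorem span_map (n K : ℕ) (g : Module.End ℂ (SWTensor n K)) :
    g ∈ Submodule.span ℂ (Set.range fun A : Fin K → Matrix (Fin n) (Fin n) ℂ =>
      (PiTensorProduct.map (fun j => (A j).mulVecLin) : Module.End ℂ (SWTensor n K))) := by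
  classical
  let b := Basis.piTensorProduct (fun _ : Fin K => Pi.basisFun ℂ (Fin n))
  have hg : g = ∑ q : Fin K → Fin n, ∑ p : Fin K → Fin n, b.repr (g (b q)) p •
      (PiTensorProduct.map (fun j => (Matrix.single (p j) (q j) (1 : ℂ)).mulVecLin) :
        Module.End ℂ (SWTensor n K)) := by
    refine b.ext fun q' => ?_
    have h : ∀ p q : Fin K → Fin n,
        (PiTensorProduct.map (fun j => (Matrix.single (p j) (q j) (1 : ℂ)).mulVecLin) :
          Module.End ℂ (SWTensor n K)) (b q') = if q = q' then b p else 0 := by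
      intro p q
      simp only [b, Basis.piTensorProduct_apply, PiTensorProduct.map_tprod]
      split_ifs with hq
      · subst hq
        congr 1
        funext j
        ext i
        simp [Matrix.single_apply, Pi.single_apply, eq_comm]
      · obtain ⟨j, hj⟩ := Function.ne_iff.mp hq
        refine (PiTensorProduct.tprod ℂ).map_coord_zero j ?_
        ext i
        simp [Matrix.single_apply, hj]
    simp only [LinearMap.sum_apply, LinearMap.smul_apply, h]
    rw [Finset.sum_eq_single q']
    · simp [b.sum_repr]
    · intro q _ hq; simp [hq]
    · simp
  rw [hg]
  exact Submodule.sum_mem _ fun q _ => Submodule.sum_mem _ fun p _ =>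
    Submodule.smul_mem _ _ (Submodule.subset_span ⟨fun j => Matrix.single (p j) (q j) 1, rfl⟩)

section main

variable {n K : ℕ}
    (φ : MonoidAlgebra ℂ (Equiv.Perm (Fin K)) →ₐ[ℂ] Module.End ℂ (SWTensor n K))
    (hφ : ∀ (σ : Equiv.Perm (Fin K)) (v : Fin K → (Fin n → ℂ)),
      φ (MonoidAlgebra.single σ 1) (PiTensorProduct.tprod ℂ v)
        = PiTensorProduct.tprod ℂ (fun j => v (σ⁻¹ j)))

include hφ

theorem perm_map (σ : Equiv.Perm (Fin K)) (A : Fin K → Module.End ℂ (Fin n → ℂ)) :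
    φ (MonoidAlgebra.single σ 1) * PiTensorProduct.map A
      = PiTensorProduct.map (fun j => A (σ⁻¹ j)) * φ (MonoidAlgebra.single σ 1) := by
  refine PiTensorProduct.ext (MultilinearMap.ext fun v => ?_)
  simp [hφ]

theorem perm_SWD (σ : Equiv.Perm (Fin K)) (A : Matrix (Fin n) (Fin n) ℂ) :
    φ (MonoidAlgebra.single σ 1) * SWD n K A = SWD n K A * φ (MonoidAlgebra.single σ 1) := by
  simp only [SWD, Finset.mul_sum, Finset.sum_mul]
  simp only [perm_map φ hφ]
  refine Fintype.sum_equiv σ _ _ fun j => ?_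
  congr 2
  funext l
  by_cases h : l = σ j
  · subst h; simp
  · have h' : σ⁻¹ l ≠ j := fun h' => h (by simp [← h'])
    rw [Function.update_of_ne h, Function.update_of_ne h']

theorem perm_conj (σ : Equiv.Perm (Fin K)) (A : Fin K → Module.End ℂ (Fin n → ℂ)) :
    φ (MonoidAlgebra.single σ 1) * PiTensorProduct.map A * φ (MonoidAlgebra.single σ⁻¹ 1)
      = PiTensorProduct.map (fun j => A (σ⁻¹ j)) := by
  rw [perm_map φ hφ, mul_assoc, ← map_mul, MonoidAlgebra.single_mul_single, mul_inv_cancel, mul_one,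
    ← MonoidAlgebra.one_def, map_one, mul_one]

theorem commute_of_commute (f : Module.End ℂ (SWTensor n K))
    (hf : ∀ A : Matrix (Fin n) (Fin n) ℂ, f * SWD n K A = SWD n K A * f)
    (g : Module.End ℂ (SWTensor n K)) (hg : ∀ a, Commute (φ a) g) : Commute f g := by
  have h1 : ∀ g : Module.End ℂ (SWTensor n K), Commute f (∑ σ : Equiv.Perm (Fin K),
      φ (MonoidAlgebra.single σ 1) * g * φ (MonoidAlgebra.single σ⁻¹ 1)) := by
    intro g
    induction span_map n K g using Submodule.span_induction with
    | mem g hg =>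
      obtain ⟨A, rfl⟩ := hg
      simp only [perm_conj φ hφ]
      have := commute_S (pos n K) (pos_mul n K) (pos_comm n K) f
        (fun A => by rw [← SWD_eq]; exact hf A) K (List.ofFn A) (by simp)
      rw [S_ofFn_perm] at this
      simpa only [prod_pos] using this
    | zero => simp
    | add x y _ _ hx hy =>
      simp only [mul_add, add_mul, Finset.sum_add_distrib]
      exact hx.add_right hy
    | smul c x _ hx =>
      simp only [mul_smul_comm, smul_mul_assoc, ← Finset.smul_sum]
      exact hx.smul_right c
  have h2 := h1 g
  have h3 : ∀ σ : Equiv.Perm (Fin K),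
      φ (MonoidAlgebra.single σ 1) * g * φ (MonoidAlgebra.single σ⁻¹ 1) = g := by
    intro σ
    rw [(hg _).eq, mul_assoc, ← map_mul, MonoidAlgebra.single_mul_single, mul_inv_cancel, mul_one,
      ← MonoidAlgebra.one_def, map_one, mul_one]
  simp only [h3, Finset.sum_const, ← Nat.cast_smul_eq_nsmul ℂ] at h2
  have h4 := h2.smul_right ((Finset.card (Finset.univ : Finset (Equiv.Perm (Fin K))) : ℂ)⁻¹)
  rwa [inv_smul_smul₀] at h4
  simp [Fintype.card_perm, Nat.factorial_ne_zero]

end main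

end SWAux

/-- Schur–Weyl duality: the image of `φ_k : ℂ[Σ_k] → End_ℂ(V^{⊗k})` is exactly the
centralizer algebra `End_{gl_n}(V^{⊗k})`; that is, `φ_k` defines a surjective algebra
homomorphism onto the centralizer. -/
theorem schur_weyl_surjective (n K : ℕ) (hn : 0 < n) (hK : 0 < K)
    (φ : MonoidAlgebra ℂ (Equiv.Perm (Fin K)) →ₐ[ℂ] Module.End ℂ (SWTensor n K))
    (hφ : ∀ (σ : Equiv.Perm (Fin K)) (v : Fin K → (Fin n → ℂ)),
      φ (MonoidAlgebra.single σ 1) (PiTensorProduct.tprod ℂ v)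
        = PiTensorProduct.tprod ℂ (fun j => v (σ⁻¹ j))) :
    Set.range ⇑φ = {f : Module.End ℂ (SWTensor n K) |
      ∀ A : Matrix (Fin n) (Fin n) ℂ, f * SWD n K A = SWD n K A * f} := by
  ext f
  constructor
  · rintro ⟨a, rfl⟩ A
    induction a using MonoidAlgebra.induction_linear with
    | zero => simp
    | add x y hx hy => rw [map_add, add_mul, mul_add, hx, hy]
    | single σ c =>
      have h : MonoidAlgebra.single σ c = c • MonoidAlgebra.single σ (1 : ℂ) := by simp
      rw [h, map_smul, smul_mul_assoc, mul_smul_comm, SWAux.perm_SWD φ hφ]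
  · intro hf
    haveI : Module.Finite ℂ (SWTensor n K) :=
      Module.Finite.of_basis (Basis.piTensorProduct (fun _ : Fin K => Pi.basisFun ℂ (Fin n)))
    exact SWAux.density φ f (SWAux.commute_of_commute φ hφ f hf)
end
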